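/- Let D and D′ be domains in ℝ^n, n ≥ 3, and let φ:(0,∞)→(0,∞) be a nondecreasing function satisfying ∫_{t_*}^∞ (t/φ(t))^{1/(n−2)} dt < ∞ for some t_* ∈ (0,∞). Then every homeomorphism f:D→D′ of finite distortion of class W^{1,φ}_loc is a lower K_p(x,f)-homeomorphism with respect to p-modulus at every point, for every p > n−1. -/

import Mathlib

open MeasureTheory Metric Set Filter
open scoped ENNReal NNReal Topology RealInnerProductSpace Classical

noncomputable section

abbrev Eucl (n : ℕ) : Type := EuclideanSpace ℝ (Fin n)

/-- A `k`-dimensional surface in `ℝⁿ`: a continuous map defined on an open subset of the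
one-point compactification of `ℝᵏ`. -/
structure Surface (n k : ℕ) where
  dom : Set (OnePoint (Eucl k))
  isOpen_dom : IsOpen dom
  toFun : OnePoint (Eucl k) → Eucl n
  continuousOn : ContinuousOn toFun dom

namespace Surface

variable {n k : ℕ}

/-- The multiplicity function `N(S,y)` of a surface. -/
def mult (S : Surface n k) (y : Eucl n) : ℝ≥0∞ :=
  ((S.dom ∩ S.toFun ⁻¹' {y}).encard : ℕ∞)

/-- The integral `∫_S ρ dA = ∫ ρ(y) N(S,y) dH^k(y)` of `ρ` over the surface `S`. -/
def sint (S : Surface n k) (ρ : Eucl n → ℝ≥0∞) : ℝ≥0∞ :=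
  ∫⁻ y, ρ y * S.mult y ∂(μH[(k : ℝ)] : Measure (Eucl n))

end Surface

/-- Admissible functions for a family of `k`-surfaces. -/
def surfAdm {n : ℕ} (k : ℕ) (Γ : Set (Surface n k)) : Set (Eucl n → ℝ≥0∞) :=
  {ρ | Measurable ρ ∧ ∀ S ∈ Γ, 1 ≤ S.sint fun y => ρ y ^ k}

/-- The `p`-modulus of a family of `k`-surfaces. -/
def surfModulus {n : ℕ} (p : ℝ) (k : ℕ) (Γ : Set (Surface n k)) : ℝ≥0∞ :=
  ⨅ ρ ∈ surfAdm k Γ, ∫⁻ x, ρ x ^ p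

/-- Extensively `p`-admissible functions: admissibility may fail on a subfamily of
`p`-modulus zero. -/
def extAdm {n : ℕ} (p : ℝ) (k : ℕ) (Γ : Set (Surface n k)) : Set (Eucl n → ℝ≥0∞) :=
  {ρ | Measurable ρ ∧ surfModulus p k {S ∈ Γ | ¬ 1 ≤ S.sint fun y => ρ y ^ k} = 0}

/-- The family of the (injectively parametrized, nonempty) surfaces `S(x₀,r) ∩ D`,
`r ∈ I`. -/
def sphereFam {n : ℕ} (D : Set (Eucl n)) (x₀ : Eucl n) (I : Set ℝ) :
    Set (Surface n (n - 1)) :=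
  {S | ∃ r ∈ I, S.dom.Nonempty ∧ Set.InjOn S.toFun S.dom ∧
      S.toFun '' S.dom = sphere x₀ r ∩ D}

/-- The image of a family of surfaces under a map `f`. -/
def imageFam {n k : ℕ} (f : Eucl n → Eucl n) (Γ : Set (Surface n k)) :
    Set (Surface n k) :=
  {S' | ∃ S ∈ Γ, S'.dom = S.dom ∧ Set.EqOn S'.toFun (f ∘ S.toFun) S.dom}

/-- The spherical ring `R(x₀,a,b)`. -/
def ringA {n : ℕ} (x₀ : Eucl n) (a b : ℝ) : Set (Eucl n) :=
  {x | a < dist x x₀ ∧ dist x x₀ < b}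

/-- `‖Q‖_α(r) = (∫_{D ∩ S(x₀,r)} Q^α dA)^{1/α}`. -/
def sphNorm {n : ℕ} (D : Set (Eucl n)) (x₀ : Eucl n) (Q : Eucl n → ℝ≥0∞)
    (α : ℝ) (r : ℝ) : ℝ≥0∞ :=
  (∫⁻ x in D ∩ sphere x₀ r, Q x ^ α ∂(μH[((n : ℝ) - 1)] : Measure (Eucl n))) ^ (1 / α)

/-- `f` is a lower `Q`-homeomorphism w.r.t. the `p`-modulus at `x₀`. -/
def IsLowerQHomeoAt {n : ℕ} (D : Set (Eucl n)) (f : Eucl n → Eucl n)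
    (Q : Eucl n → ℝ≥0∞) (p : ℝ) (x₀ : Eucl n) (d₀ : ℝ≥0∞) : Prop :=
  ∀ ε ε₀ : ℝ, 0 < ε → ε < ε₀ → ENNReal.ofReal ε₀ < d₀ →
    (⨅ ρ ∈ extAdm p (n - 1) (sphereFam D x₀ (Ioo ε ε₀)),
        ∫⁻ x in ringA x₀ ε ε₀, ρ x ^ p / Q x) ≤
      surfModulus p (n - 1) (imageFam f (sphereFam D x₀ (Ioo ε ε₀)))

/-- `f` is a homeomorphism of `D` onto `D'`. -/
structure IsHomeoOn {n : ℕ} (f : Eucl n → Eucl n) (D D' : Set (Eucl n)) : Prop where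
  continuousOn : ContinuousOn f D
  injOn : Set.InjOn f D
  image_eq : f '' D = D'
  isOpenMapOn : ∀ U : Set (Eucl n), U ⊆ D → IsOpen U → IsOpen (f '' U)

/-- `Df` is the weak (Sobolev) derivative of `f` on `D`, and `f ∈ W^{1,1}_loc(D)`. -/
def IsWeakDerivOn {n m : ℕ} (D : Set (Eucl n)) (f : Eucl n → Eucl m)
    (Df : Eucl n → Eucl n →L[ℝ] Eucl m) : Prop :=
  LocallyIntegrableOn f D volume ∧ LocallyIntegrableOn Df D volume ∧
  ∀ ψ : Eucl n → ℝ, ContDiff ℝ (⊤ : ℕ∞) ψ → HasCompactSupport ψ → tsupport ψ ⊆ D →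
    ∀ v : Eucl n, ∫ x, ψ x • Df x v = - ∫ x, fderiv ℝ ψ x v • f x

/-- The Frobenius norm `|∇f| = (Σ_{i,j} (∂f_i/∂x_j)²)^{1/2}` of a linear map. -/
def frobNorm {n m : ℕ} (A : Eucl n →L[ℝ] Eucl m) : ℝ :=
  Real.sqrt (∑ i : Fin m, ∑ j : Fin n, (A (EuclideanSpace.single j 1) i) ^ 2)

/-- The Orlicz–Sobolev class `W^{1,φ}_loc(D)` (with explicit weak derivative `Df`). -/
def MemOrliczSobolevOn {n m : ℕ} (φ : ℝ → ℝ) (D : Set (Eucl n))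
    (f : Eucl n → Eucl m) (Df : Eucl n → Eucl n →L[ℝ] Eucl m) : Prop :=
  IsWeakDerivOn D f Df ∧
  ∀ K : Set (Eucl n), K ⊆ D → IsCompact K →
    (∫⁻ x in K, ENNReal.ofReal (φ (frobNorm (Df x)))) < ⊤

/-- `φ` is nondecreasing and positive on `(0,∞)`. -/
def NondecPos (φ : ℝ → ℝ) : Prop :=
  (∀ s t : ℝ, 0 < s → s ≤ t → φ s ≤ φ t) ∧ ∀ t : ℝ, 0 < t → 0 < φ t

/-- The Calderón-type condition `∫_{t₀}^∞ (t/φ(t))^{1/(n-2)} dt < ∞`. -/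
def CalderonCond (n : ℕ) (φ : ℝ → ℝ) : Prop :=
  ∃ t₀ : ℝ, 0 < t₀ ∧
    IntegrableOn (fun t => (t / φ t) ^ (1 / ((n : ℝ) - 2))) (Ioi t₀) volume

/-- `f` (with a.e. derivative `Df`) has finite distortion on `D`. -/
def HasFiniteDistortionOn {n : ℕ} (D : Set (Eucl n))
    (Df : Eucl n → Eucl n →L[ℝ] Eucl n) : Prop :=
  ∃ K : Eucl n → ℝ, AEMeasurable K (volume.restrict D) ∧
    ∀ᵐ x ∂volume.restrict D, 1 ≤ K x ∧ ‖Df x‖ ^ n ≤ K x * (Df x).det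

/-- The distortion `K_p(x,f)` for a map with derivative `Df`. -/
def distortionKp {n : ℕ} (p : ℝ) (Df : Eucl n → Eucl n →L[ℝ] Eucl n)
    (x : Eucl n) : ℝ≥0∞ :=
  if (Df x).det ≠ 0 then ENNReal.ofReal (‖Df x‖ ^ p / (Df x).det)
  else if Df x = 0 then 1 else ⊤

/-- The multiplicity function of a curve `γ : [0,1] → ℝⁿ`. -/
def curveMult {n : ℕ} (γ : ℝ → Eucl n) (y : Eucl n) : ℝ≥0∞ :=
  (({t ∈ Icc (0:ℝ) 1 | γ t = y}).encard : ℕ∞)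

/-- The line integral `∫_γ ρ ds = ∫ ρ(y) N(γ,y) dH¹(y)`. -/
def curveInt {n : ℕ} (γ : ℝ → Eucl n) (ρ : Eucl n → ℝ≥0∞) : ℝ≥0∞ :=
  ∫⁻ y, ρ y * curveMult γ y ∂(μH[(1 : ℝ)] : Measure (Eucl n))

/-- The family of curves joining `A` and `B` in `G`. -/
def curveJoin {n : ℕ} (A B G : Set (Eucl n)) : Set (ℝ → Eucl n) :=
  {γ | ContinuousOn γ (Icc 0 1) ∧ γ 0 ∈ A ∧ γ 1 ∈ B ∧ Set.MapsTo γ (Icc 0 1) G}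

/-- The `q`-modulus of a family of curves. -/
def curveModulus {n : ℕ} (q : ℝ) (Γ : Set (ℝ → Eucl n)) : ℝ≥0∞ :=
  ⨅ ρ ∈ {ρ : Eucl n → ℝ≥0∞ | Measurable ρ ∧ ∀ γ ∈ Γ, 1 ≤ curveInt γ ρ},
    ∫⁻ x, ρ x ^ q

/-- The `q`-capacity of the condenser `(A,C)`, via the modulus of joining curves. -/
def condenserCap {n : ℕ} (q : ℝ) (A C : Set (Eucl n)) : ℝ≥0∞ :=
  curveModulus q (curveJoin (frontier A) (frontier C) (A \ C))

/-- `L(x₀,f) = limsup_{x→x₀} |f(x)-f(x₀)|/|x-x₀|`. -/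
def LAt {n : ℕ} (f : Eucl n → Eucl n) (x₀ : Eucl n) : ℝ≥0∞ :=
  limsup (fun x => edist (f x) (f x₀) / edist x x₀) (𝓝[≠] x₀)

/-- `k_p(x₀) = limsup_{ε→0} (⨍_{B(x₀,ε)} K_p(x,f)^{(n-1)/(p-n+1)} dm)^{(p-n+1)/(n-1)}`. -/
def kpAt {n : ℕ} (p : ℝ) (Df : Eucl n → Eucl n →L[ℝ] Eucl n) (x₀ : Eucl n) : ℝ≥0∞ :=
  limsup (fun ε : ℝ =>
      ((∫⁻ x in ball x₀ ε, distortionKp p Df x ^ (((n:ℝ)-1)/(p-(n:ℝ)+1))) /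
        volume (ball x₀ ε)) ^ ((p-(n:ℝ)+1)/((n:ℝ)-1)))
    (𝓝[>] (0:ℝ))

/-- `f` is absolutely continuous on `S` w.r.t. `d`-dimensional Hausdorff measure. -/
def ACOnSet {n m : ℕ} (f : Eucl n → Eucl m) (S : Set (Eucl n)) (d : ℝ) : Prop :=
  ∀ ε : ℝ, 0 < ε → ∃ δ : ℝ, 0 < δ ∧ ∀ A : Set (Eucl n), A ⊆ S →
    (μH[d] : Measure (Eucl n)) A < ENNReal.ofReal δ →
      (μH[d] : Measure (Eucl m)) (f '' A) < ENNReal.ofReal ε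

/-- `f` is locally absolutely continuous on `S` w.r.t. `H^d`. -/
def LocACOnSet {n m : ℕ} (f : Eucl n → Eucl m) (S : Set (Eucl n)) (d : ℝ) : Prop :=
  ∀ x ∈ S, ∃ V ∈ 𝓝 x, ACOnSet f (S ∩ V) d

/-- The Luzin (N)-property of `f` on `S` w.r.t. `d`-dimensional Hausdorff measure. -/
def LusinNOn {n m : ℕ} (f : Eucl n → Eucl m) (S : Set (Eucl n)) (d : ℝ) : Prop :=
  ∀ A : Set (Eucl n), A ⊆ S → (μH[d] : Measure (Eucl n)) A = 0 →
    (μH[d] : Measure (Eucl m)) (f '' A) = 0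

end

set_option linter.unusedSectionVars false

section poinc
variable {E F : Type*} [NormedAddCommGroup E] [NormedSpace ℝ E] [FiniteDimensional ℝ E]
  [MeasurableSpace E] [BorelSpace E] (μ : Measure E) [μ.IsAddHaarMeasure]
  [NormedAddCommGroup F] [NormedSpace ℝ F] [CompleteSpace F]

lemma seg_bound (g : E → F) (hg : ContDiff ℝ 1 g) (x y : E) :
    edist (g x) (g y) ≤
      ∫⁻ t in Icc (0:ℝ) 1, ‖fderiv ℝ g ((1-t)•x + t•y)‖ₑ * edist x y := by
  have hd : ∀ t : ℝ, HasDerivAt (fun t : ℝ => g ((1-t)•x + t•y))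
      (fderiv ℝ g ((1-t)•x + t•y) (y - x)) t := by
    intro t
    have h1 : HasDerivAt (fun t : ℝ => (1-t)•x + t•y) (y - x) t := by
      have := ((hasDerivAt_id t).const_sub 1).smul_const x |>.add ((hasDerivAt_id t).smul_const y)
      convert! this using 1
      simp; abel
    exact ((hg.differentiable (by simp)) _).hasFDerivAt.comp_hasDerivAt t h1
  have hc : Continuous (fun t : ℝ => fderiv ℝ g ((1-t)•x + t•y) (y - x)) := by
    have := hg.continuous_fderiv (by simp)
    fun_prop
  have h := intervalIntegral.integral_eq_sub_of_hasDerivAt (a := 0) (b := 1)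
    (fun t _ => hd t) (hc.intervalIntegrable _ _)
  simp only [sub_zero, one_smul, zero_smul, add_zero, sub_self, zero_add] at h
  rw [edist_comm, edist_eq_enorm_sub, ← h, intervalIntegral.integral_of_le zero_le_one,
    ← integral_Icc_eq_integral_Ioc]
  refine (enorm_integral_le_lintegral_enorm _).trans (lintegral_mono fun t => ?_)
  rw [edist_comm, edist_eq_enorm_sub]
  exact ContinuousLinearMap.le_opENorm _ _

lemma shrink_bound (w : E → ℝ≥0∞) (hw : Measurable w) (B : Set E) (hB : Convex ℝ B)
    (hBm : MeasurableSet B) (y : E) (hy : y ∈ B) (t : ℝ) (ht0 : 0 ≤ t) (ht : t ≤ 1/2) :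
    ∫⁻ x in B, w ((1-t)•x + t•y) ∂μ ≤ 2 ^ (Module.finrank ℝ E) * ∫⁻ x in B, w x ∂μ := by
  have h1 : ∫⁻ x in B, w ((1-t)•x + t•y) ∂μ ≤ ∫⁻ x, B.indicator w ((1-t)•x + t•y) ∂μ := by
    rw [← lintegral_indicator hBm]
    refine lintegral_mono fun x => ?_
    by_cases hx : x ∈ B
    · have : (1-t)•x + t•y ∈ B := hB hx hy (by linarith) ht0 (by ring)
      simp [hx, this]
    · simp [hx]
  refine h1.trans ?_
  have hr : (1 - t) ≠ 0 := by linarith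
  have hm : Measurable (B.indicator w) := hw.indicator hBm
  have h2 : ∫⁻ x, B.indicator w ((1-t)•x + t•y) ∂μ =
      ∫⁻ z, B.indicator w (z + t•y) ∂(Measure.map ((1-t) • ·) μ) := by
    rw [lintegral_map]
    · exact hm.comp (measurable_add_const _)
    · exact measurable_const_smul _
  rw [h2, Measure.map_addHaar_smul μ hr, lintegral_smul_measure,
    lintegral_add_right_eq_self (B.indicator w), lintegral_indicator hBm, smul_eq_mul]
  gcongr
  rw [abs_of_nonneg (by positivity [show 0 ≤ 1 - t by linarith]), ← inv_pow,
    ENNReal.ofReal_pow (by simp; linarith)]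
  gcongr
  rw [show (2:ℝ≥0∞) = ENNReal.ofReal 2 by simp]
  apply ENNReal.ofReal_le_ofReal
  rw [inv_le_comm₀ (by linarith) (by norm_num)]
  linarith

lemma poincare (g : E → F) (hg : ContDiff ℝ 1 g) (B : Set E) (hB : Convex ℝ B)
    (hBm : MeasurableSet B) (d : ℝ≥0∞) (hd : ∀ x ∈ B, ∀ y ∈ B, edist x y ≤ d) :
    ∫⁻ x in B, ∫⁻ y in B, edist (g x) (g y) ∂μ ∂μ ≤
      2 ^ (Module.finrank ℝ E) * d * μ B * ∫⁻ x in B, ‖fderiv ℝ g x‖ₑ ∂μ := by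
  set w : E → ℝ≥0∞ := fun x => ‖fderiv ℝ g x‖ₑ with hwdef
  have hwc : Continuous w := (hg.continuous_fderiv (by simp)).enorm
  have hw : Measurable w := hwc.measurable
  set N := Module.finrank ℝ E
  set I := ∫⁻ x in B, w x ∂μ
  calc ∫⁻ x in B, ∫⁻ y in B, edist (g x) (g y) ∂μ ∂μ
      ≤ ∫⁻ x in B, ∫⁻ y in B, (∫⁻ t in Icc (0:ℝ) 1, w ((1-t)•x + t•y) * d) ∂μ ∂μ := by
        refine setLIntegral_mono' hBm fun x hx => setLIntegral_mono' hBm fun y hy => ?_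
        refine (seg_bound g hg x y).trans ?_
        gcongr
        exact hd x hx y hy
    _ = ∫⁻ x in B, (∫⁻ t in Icc (0:ℝ) 1, (∫⁻ y in B, w ((1-t)•x + t•y) * d ∂μ)) ∂μ := by
        refine lintegral_congr fun x => ?_
        rw [lintegral_lintegral_swap]
        apply Measurable.aemeasurable
        apply Measurable.mul_const
        apply Continuous.measurable
        fun_prop
    _ = ∫⁻ t in Icc (0:ℝ) 1, ∫⁻ x in B, ∫⁻ y in B, w ((1-t)•x + t•y) * d ∂μ ∂μ := by
        rw [lintegral_lintegral_swap]
        apply Measurable.aemeasurable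
        apply Measurable.lintegral_prod_right'
          (f := fun z : (E × ℝ) × E => w ((1-z.1.2)•z.1.1 + z.1.2•z.2) * d)
        apply Measurable.mul_const
        apply Continuous.measurable
        fun_prop
    _ ≤ ∫⁻ t in Icc (0:ℝ) 1, 2 ^ N * d * μ B * I := by
        refine setLIntegral_mono' measurableSet_Icc fun t ht => ?_
        have key : ∀ s : ℝ, 0 ≤ s → s ≤ 1/2 →
            ∫⁻ y in B, ∫⁻ x in B, w ((1-s)•x + s•y) * d ∂μ ∂μ ≤ 2 ^ N * d * μ B * I := by
          intro s hs0 hs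
          calc ∫⁻ y in B, ∫⁻ x in B, w ((1-s)•x + s•y) * d ∂μ ∂μ
              ≤ ∫⁻ y in B, 2 ^ N * I * d ∂μ := by
                refine setLIntegral_mono' hBm fun y hy => ?_
                rw [lintegral_mul_const]
                · gcongr
                  exact shrink_bound μ w hw B hB hBm y hy s hs0 hs
                · apply Continuous.measurable; fun_prop
            _ = _ := by rw [setLIntegral_const]; ring
        rcases le_total t (1/2) with h | h
        · rw [lintegral_lintegral_swap]
          · exact key t ht.1 h
          · apply Measurable.aemeasurable
            apply Measurable.mul_const
            apply Continuous.measurable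
            fun_prop
        · have := key (1-t) (by linarith [ht.2]) (by linarith)
          refine le_trans (le_of_eq ?_) this
          refine lintegral_congr fun x => lintegral_congr fun y => ?_
          rw [sub_sub_cancel, add_comm]
    _ = _ := by simp
end poinc

section means
variable {E F : Type*} [NormedAddCommGroup E] [NormedSpace ℝ E] [FiniteDimensional ℝ E]
  [MeasurableSpace E] [BorelSpace E] (μ : Measure E) [μ.IsAddHaarMeasure]
  [NormedAddCommGroup F] [NormedSpace ℝ F] [CompleteSpace F]

lemma avg_edist_int (g : E → F) (B : Set E) (hg : IntegrableOn g B μ) (h0 : μ B ≠ 0)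
    (h1 : μ B ≠ ⊤) (a : F) :
    edist (⨍ x in B, g x ∂μ) a * μ B ≤ ∫⁻ x in B, edist (g x) a ∂μ := by
  have e : (⨍ x in B, g x ∂μ) - a = (μ B).toReal⁻¹ • ∫ x in B, (g x - a) ∂μ := by
    rw [integral_sub hg (integrableOn_const h1), setAverage_eq, smul_sub]
    simp only [integral_const, measureReal_def]
    simp [smul_smul, inv_mul_cancel₀ (ENNReal.toReal_ne_zero.2 ⟨h0, h1⟩)]
  rw [edist_eq_enorm_sub, e, enorm_smul, mul_comm, ← mul_assoc]
  have : μ B * ‖(μ B).toReal⁻¹‖ₑ = 1 := by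
    rw [enorm_inv (ENNReal.toReal_ne_zero.2 ⟨h0, h1⟩), Real.enorm_of_nonneg ENNReal.toReal_nonneg,
      ENNReal.ofReal_toReal h1, ENNReal.mul_inv_cancel h0 h1]
  rw [this, one_mul]
  simp_rw [edist_eq_enorm_sub]
  exact enorm_integral_le_lintegral_enorm _

lemma avg_edist_le (g h : E → F) (B : Set E) (hBm : MeasurableSet B) (hg : IntegrableOn g B μ)
    (hh : IntegrableOn h B μ) (h0 : μ B ≠ 0)
    (h1 : μ B ≠ ⊤) (η : ℝ≥0∞) (H : ∀ x ∈ B, edist (g x) (h x) ≤ η) :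
    edist (⨍ x in B, g x ∂μ) (⨍ x in B, h x ∂μ) ≤ η := by
  have e : (⨍ x in B, g x ∂μ) - (⨍ x in B, h x ∂μ) = ⨍ x in B, (g x - h x) ∂μ := by
    simp only [setAverage_eq]
    rw [integral_sub hg hh, smul_sub]
  have := avg_edist_int μ (fun x => g x - h x) B (hg.sub hh) h0 h1 0
  rw [edist_eq_enorm_sub, e]
  simp only [edist_zero_right] at this
  have h2 : ∫⁻ x in B, ‖g x - h x‖ₑ ∂μ ≤ η * μ B := by
    rw [← setLIntegral_const]
    refine setLIntegral_mono' hBm fun x hx => ?_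
    rw [← edist_eq_enorm_sub]; exact H x hx
  exact (ENNReal.mul_le_mul_iff_left h0 h1).1 (this.trans h2)

/-- Mean comparison property. -/
def MeanProp (h : E → F) (w : E → ℝ≥0∞) (C : ℝ≥0∞) (S : Set E) : Prop :=
  ∀ B' B : Set E, IsCompact B → Convex ℝ B → IsCompact B' → B' ⊆ B → B ⊆ S → μ B' ≠ 0 →
    ∀ d : ℝ≥0, (∀ x ∈ B, ∀ y ∈ B, edist x y ≤ d) →
      edist (⨍ x in B', h x ∂μ) (⨍ x in B, h x ∂μ) * μ B' ≤ C * d * ∫⁻ x in B, w x ∂μ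

lemma MeanProp.of_contDiff (g : E → F) (hg : ContDiff ℝ 1 g) :
    MeanProp μ g (fun x => ‖fderiv ℝ g x‖ₑ) (2 ^ (Module.finrank ℝ E)) univ := by
  intro B' B hBc hB hB'c hsub _ h0 d hd
  have hB0 : μ B ≠ 0 := fun h => h0 (measure_mono_null hsub h)
  have hB1 : μ B ≠ ⊤ := hBc.measure_lt_top.ne
  have h1 : μ B' ≠ ⊤ := hB'c.measure_lt_top.ne
  have hi : IntegrableOn g B μ := hg.continuous.continuousOn.integrableOn_compact hBc
  have hi' : IntegrableOn g B' μ := hg.continuous.continuousOn.integrableOn_compact hB'c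
  have A := avg_edist_int μ g B' hi' h0 h1 (⨍ x in B, g x ∂μ)
  have A2 : (∫⁻ x in B', edist (g x) (⨍ x in B, g x ∂μ) ∂μ) * μ B ≤
      ∫⁻ x in B, ∫⁻ y in B, edist (g x) (g y) ∂μ ∂μ := by
    rw [← lintegral_mul_const' _ _ hB1]
    refine (lintegral_mono_set hsub).trans (lintegral_mono fun x => ?_)
    rw [edist_comm]
    refine (avg_edist_int μ g B hi hB0 hB1 (g x)).trans (le_of_eq ?_)
    simp_rw [edist_comm]
  have A3 := A2.trans (poincare μ g hg B hB hBc.measurableSet d hd)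
  rw [mul_right_comm] at A3
  exact A.trans ((ENNReal.mul_le_mul_iff_left hB0 hB1).1 A3)

lemma MeanProp.limit (h : E → F) (hk : ℕ → E → F) (w : E → ℝ≥0∞) (wk ek : ℕ → E → ℝ≥0∞)
    (C c : ℝ≥0∞) (hC : C ≠ ⊤) (hc : c ≠ ⊤) (S : Set E) (hS : MeasurableSet S)
    (hh : ContinuousOn h S)
    (hkc : ∀ k, ContinuousOn (hk k) S) (hu : TendstoUniformlyOn hk h atTop S)
    (hek : ∀ k, Measurable (ek k))
    (hw : ∀ k, ∀ x ∈ S, wk k x ≤ c * w x + ek k x)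
    (he : Tendsto (fun k => ∫⁻ x in S, ek k x ∂μ) atTop (𝓝 0))
    (hM : ∀ k, MeanProp μ (hk k) (wk k) C S) : MeanProp μ h w (C * c) S := by
  intro B' B hBc hB hB'c hsub hBS h0 d hd
  have hB0 : μ B ≠ 0 := fun h => h0 (measure_mono_null hsub h)
  have hB1 : μ B ≠ ⊤ := hBc.measure_lt_top.ne
  have h1 : μ B' ≠ ⊤ := hB'c.measure_lt_top.ne
  have key : ∀ A : Set E, IsCompact A → A ⊆ S → μ A ≠ 0 →
      Tendsto (fun k => ⨍ x in A, hk k x ∂μ) atTop (𝓝 (⨍ x in A, h x ∂μ)) := by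
    intro A hA hAS hA0
    rw [EMetric.tendsto_nhds]
    intro ε hε
    obtain ⟨η, hη0, hη⟩ := exists_between hε
    filter_upwards [EMetric.tendstoUniformlyOn_iff.1 hu η hη0] with k hkk
    refine lt_of_le_of_lt (avg_edist_le μ _ _ A hA.measurableSet
      (((hkc k).mono hAS).integrableOn_compact hA) ((hh.mono hAS).integrableOn_compact hA)
      hA0 hA.measure_lt_top.ne η ?_) hη
    intro x hx
    rw [edist_comm]
    exact (hkk x (hAS hx)).le
  have T1 : Tendsto (fun k => edist (⨍ x in B', hk k x ∂μ) (⨍ x in B, hk k x ∂μ) * μ B') atTop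
      (𝓝 (edist (⨍ x in B', h x ∂μ) (⨍ x in B, h x ∂μ) * μ B')) :=
    ENNReal.Tendsto.mul_const ((key B' hB'c (hsub.trans hBS) h0).edist (key B hBc hBS hB0))
      (Or.inr h1)
  have T2 : Tendsto (fun k => C * d * (c * (∫⁻ x in B, w x ∂μ) + ∫⁻ x in S, ek k x ∂μ)) atTop
      (𝓝 (C * d * (c * (∫⁻ x in B, w x ∂μ) + 0))) := by
    refine ENNReal.Tendsto.const_mul (Tendsto.add tendsto_const_nhds he) (Or.inr ?_)
    exact ENNReal.mul_ne_top hC ENNReal.coe_ne_top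
  have := le_of_tendsto_of_tendsto' T1 T2 fun k => by
    refine (hM k B' B hBc hB hB'c hsub hBS h0 d hd).trans ?_
    gcongr
    calc ∫⁻ x in B, wk k x ∂μ ≤ ∫⁻ x in B, (c * w x + ek k x) ∂μ :=
          setLIntegral_mono' hBc.measurableSet fun x hx => hw k x (hBS hx)
      _ = c * (∫⁻ x in B, w x ∂μ) + ∫⁻ x in B, ek k x ∂μ := by
          rw [lintegral_add_right _ (hek k), lintegral_const_mul' _ _ hc]
      _ ≤ _ := by gcongr
  refine this.trans (le_of_eq ?_)
  ring

/-- Shrunk copies of `Q` towards `x`. -/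
def Qh (x : E) (Q : Set E) (j : ℕ) : Set E := (AffineMap.homothety x ((2⁻¹:ℝ)^j)) '' Q

lemma Qh_zero (x : E) (Q : Set E) : Qh x Q 0 = Q := by
  simp [Qh]

lemma Qh_compact (x : E) {Q : Set E} (hQ : IsCompact Q) (j : ℕ) : IsCompact (Qh x Q j) := by
  refine hQ.image ?_
  exact AffineMap.homothety_continuous _ _

lemma Qh_convex (x : E) {Q : Set E} (hQ : Convex ℝ Q) (j : ℕ) : Convex ℝ (Qh x Q j) :=
  hQ.affine_image _

lemma Qh_succ (x : E) {Q : Set E} (hQ : Convex ℝ Q) (hx : x ∈ Q) (j : ℕ) :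
    Qh x Q (j+1) ⊆ Qh x Q j := by
  rintro _ ⟨q, hq, rfl⟩
  refine ⟨(2⁻¹:ℝ) • q + (2⁻¹:ℝ) • x, hQ hq hx (by norm_num) (by norm_num) (by norm_num), ?_⟩
  simp only [AffineMap.homothety_apply, vsub_eq_sub, vadd_eq_add]
  rw [pow_succ, mul_smul]
  congr 2
  rw [show (2⁻¹:ℝ) • q + (2⁻¹:ℝ) • x - x = (2⁻¹:ℝ) • q + ((2⁻¹:ℝ) • x - x) by abel,
    show ((2⁻¹:ℝ) • x - x) = -((2⁻¹:ℝ) • x) by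
      rw [← neg_smul]; nth_rw 2 [← one_smul ℝ x]; rw [← sub_smul]; norm_num, smul_sub]
  abel

lemma Qh_subset (x : E) {Q : Set E} (hQ : Convex ℝ Q) (hx : x ∈ Q) (j : ℕ) :
    Qh x Q j ⊆ Q := by
  induction j with
  | zero => rw [Qh_zero]
  | succ j ih => exact (Qh_succ x hQ hx j).trans ih

lemma Qh_diam (x : E) {Q : Set E} (d : ℝ≥0) (hd : ∀ x ∈ Q, ∀ y ∈ Q, edist x y ≤ d) (j : ℕ) :
    ∀ y ∈ Qh x Q j, ∀ z ∈ Qh x Q j, edist y z ≤ ((2⁻¹)^j * d : ℝ≥0) := by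
  rintro _ ⟨y, hy, rfl⟩ _ ⟨z, hz, rfl⟩
  have := hd y hy z hz
  rw [edist_nndist, ENNReal.coe_le_coe, ← NNReal.coe_le_coe, coe_nndist] at this ⊢
  simp only [AffineMap.homothety_apply, vsub_eq_sub, vadd_eq_add, dist_add_right, dist_smul₀,
    dist_sub_right]
  simp only [norm_pow, norm_inv, Real.norm_ofNat, NNReal.coe_mul, NNReal.coe_pow, NNReal.coe_inv,
    NNReal.coe_ofNat]
  gcongr

lemma Qh_mem (x : E) {Q : Set E} (hx : x ∈ Q) (j : ℕ) : x ∈ Qh x Q j :=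
  ⟨x, hx, by simp⟩

lemma Qh_measure (x : E) (Q : Set E) (j : ℕ) :
    μ (Qh x Q j) = ((2⁻¹ : ℝ≥0∞) ^ j) ^ (Module.finrank ℝ E) * μ Q := by
  rw [Qh, Measure.addHaar_image_homothety, abs_of_nonneg (by positivity),
    ENNReal.ofReal_pow (by positivity), ENNReal.ofReal_pow (by positivity)]
  congr
  rw [ENNReal.ofReal_inv_of_pos (by norm_num)]; simp

lemma chain_bound (h : E → F) (w : E → ℝ≥0∞) (C : ℝ≥0∞) (S : Set E) (hM : MeanProp μ h w C S)
    (hh : ContinuousOn h S) (Q : Set E) (hQc : IsCompact Q) (hQ : Convex ℝ Q) (hQS : Q ⊆ S)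
    (h0 : μ Q ≠ 0) (d : ℝ≥0) (hd : ∀ x ∈ Q, ∀ y ∈ Q, edist x y ≤ d) (x : E) (hx : x ∈ Q) :
    edist (⨍ y in Q, h y ∂μ) (h x) ≤ ∑' j : ℕ, C * ((2⁻¹)^j * d : ℝ≥0) *
      (∫⁻ y in Qh x Q j, w y ∂μ) / μ (Qh x Q (j+1)) := by
  have hpos : ∀ j, μ (Qh x Q j) ≠ 0 := by
    intro j; rw [Qh_measure]
    exact mul_ne_zero (pow_ne_zero _ (pow_ne_zero _ (by simp))) h0
  have hfin : ∀ j, μ (Qh x Q j) ≠ ⊤ := fun j => (Qh_compact x hQc j).measure_lt_top.ne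
  have hsub : ∀ j, Qh x Q j ⊆ S := fun j => (Qh_subset x hQ hx j).trans hQS
  have hint : ∀ j, IntegrableOn h (Qh x Q j) μ := fun j =>
    (hh.mono (hsub j)).integrableOn_compact (Qh_compact x hQc j)
  have T : Tendsto (fun j => ⨍ y in Qh x Q j, h y ∂μ) atTop (𝓝 (h x)) := by
    rw [EMetric.tendsto_nhds]
    intro ε hε
    obtain ⟨η, hη0, hη⟩ := exists_between hε
    obtain ⟨δ, hδ, hδ'⟩ := EMetric.continuousOn_iff.1 hh x (hQS hx) η hη0
    have hdl : Tendsto (fun j : ℕ => (((2⁻¹)^j * d : ℝ≥0) : ℝ≥0∞)) atTop (𝓝 0) := by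
      rw [← ENNReal.coe_zero, ENNReal.tendsto_coe]
      have := (tendsto_pow_atTop_nhds_zero_of_lt_one (r := (2⁻¹:ℝ≥0)) (zero_le)
        (by norm_num)).mul_const d
      simpa using this
    filter_upwards [hdl.eventually_lt_const hδ] with j hj
    have e : (⨍ y in Qh x Q j, h x ∂μ) = h x := setAverage_const (hpos j) (hfin j) _
    rw [← e]
    refine lt_of_le_of_lt (avg_edist_le μ _ _ _ (Qh_compact x hQc j).measurableSet (hint j)
      (integrableOn_const (hfin j)) (hpos j) (hfin j) η ?_) hη
    intro y hy
    refine (hδ' y (hsub j hy) (lt_of_le_of_lt ?_ hj)).le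
    exact Qh_diam x d hd j y hy x (Qh_mem x hx j)
  have := edist_le_tsum_of_edist_le_of_tendsto₀
    (fun j : ℕ => C * ((2⁻¹)^j * d : ℝ≥0) *
      (∫⁻ y in Qh x Q j, w y ∂μ) / μ (Qh x Q (j+1))) (fun j => ?_) T
  · rw [Qh_zero] at this; exact this
  · rw [ENNReal.le_div_iff_mul_le (Or.inl (hpos _)) (Or.inl (hfin _)), edist_comm]
    exact hM _ _ (Qh_compact x hQc j) (Qh_convex x hQ j) (Qh_compact x hQc (j+1))
      (Qh_succ x hQ hx j) (hsub j) (hpos _) _ (Qh_diam x d hd j)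
end means

section orlicz

/-- Extension of `φ` to an `ENNReal` valued monotone function. -/
noncomputable def phit (φ : ℝ → ℝ) (t : ℝ) : ℝ≥0∞ := if 0 < t then ENNReal.ofReal (φ t) else 0

lemma phit_mono {φ : ℝ → ℝ} (hφ : NondecPos φ) : Monotone (phit φ) := by
  intro s t hst
  unfold phit
  by_cases hs : 0 < s
  · simp only [hs, lt_of_lt_of_le hs hst, if_true]
    exact ENNReal.ofReal_le_ofReal (hφ.1 s t hs hst)
  · simp [hs]

/-- the set of big values of `t/φ(t)` -/
def Vset (φ : ℝ → ℝ) (t₀ s : ℝ) : Set ℝ := {t | t₀ < t ∧ s / 2 < t / φ (max t t₀)}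

lemma phimax_meas {φ : ℝ → ℝ} (hφ : NondecPos φ) {t₀ : ℝ} (ht₀ : 0 < t₀) :
    Measurable fun t => φ (max t t₀) := by
  apply Monotone.measurable
  intro a b hab
  exact hφ.1 _ _ (lt_max_of_lt_right ht₀) (max_le_max_right _ hab)

lemma young_pt {φ : ℝ → ℝ} (hφ : NondecPos φ) {t₀ : ℝ} (ht₀ : 0 < t₀) (v s : ℝ) (hs : 0 < s) :
    ENNReal.ofReal v ≤ ENNReal.ofReal (2 * t₀) + 2 * volume (Vset φ t₀ s) +
      ENNReal.ofReal s * phit φ v := by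
  by_cases h1 : v ≤ 2 * t₀
  · exact (ENNReal.ofReal_le_ofReal h1).trans (by rw [add_assoc]; exact le_self_add)
  push Not at h1
  have hv : 0 < v := by linarith
  by_cases h2 : v ≤ s * φ v
  · refine le_trans ?_ le_add_self
    rw [phit, if_pos hv, ← ENNReal.ofReal_mul hs.le]
    exact ENNReal.ofReal_le_ofReal h2
  push Not at h2
  have hsub : Ioo (v/2) v ⊆ Vset φ t₀ s := by
    intro t ht
    have htt : t₀ < t := by linarith [ht.1]
    refine ⟨htt, ?_⟩
    rw [max_eq_left htt.le]
    have p1 := hφ.2 t (by linarith)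
    have p2 := hφ.1 t v (by linarith) ht.2.le
    rw [lt_div_iff₀ p1]
    have : s * φ t ≤ s * φ v := by gcongr
    linarith [ht.1]
  have := measure_mono (μ := volume) hsub
  rw [Real.volume_Ioo] at this
  have h3 : ENNReal.ofReal v = 2 * ENNReal.ofReal (v - v/2) := by
    rw [show (2:ℝ≥0∞) = ENNReal.ofReal 2 by simp, ← ENNReal.ofReal_mul (by norm_num)]
    congr 1; ring
  rw [h3]
  refine le_trans ?_ (le_self_add.trans' le_add_self)
  gcongr

lemma exists_min_nat (P : ℕ → Prop) (H : ∃ i, P i) : ∃ i, P i ∧ ∀ j < i, ¬ P j :=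
  ⟨Nat.find H, Nat.find_spec H, fun _ hj => Nat.find_min H hj⟩

lemma geom_cut (l c : ℝ) (hl : 0 < l) (hc : 0 ≤ c) :
    ∑' i : ℕ, (if (2⁻¹:ℝ)^i * l < c then ENNReal.ofReal ((2⁻¹:ℝ)^i * l) else 0)
      ≤ ENNReal.ofReal (2 * c) := by
  obtain ⟨T, hT⟩ : ∃ T : ℕ → ℝ≥0∞, T = fun i : ℕ =>
    (if (2⁻¹:ℝ)^i * l < c then ENNReal.ofReal ((2⁻¹:ℝ)^i * l) else 0) := ⟨_, rfl⟩
  have hT1 : ∀ i, T i ≤ ENNReal.ofReal ((2⁻¹:ℝ)^i * l) := by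
    intro i; rw [hT]; dsimp only; split_ifs
    · exact le_rfl
    · exact zero_le
  have hT2 : ∀ i, ¬ ((2⁻¹:ℝ)^i * l < c) → T i = 0 := by
    intro i hi; rw [hT]; dsimp only; rw [if_neg hi]
  rw [← hT]
  by_cases H : ∃ i : ℕ, (2⁻¹:ℝ)^i * l < c
  · obtain ⟨i0, hi, hmin⟩ := exists_min_nat _ H
    have hsplit := Summable.sum_add_tsum_nat_add' (f := T) (k := i0) ENNReal.summable
    rw [← hsplit, Finset.sum_eq_zero, zero_add]
    · calc _ ≤ ∑' i : ℕ, ENNReal.ofReal ((2⁻¹:ℝ)^i0 * l) * (2⁻¹:ℝ≥0∞)^i := by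
            refine ENNReal.tsum_le_tsum fun i => ?_
            refine (hT1 _).trans (le_of_eq ?_)
            rw [show (2⁻¹:ℝ≥0∞) = ENNReal.ofReal 2⁻¹ by
                rw [ENNReal.ofReal_inv_of_pos (by norm_num)]; simp,
              ← ENNReal.ofReal_pow (by norm_num), ← ENNReal.ofReal_mul (by positivity)]
            congr 1; ring
        _ = ENNReal.ofReal ((2⁻¹:ℝ)^i0 * l) * 2 := by
            rw [ENNReal.tsum_mul_left, ENNReal.tsum_geometric, ENNReal.one_sub_inv_two, inv_inv]
        _ ≤ ENNReal.ofReal (2 * c) := by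
            rw [ENNReal.ofReal_mul (p := 2) (by norm_num), ENNReal.ofReal_ofNat, mul_comm _ (2:ℝ≥0∞)]
            gcongr
    · intro j hj
      exact hT2 j (hmin j (Finset.mem_range.1 hj))
  · push Not at H
    have : T = fun _ => 0 := funext fun i => hT2 i (not_lt.2 (H i))
    rw [this]; simp

lemma V_sum {φ : ℝ → ℝ} (hφ : NondecPos φ) {t₀ : ℝ} (ht₀ : 0 < t₀) (m : ℕ) (hm : 2 ≤ m)
    (d a : ℝ) (hd : 0 < d) (ha : 0 < a) :
    ∑' i : ℕ, ENNReal.ofReal ((2⁻¹:ℝ)^i * d) * volume (Vset φ t₀ (((2⁻¹:ℝ)^i * d / a)^(m-1)))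
      ≤ ENNReal.ofReal (2 * a) *
        ∫⁻ t in Ioi t₀, ENNReal.ofReal ((2 * (t / φ t)) ^ (1 / ((m:ℝ) - 1))) := by
  have hms : ∀ s, MeasurableSet (Vset φ t₀ s) := by
    intro s
    have := phimax_meas hφ ht₀
    refine (measurableSet_lt measurable_const measurable_id).inter
      (measurableSet_lt measurable_const (measurable_id.div this))
  have e1 : ∀ i : ℕ, ENNReal.ofReal ((2⁻¹:ℝ)^i * d) *
      volume (Vset φ t₀ (((2⁻¹:ℝ)^i * d / a)^(m-1))) = ∫⁻ t in Ioi t₀,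
        (Vset φ t₀ (((2⁻¹:ℝ)^i * d / a)^(m-1))).indicator
          (fun _ => ENNReal.ofReal ((2⁻¹:ℝ)^i * d)) t := by
    intro i
    rw [lintegral_indicator (hms _), setLIntegral_const, Measure.restrict_apply (hms _)]
    congr 2
    symm
    exact inter_eq_left.2 fun t ht => ht.1
  simp_rw [e1]
  rw [← lintegral_tsum (fun i => (measurable_const.indicator (hms _)).aemeasurable),
    ← lintegral_const_mul' _ _ ENNReal.ofReal_ne_top]
  refine setLIntegral_mono' measurableSet_Ioi fun t ht => ?_
  have ht' : t₀ < t := ht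
  have hφt := hφ.2 t (ht₀.trans ht')
  have hu : 0 < t / φ t := div_pos (ht₀.trans ht') hφt
  have hm1 : (0:ℝ) < (m:ℝ) - 1 := by
    have : (2:ℝ) ≤ m := by exact_mod_cast hm
    linarith
  calc _ ≤ ∑' i : ℕ, (if (2⁻¹:ℝ)^i * d < a * (2 * (t / φ t)) ^ (1 / ((m:ℝ) - 1)) then
          ENNReal.ofReal ((2⁻¹:ℝ)^i * d) else 0) := by
        refine ENNReal.tsum_le_tsum fun i => ?_
        by_cases hi : t ∈ Vset φ t₀ (((2⁻¹:ℝ)^i * d / a)^(m-1))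
        · rw [indicator_of_mem hi, if_pos]
          have h2 := hi.2
          rw [max_eq_left ht'.le] at h2
          rw [← div_lt_iff₀' ha]
          have h3 : ((2⁻¹:ℝ)^i * d / a)^(m-1) < 2 * (t / φ t) := by linarith
          have h4 : (2⁻¹:ℝ)^i * d / a =
              (((2⁻¹:ℝ)^i * d / a)^(m-1)) ^ (1 / ((m:ℝ) - 1)) := by
            rw [← Real.rpow_natCast (n := m-1), ← Real.rpow_mul (by positivity), Nat.cast_sub (by omega)]
            rw [Nat.cast_one, mul_one_div_cancel hm1.ne', Real.rpow_one]
          rw [h4]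
          exact Real.rpow_lt_rpow (by positivity) h3 (by positivity)
        · rw [indicator_of_notMem hi]; exact zero_le
    _ ≤ ENNReal.ofReal (2 * (a * (2 * (t / φ t)) ^ (1 / ((m:ℝ) - 1)))) :=
        geom_cut _ _ hd (by positivity)
    _ = _ := by rw [← mul_assoc, ENNReal.ofReal_mul (by positivity)]

variable {E F : Type*} [NormedAddCommGroup E] [NormedSpace ℝ E] [FiniteDimensional ℝ E]
  [MeasurableSpace E] [BorelSpace E] (μ : Measure E) [μ.IsAddHaarMeasure]
  [NormedAddCommGroup F] [NormedSpace ℝ F] [CompleteSpace F]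

lemma geom_partial (b : ℝ≥0∞) (hb : 2 ≤ b) (i : ℕ) :
    ∑ j ∈ Finset.range (i+1), b ^ j ≤ 2 * b ^ i := by
  induction i with
  | zero => simp
  | succ i ih =>
    rw [Finset.sum_range_succ, two_mul]
    gcongr
    refine ih.trans ?_
    rw [pow_succ, mul_comm]; gcongr

lemma Qh_layer (hm : 1 ≤ Module.finrank ℝ E) (w : E → ℝ≥0∞) (Q : Set E)
    (d : ℝ≥0) (hd : ∀ x ∈ Q, ∀ y ∈ Q, edist x y ≤ d) (x : E) (hx : x ∈ Q) (j : ℕ) :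
    ∫⁻ y in Qh x Q j, w y ∂μ ≤
      ∑' i : ℕ, if j ≤ i then ∫⁻ y in Qh x Q i \ Qh x Q (i+1), w y ∂μ else 0 := by
  have hnt : Nontrivial E := Module.finrank_pos_iff (R := ℝ).1 (by omega)
  have hsub : Qh x Q j ⊆ {x} ∪ ⋃ i : ℕ, (if j ≤ i then Qh x Q i \ Qh x Q (i+1) else ∅) := by
    intro y hy
    by_cases hyx : y = x
    · left; exact hyx
    right
    have hex : ∃ i, y ∉ Qh x Q (j + i) := by
      by_contra! hcon
      have hpos : 0 < dist y x := dist_pos.2 hyx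
      have T : Tendsto (fun i : ℕ => (2⁻¹:ℝ)^(j+i) * d) atTop (𝓝 0) := by
        have h1 := (tendsto_pow_atTop_nhds_zero_of_lt_one (r := (2⁻¹:ℝ)) (by norm_num)
          (by norm_num))
        have := ((tendsto_add_atTop_iff_nat j).2 h1).mul_const (d:ℝ)
        simpa [add_comm] using this
      obtain ⟨i, hi⟩ := (T.eventually_lt_const hpos).exists
      have := Qh_diam x d hd (j+i) y (hcon i) x (Qh_mem x hx _)
      rw [edist_nndist, ENNReal.coe_le_coe, ← NNReal.coe_le_coe, coe_nndist] at this
      push_cast at this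
      linarith
    have h0 : Nat.find hex ≠ 0 := by
      intro h
      have := Nat.find_spec hex
      rw [h] at this; exact this hy
    obtain ⟨k, hk⟩ := Nat.exists_eq_succ_of_ne_zero h0
    have h1 := Nat.find_spec hex
    have h2 := Nat.find_min hex (m := k) (by omega)
    rw [hk] at h1
    refine mem_iUnion.2 ⟨j + k, ?_⟩
    rw [if_pos (by omega)]
    exact ⟨not_not.1 h2, h1⟩
  calc _ ≤ ∫⁻ y in {x} ∪ ⋃ i : ℕ, (if j ≤ i then Qh x Q i \ Qh x Q (i+1) else ∅), w y ∂μ :=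
        lintegral_mono_set hsub
    _ ≤ (∫⁻ y in {x}, w y ∂μ) +
        ∫⁻ y in ⋃ i : ℕ, (if j ≤ i then Qh x Q i \ Qh x Q (i+1) else ∅), w y ∂μ :=
        lintegral_union_le _ _ _
    _ = ∫⁻ y in ⋃ i : ℕ, (if j ≤ i then Qh x Q i \ Qh x Q (i+1) else ∅), w y ∂μ := by
        rw [setLIntegral_measure_zero _ _ (by simp), zero_add]
    _ ≤ _ := by
        refine (lintegral_iUnion_le _ _).trans (ENNReal.tsum_le_tsum fun i => ?_)
        split_ifs <;> simp

lemma Qh_layer_sum (hm : 1 ≤ Module.finrank ℝ E) (w : E → ℝ≥0∞) (Q : Set E)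
    (d : ℝ≥0) (hd : ∀ x ∈ Q, ∀ y ∈ Q, edist x y ≤ d) (x : E) (hx : x ∈ Q) (b : ℝ≥0∞)
    (hb : 2 ≤ b) :
    ∑' j : ℕ, b ^ j * ∫⁻ y in Qh x Q j, w y ∂μ ≤
      2 * ∑' i : ℕ, b ^ i * ∫⁻ y in Qh x Q i \ Qh x Q (i+1), w y ∂μ := by
  calc _ ≤ ∑' j : ℕ, ∑' i : ℕ, b ^ j *
        (if j ≤ i then ∫⁻ y in Qh x Q i \ Qh x Q (i+1), w y ∂μ else 0) := by
        refine ENNReal.tsum_le_tsum fun j => ?_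
        rw [ENNReal.tsum_mul_left]
        gcongr
        exact Qh_layer μ hm w Q d hd x hx j
    _ = ∑' i : ℕ, ∑' j : ℕ, b ^ j *
        (if j ≤ i then ∫⁻ y in Qh x Q i \ Qh x Q (i+1), w y ∂μ else 0) := ENNReal.tsum_comm
    _ ≤ ∑' i : ℕ, 2 * (b ^ i * ∫⁻ y in Qh x Q i \ Qh x Q (i+1), w y ∂μ) := by
        refine ENNReal.tsum_le_tsum fun i => ?_
        rw [tsum_eq_sum (s := Finset.range (i+1))]
        · calc _ = (∑ j ∈ Finset.range (i+1), b ^ j) *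
                ∫⁻ y in Qh x Q i \ Qh x Q (i+1), w y ∂μ := by
                rw [Finset.sum_mul]
                refine Finset.sum_congr rfl fun j hj => ?_
                rw [if_pos (by have := Finset.mem_range.1 hj; omega)]
            _ ≤ _ := by
                rw [← mul_assoc]; gcongr; exact geom_partial b hb i
        · intro j hj
          rw [if_neg (by simpa using hj), mul_zero]
    _ = _ := ENNReal.tsum_mul_left
end orlicz

section orlicz2
variable {E F : Type*} [NormedAddCommGroup E] [NormedSpace ℝ E] [FiniteDimensional ℝ E]
  [MeasurableSpace E] [BorelSpace E] (μ : Measure E) [μ.IsAddHaarMeasure]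
  [NormedAddCommGroup F] [NormedSpace ℝ F] [CompleteSpace F]

lemma two_inv_pow_mul (j : ℕ) : (2⁻¹:ℝ≥0∞)^j * 2^j = 1 := by
  rw [← mul_pow, ENNReal.inv_mul_cancel (by norm_num) (by norm_num), one_pow]

lemma osc_bound {φ : ℝ → ℝ} (hφ : NondecPos φ) {t₀ : ℝ} (ht₀ : 0 < t₀) (m : ℕ) (hm : 2 ≤ m)
    (hE : Module.finrank ℝ E = m)
    (h : E → F) (v : E → ℝ) (hv : Measurable v) (C : ℝ≥0∞) (S : Set E)
    (hM : MeanProp μ h (fun x => ENNReal.ofReal (v x)) C S)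
    (hh : ContinuousOn h S) (Q : Set E) (hQc : IsCompact Q) (hQ : Convex ℝ Q) (hQS : Q ⊆ S)
    (h0 : μ Q ≠ 0) (d a : ℝ≥0) (hd : ∀ x ∈ Q, ∀ y ∈ Q, edist x y ≤ d) (hd0 : 0 < d) (hda : d ≤ a)
    (c1 : ℝ≥0∞) (hc1 : (d:ℝ≥0∞)^m ≤ c1 * μ Q)
    (hA : ∫⁻ y in Q, phit φ (v y) ∂μ ≤ (a:ℝ≥0∞)^m) (J : ℝ≥0∞)
    (hJ : ∫⁻ t in Ioi t₀, ENNReal.ofReal ((2 * (t / φ t)) ^ (1 / ((m:ℝ) - 1))) ≤ J)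
    (x : E) (hx : x ∈ Q) :
    edist (⨍ y in Q, h y ∂μ) (h x) ≤
      C * 2^(m+1) * (4 * ENNReal.ofReal t₀ + 4 * J + c1) * a := by
  have hκt : μ Q ≠ ⊤ := hQc.measure_lt_top.ne
  have ha0 : 0 < a := hd0.trans_le hda
  have hb := chain_bound μ h _ C S hM hh Q hQc hQ hQS h0 d hd x hx
  obtain ⟨k, rfl⟩ : ∃ k, m = k + 1 := ⟨m-1, by omega⟩
  have hterm : ∀ j, C * ((2⁻¹)^j * d : ℝ≥0) *
      (∫⁻ y in Qh x Q j, ENNReal.ofReal (v y) ∂μ) / μ (Qh x Q (j+1)) =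
      (C * d * 2^(k+1) * (μ Q)⁻¹) * (((2:ℝ≥0∞)^k)^j *
        ∫⁻ y in Qh x Q j, ENNReal.ofReal (v y) ∂μ) := by
    intro j
    rw [Qh_measure, hE, div_eq_mul_inv, ENNReal.mul_inv (Or.inr hκt) (Or.inr h0),
      ← ENNReal.inv_pow, ← ENNReal.inv_pow, inv_inv]
    push_cast
    have e1 : (2⁻¹:ℝ≥0∞)^j * (2^(j+1))^(k+1) = 2^(k+1) * (2^k)^j := by
      calc _ = ((2⁻¹:ℝ≥0∞)^j * 2^j) * (2^(k+1) * (2^k)^j) := by ring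
        _ = _ := by rw [two_inv_pow_mul, one_mul]
    calc _ = C * d * ((2⁻¹:ℝ≥0∞)^j * (2^(j+1))^(k+1)) *
          (∫⁻ y in Qh x Q j, ENNReal.ofReal (v y) ∂μ) * (μ Q)⁻¹ := by ring
      _ = _ := by rw [e1]; ring
  simp_rw [hterm] at hb
  rw [ENNReal.tsum_mul_left] at hb
  have hlay := Qh_layer_sum μ (by omega) (fun x => ENNReal.ofReal (v x)) Q d hd x hx (2^k)
    (by simpa using pow_le_pow_right₀ (a := (2:ℝ≥0∞)) (by norm_num) (show 1 ≤ k by omega))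
  set s : ℕ → ℝ := fun i => ((2⁻¹:ℝ)^i * d / a)^k with hs
  have hspos : ∀ i, 0 < s i := fun i => by
    have h1 : (0:ℝ) < d := hd0
    have h2 : (0:ℝ) < a := ha0
    positivity
  have hsi : ∀ i, ((2:ℝ≥0∞)^k)^i * ENNReal.ofReal (s i) = ((d:ℝ≥0∞) / a)^k := by
    intro i
    have : s i = (((2⁻¹)^i * d / a : ℝ≥0) : ℝ)^k := by simp [hs]
    rw [this, ENNReal.ofReal_pow NNReal.zero_le_coe, ENNReal.ofReal_coe_nnreal,
      ENNReal.coe_div ha0.ne']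
    push_cast
    rw [mul_div_assoc, mul_pow]
    calc _ = ((2⁻¹:ℝ≥0∞)^i * 2^i)^k * ((d:ℝ≥0∞) / a)^k := by ring
      _ = _ := by rw [two_inv_pow_mul, one_pow, one_mul]
  have hAm : ∀ i, MeasurableSet (Qh x Q i \ Qh x Q (i+1)) := fun i =>
    (Qh_compact x hQc i).measurableSet.diff (Qh_compact x hQc _).measurableSet
  have hphm : Measurable fun y => phit φ (v y) := (phit_mono hφ).measurable.comp hv
  have hlayer : ∀ i, ((2:ℝ≥0∞)^k)^i * ∫⁻ y in Qh x Q i \ Qh x Q (i+1), ENNReal.ofReal (v y) ∂μ ≤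
      μ Q * ((2⁻¹)^i * (2 * ENNReal.ofReal t₀ + 2 * volume (Vset φ t₀ (s i)))) +
      ((d:ℝ≥0∞) / a)^k * ∫⁻ y in Qh x Q i \ Qh x Q (i+1), phit φ (v y) ∂μ := by
    intro i
    have h1 : ∫⁻ y in Qh x Q i \ Qh x Q (i+1), ENNReal.ofReal (v y) ∂μ ≤
        (2 * ENNReal.ofReal t₀ + 2 * volume (Vset φ t₀ (s i))) * μ (Qh x Q i) +
        ENNReal.ofReal (s i) * ∫⁻ y in Qh x Q i \ Qh x Q (i+1), phit φ (v y) ∂μ := by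
      calc _ ≤ ∫⁻ y in Qh x Q i \ Qh x Q (i+1),
            ((2 * ENNReal.ofReal t₀ + 2 * volume (Vset φ t₀ (s i))) +
              ENNReal.ofReal (s i) * phit φ (v y)) ∂μ := by
            refine lintegral_mono fun y => ?_
            have := young_pt hφ ht₀ (v y) (s i) (hspos i)
            rwa [ENNReal.ofReal_mul (by norm_num), ENNReal.ofReal_ofNat] at this
        _ = _ := by rw [lintegral_add_left measurable_const, lintegral_const_mul _ hphm,
                      setLIntegral_const]
        _ ≤ _ := by gcongr; exact sdiff_subset
    calc _ ≤ ((2:ℝ≥0∞)^k)^i * _ := mul_le_mul_right h1 _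
      _ = _ := by
        rw [mul_add, ← mul_assoc _ (ENNReal.ofReal (s i)), hsi, Qh_measure, hE]
        congr 1
        calc _ = ((2⁻¹:ℝ≥0∞)^i * 2^i)^k * (μ Q * ((2⁻¹)^i * (2 * ENNReal.ofReal t₀ + 2 * volume (Vset φ t₀ (s i))))) := by ring
          _ = _ := by rw [two_inv_pow_mul, one_pow, one_mul]
  have hdisj : ∑' i, ∫⁻ y in Qh x Q i \ Qh x Q (i+1), phit φ (v y) ∂μ ≤ (a:ℝ≥0∞)^(k+1) := by
    rw [← lintegral_iUnion hAm]
    · refine (lintegral_mono_set (iUnion_subset fun i => ?_)).trans hA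
      exact sdiff_subset.trans (Qh_subset x hQ hx i)
    · have hanti : Antitone (Qh x Q) := antitone_nat_of_succ_le fun i => Qh_succ x hQ hx i
      intro i j hij
      rcases lt_or_gt_of_ne hij with hlt | hlt
      · exact disjoint_left.2 fun y hy hy' => hy.2 (hanti (show i+1 ≤ j from hlt) hy'.1)
      · exact disjoint_left.2 fun y hy hy' => hy'.2 (hanti (show j+1 ≤ i from hlt) hy.1)
  have hV := V_sum hφ ht₀ (k+1) hm d a (by exact_mod_cast hd0) (by exact_mod_cast ha0)
  have hVs : ∑' i, (d:ℝ≥0∞) * ((2⁻¹)^i * (2 * ENNReal.ofReal t₀ + 2 * volume (Vset φ t₀ (s i))))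
      ≤ 4 * ENNReal.ofReal t₀ * d + 4 * a * J := by
    calc _ = ∑' i : ℕ, ((2⁻¹:ℝ≥0∞)^i * (2 * ENNReal.ofReal t₀ * d) +
          2 * (ENNReal.ofReal ((2⁻¹:ℝ)^i * d) * volume (Vset φ t₀ (((2⁻¹:ℝ)^i * d / a)^(k+1-1))))) := by
          congr 1; ext i
          rw [ENNReal.ofReal_mul (by positivity), ENNReal.ofReal_pow (by norm_num),
            ENNReal.ofReal_inv_of_pos (by norm_num), ENNReal.ofReal_coe_nnreal,
            ENNReal.ofReal_ofNat]
          simp only [hs, Nat.add_sub_cancel]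
          ring
      _ ≤ _ := by
          rw [ENNReal.tsum_add, ENNReal.tsum_mul_right, ENNReal.tsum_mul_left,
            ENNReal.tsum_geometric, ENNReal.one_sub_inv_two, inv_inv]
          have hV2 := hV.trans (mul_le_mul_right hJ _)
          rw [ENNReal.ofReal_mul (by norm_num), ENNReal.ofReal_ofNat,
            ENNReal.ofReal_coe_nnreal] at hV2
          refine add_le_add (le_of_eq (by ring)) ?_
          refine (mul_le_mul_right hV2 _).trans (le_of_eq (by ring))
  have hfin : (d:ℝ≥0∞) * (μ Q)⁻¹ * (((d:ℝ≥0∞) / a)^k * (a:ℝ≥0∞)^(k+1)) ≤ c1 * a := by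
    have e : ((d:ℝ≥0∞) / a)^k * (a:ℝ≥0∞)^(k+1) = (d:ℝ≥0∞)^k * a := by
      rw [pow_succ, ← mul_assoc, ← mul_pow,
        ENNReal.div_mul_cancel (by exact_mod_cast ha0.ne') ENNReal.coe_ne_top]
    rw [e]
    calc _ = (d:ℝ≥0∞)^(k+1) * (μ Q)⁻¹ * a := by ring
      _ ≤ (c1 * μ Q) * (μ Q)⁻¹ * a := by gcongr
      _ = _ := by rw [mul_assoc c1, ENNReal.mul_inv_cancel h0 hκt, mul_one]
  have hsum : ∑' i, ((2:ℝ≥0∞)^k)^i * ∫⁻ y in Qh x Q i \ Qh x Q (i+1), ENNReal.ofReal (v y) ∂μ ≤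
      μ Q * ∑' i, ((2⁻¹)^i * (2 * ENNReal.ofReal t₀ + 2 * volume (Vset φ t₀ (s i)))) +
      ((d:ℝ≥0∞) / a)^k * (a:ℝ≥0∞)^(k+1) := by
    refine (ENNReal.tsum_le_tsum hlayer).trans ?_
    rw [ENNReal.tsum_add, ENNReal.tsum_mul_left, ENNReal.tsum_mul_left]
    gcongr
  refine hb.trans ?_
  calc _ ≤ (C * d * 2^(k+1) * (μ Q)⁻¹) * (2 * (μ Q * ∑' i, ((2⁻¹)^i * (2 * ENNReal.ofReal t₀ + 2 * volume (Vset φ t₀ (s i)))) +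
      ((d:ℝ≥0∞) / a)^k * (a:ℝ≥0∞)^(k+1))) := by gcongr; exact hlay.trans (by gcongr)
    _ = C * 2^(k+1+1) * ((μ Q * (μ Q)⁻¹) * ∑' i, (d:ℝ≥0∞) * ((2⁻¹)^i * (2 * ENNReal.ofReal t₀ + 2 * volume (Vset φ t₀ (s i)))) + (d:ℝ≥0∞) * (μ Q)⁻¹ * (((d:ℝ≥0∞) / a)^k * (a:ℝ≥0∞)^(k+1))) := by
        rw [ENNReal.tsum_mul_left (a := (d:ℝ≥0∞))]; ring
    _ ≤ C * 2^(k+1+1) * ((4 * ENNReal.ofReal t₀ * d + 4 * a * J) + c1 * a) := by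
        rw [ENNReal.mul_inv_cancel h0 hκt, one_mul]
        gcongr
    _ ≤ C * 2^(k+1+1) * ((4 * ENNReal.ofReal t₀ * a + 4 * a * J) + c1 * a) := by
        gcongr
    _ = _ := by ring

end orlicz2

section lusin
variable {E F : Type*} [NormedAddCommGroup E] [NormedSpace ℝ E] [FiniteDimensional ℝ E]
  [MeasurableSpace E] [BorelSpace E] (μ : Measure E) [μ.IsAddHaarMeasure]
  [NormedAddCommGroup F] [NormedSpace ℝ F] [CompleteSpace F]

lemma diam_bound {φ : ℝ → ℝ} (hφ : NondecPos φ) {t₀ : ℝ} (ht₀ : 0 < t₀) (m : ℕ) (hm : 2 ≤ m)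
    (hE : Module.finrank ℝ E = m)
    (h : E → F) (v : E → ℝ) (hv : Measurable v) (C : ℝ≥0∞) (hC : C ≠ ⊤) (S : Set E)
    (hM : MeanProp μ h (fun x => ENNReal.ofReal (v x)) C S)
    (hh : ContinuousOn h S) (hfin : ∫⁻ y in S, phit φ (v y) ∂μ ≠ ⊤)
    (hJ : ∫⁻ t in Ioi t₀, ENNReal.ofReal ((2 * (t / φ t)) ^ (1 / ((m:ℝ) - 1))) ≠ ⊤) :
    ∃ C' : ℝ≥0∞, C' ≠ ⊤ ∧ ∀ c r, 0 < r → closedBall c r ⊆ S →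
      ediam (h '' closedBall c r) ^ m ≤ C' * ∫⁻ y in closedBall c r, (phit φ (v y) + 1) ∂μ := by
  set J := ∫⁻ t in Ioi t₀, ENNReal.ofReal ((2 * (t / φ t)) ^ (1 / ((m:ℝ) - 1))) with hJd
  set κ := μ (ball (0:E) 1) with hκ
  have hκ0 : κ ≠ 0 := (measure_ball_pos μ _ one_pos).ne'
  have hκt : κ ≠ ⊤ := measure_ball_lt_top.ne
  set c1 : ℝ≥0∞ := 2^m * κ⁻¹ with hc1
  have hc1t : c1 ≠ ⊤ := ENNReal.mul_ne_top (by finiteness) (ENNReal.inv_ne_top.2 hκ0)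
  set K : ℝ≥0∞ := C * 2^(m+1) * (4 * ENNReal.ofReal t₀ + 4 * J + c1) with hK
  have hKt : K ≠ ⊤ := by
    refine ENNReal.mul_ne_top (ENNReal.mul_ne_top hC (by finiteness)) ?_
    exact ENNReal.add_ne_top.2 ⟨ENNReal.add_ne_top.2 ⟨by finiteness,
      ENNReal.mul_ne_top (by finiteness) hJ⟩, hc1t⟩
  refine ⟨(2 * K)^m * max 1 c1, ENNReal.mul_ne_top (by finiteness) (by simp [hc1t]), ?_⟩
  intro c r hr hcS
  set Q := closedBall c r with hQ
  have hμQ : μ Q = ENNReal.ofReal (r^m) * κ := by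
    rw [hQ, Measure.addHaar_closedBall μ c hr.le, hE]
  have h0 : μ Q ≠ 0 := (measure_closedBall_pos μ c hr).ne'
  set d : ℝ≥0 := (2 * r).toNNReal with hd
  have hd0 : 0 < d := by simp [hd, hr]
  have hdm : (d:ℝ≥0∞)^m = c1 * μ Q := by
    have : (d:ℝ≥0∞) = 2 * ENNReal.ofReal r := by
      rw [← ENNReal.ofReal_ofNat, ← ENNReal.ofReal_mul (by norm_num)]; rfl
    rw [this, hμQ, hc1, mul_pow, ENNReal.ofReal_pow hr.le]
    calc _ = 2^m * ENNReal.ofReal r ^m * (κ⁻¹ * κ) := by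
          rw [ENNReal.inv_mul_cancel hκ0 hκt, mul_one]
      _ = _ := by ring
  have hAt : ∫⁻ y in Q, phit φ (v y) ∂μ ≠ ⊤ :=
    ne_top_of_le_ne_top hfin (lintegral_mono_set hcS)
  set A : ℝ≥0 := (∫⁻ y in Q, phit φ (v y) ∂μ).toNNReal with hA
  have hAe : (A:ℝ≥0∞) = ∫⁻ y in Q, phit φ (v y) ∂μ := ENNReal.coe_toNNReal hAt
  set a : ℝ≥0 := (A + d^m)^(1/(m:ℝ)) with ha
  have ham : a^m = A + d^m := by
    rw [ha, ← NNReal.rpow_natCast, ← NNReal.rpow_mul, one_div_mul_cancel (by positivity),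
      NNReal.rpow_one]
  have hda : d ≤ a := by
    refine le_of_pow_le_pow_left₀ (by omega : m ≠ 0) zero_le ?_
    rw [ham]; exact le_add_self
  have key : ∀ x ∈ Q, edist (⨍ y in Q, h y ∂μ) (h x) ≤ K * a := by
    intro x hx
    refine osc_bound μ hφ ht₀ m hm hE h v hv C S hM hh Q (isCompact_closedBall _ _)
      (convex_closedBall _ _) hcS h0 d a ?_ hd0 hda c1 hdm.le ?_ J le_rfl x hx
    · intro x hx y hy
      rw [edist_dist]
      refine ENNReal.ofReal_le_ofReal ?_
      have := dist_triangle_right x y c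
      have h1 : dist x c ≤ r := hx
      have h2 : dist y c ≤ r := hy
      linarith
    · rw [← hAe]
      have : (a:ℝ≥0∞)^m = A + (d:ℝ≥0∞)^m := by exact_mod_cast ham
      rw [this]; exact le_self_add
  have hdi : ediam (h '' Q) ≤ 2 * K * a := by
    refine ediam_le ?_
    rintro _ ⟨x, hx, rfl⟩ _ ⟨y, hy, rfl⟩
    calc edist (h x) (h y) ≤ edist (⨍ y in Q, h y ∂μ) (h x) + edist (⨍ y in Q, h y ∂μ) (h y) :=
          edist_triangle_left _ _ _
      _ ≤ K * a + K * a := add_le_add (key x hx) (key y hy)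
      _ = _ := by ring
  have hphm : Measurable fun y => phit φ (v y) := (phit_mono hφ).measurable.comp hv
  calc _ ≤ (2 * K * a)^m := by gcongr
    _ = (2 * K)^m * (A + (d:ℝ≥0∞)^m) := by
        rw [mul_pow]; congr 1; exact_mod_cast ham
    _ ≤ (2 * K)^m * (max 1 c1 * (A + μ Q)) := by
        refine mul_le_mul_right ?_ _
        rw [hdm, mul_add]
        refine add_le_add ?_ (mul_le_mul_left ?_ _)
        · exact le_mul_of_one_le_left zero_le (le_max_left _ _)
        · exact le_max_right _ _
    _ = _ := by
        rw [lintegral_add_left hphm, hAe, setLIntegral_const, one_mul, mul_assoc]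

lemma null_of_diam [MeasurableSpace F] [BorelSpace F] (m : ℕ) (h : E → F) (S : Set E)
    (hS : IsOpen S) (hh : ContinuousOn h S)
    (g : E → ℝ≥0∞) (hg : ∫⁻ y in S, g y ∂μ ≠ ⊤) (C' : ℝ≥0∞) (hC' : C' ≠ ⊤)
    (hd : ∀ c r, 0 < r → closedBall c r ⊆ S →
      ediam (h '' closedBall c r) ^ m ≤ C' * ∫⁻ y in closedBall c r, g y ∂μ)
    (N : Set E) (hN : N ⊆ S) (hN0 : μ N = 0) : μH[(m:ℝ)] (h '' N) = 0 := by
  obtain ⟨M, τ, hτ, hMτ⟩ := HasBesicovitchCovering.no_satelliteConfig (α := E)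
  have main : ∀ k : ℕ, ∃ (ι : Type _) (_ : Countable ι) (t : ι → Set F),
      (∀ i, ediam (t i) ≤ (2⁻¹:ℝ≥0∞)^k) ∧ h '' N ⊆ ⋃ i, t i ∧
      ∑' i, ediam (t i) ^ (m:ℝ) ≤ (M:ℝ≥0∞) * C' * (2⁻¹:ℝ≥0∞)^k := by
    intro k
    have hε : (2⁻¹:ℝ≥0∞)^k ≠ 0 := pow_ne_zero _ (by simp)
    obtain ⟨δ, hδ, hδs⟩ := exists_pos_setLIntegral_lt_of_measure_lt hg hε
    obtain ⟨V, hNV, hVo, hVδ⟩ := N.exists_isOpen_lt_of_lt (μ := μ) δ (by rw [hN0]; exact hδ)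
    have hVint : ∫⁻ y in V ∩ S, g y ∂μ ≤ (2⁻¹:ℝ≥0∞)^k := by
      have := hδs V ((Measure.restrict_apply_le _ _).trans_lt hVδ)
      rw [Measure.restrict_restrict hVo.measurableSet] at this
      exact this.le
    have hrad : ∀ x : N, ∃ r : ℝ, 0 < r ∧ r ≤ 1 ∧ closedBall (x:E) r ⊆ V ∩ S ∧
        ediam (h '' closedBall (x:E) r) ≤ (2⁻¹:ℝ≥0∞)^k := by
      intro x
      have h1 : V ∩ S ∈ 𝓝 (x:E) := (hVo.inter hS).mem_nhds ⟨hNV x.2, hN x.2⟩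
      have hca : ContinuousAt h (x:E) := hh.continuousAt (hS.mem_nhds (hN x.2))
      have h2 : h ⁻¹' (closedEBall (h x) ((2⁻¹:ℝ≥0∞)^(k+1))) ∈ 𝓝 (x:E) :=
        hca (closedEBall_mem_nhds _ (ENNReal.pow_pos (by simp) _))
      obtain ⟨r, hr, hrs⟩ := Metric.nhds_basis_closedBall.mem_iff.1 (inter_mem h1 h2)
      refine ⟨min r 1, lt_min hr one_pos, min_le_right _ _, ?_, ?_⟩
      · exact ((closedBall_subset_closedBall (min_le_left _ _)).trans hrs).trans inter_subset_left
      · refine ediam_le ?_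
        rintro _ ⟨y, hy, rfl⟩ _ ⟨z, hz, rfl⟩
        have hy' := (hrs (closedBall_subset_closedBall (min_le_left _ _) hy)).2
        have hz' := (hrs (closedBall_subset_closedBall (min_le_left _ _) hz)).2
        calc edist (h y) (h z) ≤ edist (h y) (h x) + edist (h z) (h x) := edist_triangle_right _ _ _
          _ ≤ (2⁻¹:ℝ≥0∞)^(k+1) + (2⁻¹:ℝ≥0∞)^(k+1) := add_le_add hy' hz'
          _ = _ := by rw [pow_succ, ← mul_add, ENNReal.inv_two_add_inv_two, mul_one]
    choose r hr0 hr1 hrV hrd using hrad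
    let q : Besicovitch.BallPackage N E := ⟨fun x => x, r, hr0, 1, hr1⟩
    obtain ⟨s, hsd, hsc⟩ := Besicovitch.exist_disjoint_covering_families hτ hMτ q
    have hcount : ∀ i, (s i).Countable := fun i => (hsd i).countable_of_nonempty_interior
      fun j _ => ⟨q.c j, ball_subset_interior_closedBall (mem_ball_self (hr0 j))⟩
    have : ∀ i, Countable (s i) := fun i => (hcount i).to_subtype
    refine ⟨Σ i : Fin M, s i, inferInstance, fun p => h '' closedBall (p.2 : N) (r p.2),
      fun p => hrd _, ?_, ?_⟩
    · rintro _ ⟨x, hx, rfl⟩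
      have := hsc ⟨⟨x, hx⟩, rfl⟩
      simp only [mem_iUnion] at this ⊢
      obtain ⟨i, j, hj, hx⟩ := this
      exact ⟨⟨i, ⟨j, hj⟩⟩, mem_image_of_mem _ (ball_subset_closedBall hx)⟩
    · rw [ENNReal.tsum_sigma (fun (i : Fin M) (j : s i) =>
        ediam (h '' closedBall ((j : N):E) (r j)) ^ (m:ℝ))]
      have hfam : ∀ i, ∑' j : s i, ediam (h '' closedBall (j : N) (r j)) ^ (m:ℝ) ≤
          C' * (2⁻¹:ℝ≥0∞)^k := by
        intro i
        calc _ ≤ ∑' j : s i, C' * ∫⁻ y in closedBall ((j : N):E) (r j), g y ∂μ := by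
              refine ENNReal.tsum_le_tsum fun j => ?_
              rw [ENNReal.rpow_natCast]
              exact hd _ _ (hr0 _) ((hrV _).trans inter_subset_right)
          _ = C' * ∑' j : s i, ∫⁻ y in closedBall ((j : N):E) (r j), g y ∂μ := ENNReal.tsum_mul_left
          _ ≤ C' * ∫⁻ y in V ∩ S, g y ∂μ := by
              gcongr
              rw [← lintegral_iUnion]
              · exact lintegral_mono_set (iUnion_subset fun j => hrV _)
              · exact fun j => measurableSet_closedBall
              · intro a b hab
                exact hsd i a.2 b.2 (fun hh => hab (Subtype.ext hh))
          _ ≤ _ := by gcongr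
      calc _ ≤ ∑' i : Fin M, C' * (2⁻¹:ℝ≥0∞)^k := ENNReal.tsum_le_tsum hfam
        _ = _ := by rw [tsum_fintype]; simp [mul_assoc]
  choose ι hι t ht1 ht2 ht3 using main
  have T0 : Tendsto (fun k : ℕ => (2⁻¹:ℝ≥0∞)^k) atTop (𝓝 0) :=
    ENNReal.tendsto_pow_atTop_nhds_zero_of_lt_one (by simp)
  have hle := Measure.hausdorffMeasure_le_liminf_tsum (m:ℝ) (h '' N) _ T0 t
    (Eventually.of_forall ht1) (Eventually.of_forall ht2)
  have T1 : Tendsto (fun k : ℕ => (M:ℝ≥0∞) * C' * (2⁻¹:ℝ≥0∞)^k) atTop (𝓝 0) := by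
    have := ENNReal.Tendsto.const_mul (a := (M:ℝ≥0∞) * C') T0 (Or.inr (by finiteness))
    simpa using this
  refine le_antisymm (hle.trans ?_) zero_le
  rw [← T1.liminf_eq]
  exact liminf_le_liminf (Eventually.of_forall ht3)

lemma lusinN [MeasurableSpace F] [BorelSpace F]
    {φ : ℝ → ℝ} (hφ : NondecPos φ) {t₀ : ℝ} (ht₀ : 0 < t₀) (m : ℕ) (hm : 2 ≤ m)
    (hE : Module.finrank ℝ E = m)
    (h : E → F) (v : E → ℝ) (hv : Measurable v) (C : ℝ≥0∞) (hC : C ≠ ⊤) (S : Set E)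
    (hS : IsOpen S) (hSt : μ S ≠ ⊤)
    (hM : MeanProp μ h (fun x => ENNReal.ofReal (v x)) C S)
    (hh : ContinuousOn h S) (hfin : ∫⁻ y in S, phit φ (v y) ∂μ ≠ ⊤)
    (hJ : ∫⁻ t in Ioi t₀, ENNReal.ofReal ((2 * (t / φ t)) ^ (1 / ((m:ℝ) - 1))) ≠ ⊤)
    (N : Set E) (hN : N ⊆ S) (hN0 : μ N = 0) : μH[(m:ℝ)] (h '' N) = 0 := by
  obtain ⟨C', hC', hd⟩ := diam_bound μ hφ ht₀ m hm hE h v hv C hC S hM hh hfin hJ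
  refine null_of_diam μ m h S hS hh _ ?_ C' hC' hd N hN hN0
  have hphm : Measurable fun y => phit φ (v y) := (phit_mono hφ).measurable.comp hv
  rw [lintegral_add_left hphm, setLIntegral_const, one_mul]
  exact ENNReal.add_ne_top.2 ⟨hfin, hSt⟩
end lusin

section moll
open scoped Convolution
open ContinuousLinearMap
variable {E F : Type*} [NormedAddCommGroup E] [NormedSpace ℝ E] [FiniteDimensional ℝ E]
  [MeasurableSpace E] [BorelSpace E] (μ : Measure E) [μ.IsAddHaarMeasure]
  [NormedAddCommGroup F] [NormedSpace ℝ F] [CompleteSpace F]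

lemma young_l1 (b : ContDiffBump (0:E)) (e : E → F) (he : Integrable e μ) :
    ∫⁻ x, ‖(b.normed μ ⋆[lsmul ℝ ℝ, μ] e : E → F) x‖ₑ ∂μ ≤ ∫⁻ x, ‖e x‖ₑ ∂μ := by
  have hbi : Integrable (b.normed μ) μ := b.integrable_normed
  have hm := (hbi.convolution_integrand (lsmul ℝ ℝ) he).aestronglyMeasurable.enorm
  calc _ ≤ ∫⁻ x, ∫⁻ t, ‖lsmul ℝ ℝ (b.normed μ t) (e (x - t))‖ₑ ∂μ ∂μ := by
        refine lintegral_mono fun x => ?_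
        rw [convolution_def]
        exact enorm_integral_le_lintegral_enorm _
    _ = ∫⁻ t, ∫⁻ x, ‖lsmul ℝ ℝ (b.normed μ t) (e (x - t))‖ₑ ∂μ ∂μ :=
        lintegral_lintegral_swap hm
    _ = ∫⁻ t, ‖b.normed μ t‖ₑ * ∫⁻ x, ‖e x‖ₑ ∂μ ∂μ := by
        refine lintegral_congr fun t => ?_
        simp only [lsmul_apply, enorm_smul]
        rw [lintegral_const_mul' _ _ (by finiteness),
          lintegral_sub_right_eq_self (fun x => ‖e x‖ₑ) t]
    _ = (∫⁻ t, ‖b.normed μ t‖ₑ ∂μ) * ∫⁻ x, ‖e x‖ₑ ∂μ := by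
        rw [lintegral_mul_const' _ _ he.2.ne]
    _ = _ := by
        have : ∫⁻ t, ‖b.normed μ t‖ₑ ∂μ = 1 := by
          calc _ = ∫⁻ t, ENNReal.ofReal (b.normed μ t) ∂μ := by
                refine lintegral_congr fun t => ?_
                rw [Real.enorm_eq_ofReal (b.nonneg_normed t)]
            _ = 1 := by
                rw [← ofReal_integral_eq_lintegral_ofReal hbi
                  (Eventually.of_forall fun t => b.nonneg_normed t), b.integral_normed]
                simp
        rw [this, one_mul]

lemma moll_l1 (g : E → F) (hg : Integrable g μ) (S : Set E) (hSm : MeasurableSet S)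
    (hS : μ S ≠ ⊤) (ε : ℝ≥0∞) (hε : ε ≠ 0) :
    ∃ δ : ℝ, 0 < δ ∧ ∀ b : ContDiffBump (0:E), b.rOut < δ →
      ∫⁻ x in S, ‖(b.normed μ ⋆[lsmul ℝ ℝ, μ] g : E → F) x - g x‖ₑ ∂μ ≤ ε := by
  have hε3 : ε / 3 ≠ 0 := (ENNReal.div_pos hε (by norm_num)).ne'
  obtain ⟨c, hcs, hgc, hcc, hci⟩ := hg.exists_hasCompactSupport_lintegral_sub_le hε3
  obtain ⟨t, ht0, ht⟩ := ENNReal.exists_nnreal_pos_mul_lt hS hε3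
  have huc : UniformContinuous c := hcs.uniformContinuous_of_continuous hcc
  obtain ⟨δ, hδ, hδc⟩ := Metric.uniformContinuous_iff.1 huc t (by exact_mod_cast ht0)
  refine ⟨δ, hδ, fun b hb => ?_⟩
  have hbs : HasCompactSupport (b.normed μ) := b.hasCompactSupport_normed
  have hbc : Continuous (b.normed μ) := b.continuous_normed
  have hei : Integrable (fun x => g x - c x) μ := hg.sub hci
  have hsplit : ∀ x, (b.normed μ ⋆[lsmul ℝ ℝ, μ] g : E → F) x =
      (b.normed μ ⋆[lsmul ℝ ℝ, μ] (fun x => g x - c x) : E → F) x +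
      (b.normed μ ⋆[lsmul ℝ ℝ, μ] c : E → F) x := by
    intro x
    have h1 := hbs.convolutionExists_left (lsmul ℝ ℝ) hbc hei.locallyIntegrable x
    have h2 := hbs.convolutionExists_left (lsmul ℝ ℝ) hbc hci.locallyIntegrable x
    rw [← ConvolutionExistsAt.distrib_add h1 h2]
    congr 1
    ext y; simp
  have hm1 : AEStronglyMeasurable (b.normed μ ⋆[lsmul ℝ ℝ, μ] (fun x => g x - c x) : E → F) μ :=
    (b.integrable_normed.integrable_convolution (lsmul ℝ ℝ) hei).aestronglyMeasurable
  calc _ ≤ ∫⁻ x in S, (‖(b.normed μ ⋆[lsmul ℝ ℝ, μ] (fun x => g x - c x) : E → F) x‖ₑ +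
        (‖g x - c x‖ₑ + (t:ℝ≥0∞))) ∂μ := by
        refine lintegral_mono fun x => ?_
        have hd : dist ((b.normed μ ⋆[lsmul ℝ ℝ, μ] c : E → F) x) (c x) ≤ t :=
          b.dist_normed_convolution_le hcc.aestronglyMeasurable
            (fun y hy => (hδc (lt_trans hy hb)).le)
        have hd' : ‖(b.normed μ ⋆[lsmul ℝ ℝ, μ] c : E → F) x - c x‖ₑ ≤ t := by
          rw [← edist_eq_enorm_sub, edist_nndist, ENNReal.coe_le_coe]; exact hd
        rw [hsplit]
        calc _ = ‖(b.normed μ ⋆[lsmul ℝ ℝ, μ] (fun x => g x - c x) : E → F) x +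
                (-(g x - c x) + ((b.normed μ ⋆[lsmul ℝ ℝ, μ] c : E → F) x - c x))‖ₑ := by
              congr 1; abel
          _ ≤ _ := by
              refine (enorm_add_le _ _).trans (add_le_add le_rfl ?_)
              refine (enorm_add_le _ _).trans (add_le_add ?_ hd')
              rw [enorm_neg]
    _ = (∫⁻ x in S, ‖(b.normed μ ⋆[lsmul ℝ ℝ, μ] (fun x => g x - c x) : E → F) x‖ₑ ∂μ) +
        ((∫⁻ x in S, ‖g x - c x‖ₑ ∂μ) + t * μ S) := by
        rw [lintegral_add_left' hm1.enorm.restrict,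
          lintegral_add_left' hei.aestronglyMeasurable.enorm.restrict, setLIntegral_const]
    _ ≤ ε/3 + (ε/3 + ε/3) := by
        gcongr
        · exact (setLIntegral_le_lintegral _ _).trans ((young_l1 μ b _ hei).trans hgc)
        · exact (setLIntegral_le_lintegral _ _).trans hgc
    _ = ε := by rw [← add_assoc]; exact ENNReal.add_thirds ε

end moll

section moll2
open scoped Convolution
open ContinuousLinearMap
variable {E F : Type*} [NormedAddCommGroup E] [NormedSpace ℝ E] [FiniteDimensional ℝ E]
  [MeasurableSpace E] [BorelSpace E] (μ : Measure E) [μ.IsAddHaarMeasure]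
  [NormedAddCommGroup F] [NormedSpace ℝ F] [CompleteSpace F]

/-- indicator, normed group version -/
noncomputable def indz {E G : Type*} [NormedAddCommGroup G] (B : Set E) (f : E → G) : E → G := B.indicator f

lemma indz_mem {E G : Type*} [NormedAddCommGroup G] {B : Set E} {x : E} (hx : x ∈ B) (f : E → G) :
    indz B f x = f x := indicator_of_mem hx f

lemma indz_not_mem {E G : Type*} [NormedAddCommGroup G] {B : Set E} {x : E} (hx : x ∉ B)
    (f : E → G) : indz B f x = 0 := indicator_of_notMem hx f

lemma indz_int {G : Type*} [NormedAddCommGroup G] {B : Set E} (hB : MeasurableSet B) {f : E → G}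
    (hf : IntegrableOn f B μ) : Integrable (indz B f) μ := hf.integrable_indicator hB

/-- weak derivative, generic version -/
def WeakD (D : Set E) (f : E → F) (Df : E → E →L[ℝ] F) : Prop :=
  LocallyIntegrableOn f D μ ∧ LocallyIntegrableOn Df D μ ∧
  ∀ ψ : E → ℝ, ContDiff ℝ (⊤ : ℕ∞) ψ → HasCompactSupport ψ → tsupport ψ ⊆ D →
    ∀ v : E, ∫ x, ψ x • Df x v ∂μ = - ∫ x, fderiv ℝ ψ x v • f x ∂μ

lemma moll_fderiv {D : Set E} {f : E → F}
    {Df : E → E →L[ℝ] F} (hw : WeakD μ D f Df) (B : Set E)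
    (hB : IsCompact B) (hBD : B ⊆ D) (b : ContDiffBump (0:E)) (x : E)
    (hx : closedBall x b.rOut ⊆ B) :
    HasFDerivAt (b.normed μ ⋆[lsmul ℝ ℝ, μ] (indz B f) : E → F)
      ((b.normed μ ⋆[lsmul ℝ ℝ, μ] (indz B Df) : E → E →L[ℝ] F) x) x := by
  obtain ⟨hf1, hf2, hf3⟩ := hw
  have hfi : Integrable (indz B f) μ :=
    indz_int μ hB.measurableSet (hf1.integrableOn_compact_subset hBD hB)
  have hDi : Integrable (indz B Df) μ :=
    indz_int μ hB.measurableSet (hf2.integrableOn_compact_subset hBD hB)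
  have hbs : HasCompactSupport (b.normed μ) := b.hasCompactSupport_normed
  have hbd : ContDiff ℝ (⊤:ℕ∞) (b.normed μ) := b.contDiff_normed
  have hb1 : ContDiff ℝ 1 (b.normed μ) := b.contDiff_normed
  have h1 := hbs.hasFDerivAt_convolution_left (lsmul ℝ ℝ) hb1 hfi.locallyIntegrable x
  refine h1.congr_fderiv ?_
  ext1 v
  have hzero : ∀ y, y ∉ B → b.normed μ (x - y) = 0 := by
    intro y hy
    by_contra hne
    have : x - y ∈ Function.support (b.normed μ) := hne
    rw [b.support_normed_eq, mem_ball_zero_iff] at this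
    exact hy (hx (by rw [mem_closedBall, dist_comm, dist_eq_norm]; exact this.le))
  have hdzero : ∀ y, y ∉ B → fderiv ℝ (b.normed μ) (x - y) = 0 := by
    intro y hy
    by_contra hne
    have h2 : x - y ∈ tsupport (b.normed μ) :=
      support_fderiv_subset ℝ hne
    rw [b.tsupport_normed_eq, mem_closedBall_zero_iff] at h2
    exact hy (hx (by rw [mem_closedBall, dist_comm, dist_eq_norm]; exact h2))
  set ψ : E → ℝ := fun y => b.normed μ (x - y) with hψ
  have hψs : Function.support ψ ⊆ closedBall x b.rOut := by
    intro y hy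
    have : x - y ∈ Function.support (b.normed μ) := hy
    rw [b.support_normed_eq, mem_ball_zero_iff] at this
    rw [mem_closedBall, dist_comm, dist_eq_norm]; exact this.le
  have hψt : tsupport ψ ⊆ closedBall x b.rOut := closure_minimal hψs isClosed_closedBall
  have hψc : ContDiff ℝ (⊤:ℕ∞) ψ := hbd.comp (contDiff_const.sub contDiff_id)
  have hψd : ∀ y, fderiv ℝ ψ y v = - fderiv ℝ (b.normed μ) (x - y) v := by
    intro y
    have h3 : HasFDerivAt ψ ((fderiv ℝ (b.normed μ) (x - y)).comp
        (-(ContinuousLinearMap.id ℝ E))) y := by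
      have h4 : HasFDerivAt (fun y : E => x - y) (-(ContinuousLinearMap.id ℝ E)) y :=
        (hasFDerivAt_id y).const_sub x
      exact ((hb1.differentiable one_ne_zero (x - y)).hasFDerivAt).comp y h4
    rw [h3.fderiv]; simp
  have key := hf3 ψ hψc (HasCompactSupport.of_support_subset_isCompact
    (isCompact_closedBall x b.rOut) hψs) (hψt.trans (hx.trans hBD)) v
  have hL : ((fderiv ℝ (b.normed μ) ⋆[(lsmul ℝ ℝ).precompL E, μ]
      (indz B f) : E → E →L[ℝ] F) x) v =
      - ∫ y, fderiv ℝ ψ y v • f y ∂μ := by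
    rw [convolution_eq_swap, ContinuousLinearMap.integral_apply]
    · rw [← integral_neg]
      refine integral_congr_ae (Eventually.of_forall fun y => ?_)
      dsimp only
      rw [hψd]
      by_cases hy : y ∈ B
      · rw [indz_mem hy]
        simp [ContinuousLinearMap.precompL_apply]
      · rw [indz_not_mem hy, hdzero y hy]; simp
    · have := (hbs.fderiv (𝕜 := ℝ)).convolutionExists_left ((lsmul ℝ ℝ).precompL E)
        (hb1.continuous_fderiv one_ne_zero) hfi.locallyIntegrable x
      exact this.integrable_swap
  have hR : ((b.normed μ ⋆[lsmul ℝ ℝ, μ] (indz B Df) :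
      E → E →L[ℝ] F) x) v = ∫ y, ψ y • Df y v ∂μ := by
    rw [convolution_eq_swap, ContinuousLinearMap.integral_apply]
    · refine integral_congr_ae (Eventually.of_forall fun y => ?_)
      dsimp only
      by_cases hy : y ∈ B
      · rw [indz_mem hy]; simp [hψ]
      · have := hzero y hy
        simp only [hψ]
        rw [indz_not_mem hy, this]; simp
    · exact (hbs.convolutionExists_left (lsmul ℝ ℝ) hb1.continuous hDi.locallyIntegrable
        x).integrable_swap
  rw [hL, hR, key]

lemma exists_moll {D : Set E} {f : E → F}
    {Df : E → E →L[ℝ] F} (hw : WeakD μ D f Df) (hf : ContinuousOn f D)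
    (x₀ : E) (R R' : ℝ) (hR : R < R') (hD : closedBall x₀ R' ⊆ D) :
    ∃ fk : ℕ → E → F, (∀ k, ContDiff ℝ 1 (fk k)) ∧
      TendstoUniformlyOn fk f atTop (ball x₀ R) ∧
      ∀ k, ∫⁻ x in ball x₀ R, ‖fderiv ℝ (fk k) x - Df x‖ₑ ∂μ ≤ (4⁻¹:ℝ≥0∞)^k := by
  set B := closedBall x₀ R' with hBdef
  have hB : IsCompact B := isCompact_closedBall _ _
  have hfi : Integrable (indz B f) μ :=
    indz_int μ hB.measurableSet (hw.1.integrableOn_compact_subset hD hB)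
  have hDi : Integrable (indz B Df) μ :=
    indz_int μ hB.measurableSet (hw.2.1.integrableOn_compact_subset hD hB)
  have huc : UniformContinuousOn f B := hB.uniformContinuousOn_of_continuous (hf.mono hD)
  have main : ∀ k : ℕ, ∃ g : E → F, ContDiff ℝ 1 g ∧
      (∀ x ∈ ball x₀ R, dist (f x) (g x) ≤ (2⁻¹:ℝ)^k) ∧
      ∫⁻ x in ball x₀ R, ‖fderiv ℝ g x - Df x‖ₑ ∂μ ≤ (4⁻¹:ℝ≥0∞)^k := by
    intro k
    obtain ⟨δ1, hδ1, h1⟩ := moll_l1 μ (indz B Df) hDi (ball x₀ R) measurableSet_ball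
      measure_ball_lt_top.ne ((4⁻¹:ℝ≥0∞)^k) (pow_ne_zero _ (by simp))
    obtain ⟨δ2, hδ2, h2⟩ := Metric.uniformContinuousOn_iff.1 huc ((2⁻¹:ℝ)^k) (by positivity)
    obtain ⟨δ, hδ, hδ'⟩ := exists_between (lt_min hδ1 (lt_min hδ2 (sub_pos.2 hR)))
    simp only [lt_min_iff] at hδ'
    let b : ContDiffBump (0:E) := ⟨δ/2, δ, by linarith, by linarith⟩
    have hbB : ∀ x ∈ ball x₀ R, closedBall x b.rOut ⊆ B := by
      intro x hx
      refine closedBall_subset_closedBall' ?_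
      have : dist x x₀ < R := hx
      have hb : b.rOut = δ := rfl
      linarith
    refine ⟨b.normed μ ⋆[lsmul ℝ ℝ, μ] (indz B f), ?_, ?_, ?_⟩
    · exact b.hasCompactSupport_normed.contDiff_convolution_left (n := 1) (lsmul ℝ ℝ) b.contDiff_normed
        hfi.locallyIntegrable
    · intro x hx
      have hxB : x ∈ B := hbB x hx (mem_closedBall_self b.rOut_pos.le)
      have := b.dist_normed_convolution_le (μ := μ) (g := indz B f) (x₀ := x)
        (ε := (2⁻¹:ℝ)^k) hfi.aestronglyMeasurable ?_
      · rwa [indz_mem hxB, dist_comm] at this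
      · intro y hy
        have hyB := hbB x hx (ball_subset_closedBall hy)
        rw [indz_mem hxB, indz_mem hyB]
        exact (h2 y hyB x hxB (lt_trans hy hδ'.2.1)).le
    · refine le_trans (le_of_eq ?_) (h1 b hδ'.1)
      refine setLIntegral_congr_fun measurableSet_ball fun x hx => ?_
      have hxB : x ∈ B := hbB x hx (mem_closedBall_self b.rOut_pos.le)
      rw [(moll_fderiv μ hw B hB hD b x (hbB x hx)).fderiv, indz_mem hxB]
  choose fk h1 h2 h3 using main
  refine ⟨fk, h1, ?_, h3⟩
  rw [Metric.tendstoUniformlyOn_iff]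
  intro ε hε
  have T := tendsto_pow_atTop_nhds_zero_of_lt_one (r := (2⁻¹:ℝ)) (by norm_num) (by norm_num)
  filter_upwards [T.eventually_lt_const hε] with k hk x hx
  exact (h2 k x hx).trans_lt hk
end moll2

section nice

variable {E F : Type*} [NormedAddCommGroup E] [NormedSpace ℝ E] [FiniteDimensional ℝ E]
  [MeasurableSpace E] [BorelSpace E] (μ : Measure E) [μ.IsAddHaarMeasure]
  [NormedAddCommGroup F] [NormedSpace ℝ F] [CompleteSpace F]

lemma pt_bound [Nontrivial E] (g : E → F) (hg : ContDiff ℝ 1 g) (c z : E) (ρ : ℝ≥0) (hρ : 0 < ρ)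
    (hz : z ∈ closedBall c (ρ:ℝ)) (B : ℝ≥0∞)
    (hB : ∀ i : ℕ, ∫⁻ x in closedBall z (2 * ρ * (2⁻¹)^i : ℝ), ‖fderiv ℝ g x‖ₑ ∂μ ≤
      B * μ (closedBall z (2 * ρ * (2⁻¹)^i : ℝ))) :
    edist (⨍ y in closedBall c (ρ:ℝ), g y ∂μ) (g z) ≤ 4 * 8 ^ (Module.finrank ℝ E) * B * ρ := by
  set m := Module.finrank ℝ E with hm
  set Q := closedBall c (ρ:ℝ) with hQ
  have hd : ∀ x ∈ Q, ∀ y ∈ Q, edist x y ≤ ((2 * ρ : ℝ≥0) : ℝ≥0∞) := by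
    intro x hx y hy
    rw [edist_nndist, ENNReal.coe_le_coe, ← NNReal.coe_le_coe, coe_nndist]
    have h1 := dist_triangle_right x y c
    rw [hQ, mem_closedBall] at hx hy
    push_cast; linarith
  have h0 : μ Q ≠ 0 := (measure_closedBall_pos μ c (by exact_mod_cast hρ)).ne'
  have hT : μ Q ≠ ⊤ := measure_closedBall_lt_top.ne
  have hcb := chain_bound μ g _ _ univ (MeanProp.of_contDiff μ g hg)
    (hg.continuous.continuousOn) Q (isCompact_closedBall c _) (convex_closedBall c _)
    (subset_univ _) h0 (2 * ρ) hd z hz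
  refine hcb.trans ?_
  have key : ∀ j : ℕ, (2:ℝ≥0∞) ^ m * (((2⁻¹)^j * (2*ρ) : ℝ≥0) : ℝ≥0∞) *
      (∫⁻ y in Qh z Q j, ‖fderiv ℝ g y‖ₑ ∂μ) / μ (Qh z Q (j+1)) ≤ 
      (2⁻¹ : ℝ≥0∞)^j * (2 * 8^m * B * ρ) := by
    intro j
    have hQh1 := Qh_measure μ z Q (j+1)
    have hQs : Qh z Q j ⊆ closedBall z (2 * ρ * (2⁻¹)^j : ℝ) := by
      intro y hy
      have h2 := Qh_diam z (2*ρ) hd j y hy z (Qh_mem z hz j)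
      rw [edist_nndist, ENNReal.coe_le_coe, ← NNReal.coe_le_coe, coe_nndist] at h2
      rw [mem_closedBall]; push_cast at h2; linarith
    have hvol : μ (closedBall z (2 * ρ * (2⁻¹)^j : ℝ)) = (4:ℝ≥0∞)^m * μ (Qh z Q (j+1)) := by
      rw [hQh1, hQ, Measure.addHaar_closedBall μ z (by positivity), 
        Measure.addHaar_closedBall μ c (by positivity), ← hm,
        ← mul_assoc, ← mul_assoc]
      congr 1
      rw [ENNReal.ofReal_pow (by positivity), ENNReal.ofReal_pow (by positivity), ← mul_pow, ← mul_pow]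
      congr 1
      rw [ENNReal.ofReal_mul (by positivity), ENNReal.ofReal_mul (by positivity), 
        ENNReal.ofReal_pow (by positivity), ENNReal.ofReal_inv_of_pos (by norm_num)]
      simp only [ENNReal.ofReal_ofNat, ENNReal.ofReal_coe_nnreal]
      rw [pow_succ]
      have : (4:ℝ≥0∞) * 2⁻¹ = 2 := by
        rw [show (4:ℝ≥0∞) = 2*2 by norm_num, mul_assoc, ENNReal.mul_inv_cancel (by simp) (by simp), mul_one]
      calc (2:ℝ≥0∞) * ρ * 2⁻¹^j = (4 * 2⁻¹) * ρ * 2⁻¹^j := by rw [this]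
        _ = _ := by ring
    have hQ0 : μ (Qh z Q (j+1)) ≠ 0 := by
      rw [hQh1]; refine mul_ne_zero ?_ h0
      simp
    have hQT : μ (Qh z Q (j+1)) ≠ ⊤ := by
      rw [hQh1]; refine ENNReal.mul_ne_top ?_ hT
      simp
    refine ENNReal.div_le_of_le_mul ?_
    calc _ ≤ (2:ℝ≥0∞) ^ m * (((2⁻¹)^j * (2*ρ) : ℝ≥0) : ℝ≥0∞) * (B * ((4:ℝ≥0∞)^m * μ (Qh z Q (j+1)))) := by
          gcongr
          rw [← hvol]
          exact (lintegral_mono_set hQs).trans (hB j)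
      _ = _ := by
          push_cast
          rw [show (8:ℝ≥0∞) = 2 * 4 by norm_num, mul_pow]
          ring
  refine (ENNReal.tsum_le_tsum key).trans ?_
  rw [ENNReal.tsum_mul_right, ENNReal.tsum_geometric]
  have : (1 - 2⁻¹ : ℝ≥0∞)⁻¹ = 2 := by simp
  rw [this]
  refine le_of_eq ?_
  ring

lemma two_pt [Nontrivial E] (g : E → F) (hg : ContDiff ℝ 1 g) (x y : E) (B : ℝ≥0∞) (K : ℕ)
    (hxy : dist x y ≤ (2⁻¹:ℝ)^(K+1))
    (hx : ∀ j ≥ K, ∫⁻ u in closedBall x ((2⁻¹:ℝ)^j), ‖fderiv ℝ g u‖ₑ ∂μ ≤ B * μ (closedBall x ((2⁻¹:ℝ)^j)))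
    (hy : ∀ j ≥ K, ∫⁻ u in closedBall y ((2⁻¹:ℝ)^j), ‖fderiv ℝ g u‖ₑ ∂μ ≤ B * μ (closedBall y ((2⁻¹:ℝ)^j))) :
    edist (g x) (g y) ≤ 16 * 8 ^ (Module.finrank ℝ E) * B * edist x y := by
  rcases eq_or_ne x y with rfl | hne
  · simp
  have hpos : 0 < dist x y := dist_pos.2 hne
  obtain ⟨j, hj1, hj2⟩ := exists_nat_pow_near_of_lt_one hpos
    (hxy.trans (pow_le_one₀ (by norm_num) (by norm_num))) (y := (2⁻¹:ℝ)) (by norm_num) (by norm_num)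
  have hjK : K + 1 ≤ j := by
    by_contra! h
    have : (2⁻¹:ℝ)^(K+1) ≤ 2⁻¹^(j+1) := pow_le_pow_of_le_one (by norm_num) (by norm_num) (by omega)
    linarith
  obtain ⟨i, rfl⟩ : ∃ i, j = i + 1 := ⟨j-1, by omega⟩
  have e : ∀ l : ℕ, (2 * ((2⁻¹:ℝ≥0)^(i+1) : ℝ≥0) * (2⁻¹)^l : ℝ) = (2⁻¹)^(i+l) := by
    intro l; push_cast; rw [pow_succ, pow_add]; ring
  have h1 := pt_bound μ g hg x x ((2⁻¹)^(i+1)) (by positivity) (by simp) B (by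
    intro l; rw [e]; exact hx _ (by omega))
  have h2 := pt_bound μ g hg x y ((2⁻¹)^(i+1)) (by positivity) (by
    rw [mem_closedBall, dist_comm]; push_cast; exact hj2) B (by
    intro l; rw [e]; exact hy _ (by omega))
  have h3 : (((2⁻¹)^(i+1) : ℝ≥0) : ℝ≥0∞) ≤ 2 * edist x y := by
    rw [edist_nndist, ← ENNReal.coe_ofNat, ← ENNReal.coe_mul, ENNReal.coe_le_coe, ← NNReal.coe_le_coe]
    push_cast
    rw [pow_succ] at hj1
    linarith
  calc edist (g x) (g y) ≤ _ := edist_triangle_left _ _ (⨍ u in closedBall x (((2⁻¹)^(i+1) : ℝ≥0) : ℝ), g u ∂μ)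
    _ ≤ _ := add_le_add h1 h2
    _ ≤ 4 * 8 ^ (Module.finrank ℝ E) * B * (2 * edist x y) + 4 * 8 ^ (Module.finrank ℝ E) * B * (2 * edist x y) := by gcongr
    _ = _ := by ring

end nice

section nice2

variable {E F : Type*} [NormedAddCommGroup E] [NormedSpace ℝ E] [FiniteDimensional ℝ E]
  [MeasurableSpace E] [BorelSpace E] (μ : Measure E) [μ.IsAddHaarMeasure]
  [NormedAddCommGroup F] [NormedSpace ℝ F] [CompleteSpace F]

/-- the good sets -/
def goodSet (G : E → ℝ≥0∞) (x₀ : E) (R : ℝ) (K : ℕ) : Set E :=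
  {x | dist x x₀ + (2⁻¹:ℝ)^K < R ∧ G x < ⊤ ∧
    ∀ j ≥ K, ∫⁻ u in closedBall x ((2⁻¹:ℝ)^j), G u ∂μ ≤ K * μ (closedBall x ((2⁻¹:ℝ)^j))}

lemma goodSet_meas (G : E → ℝ≥0∞) (hG : Measurable G) (x₀ : E) (R : ℝ) (K : ℕ) :
    MeasurableSet (goodSet μ G x₀ R K) := by
  have h1 : MeasurableSet {x : E | dist x x₀ + (2⁻¹:ℝ)^K < R} :=
    (isOpen_lt (by fun_prop) (by fun_prop)).measurableSet
  have h2 : MeasurableSet {x : E | G x < ⊤} := measurableSet_lt hG measurable_const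
  have h3 : ∀ j, MeasurableSet {x : E | ∫⁻ u in closedBall x ((2⁻¹:ℝ)^j), G u ∂μ ≤ K * μ (closedBall x ((2⁻¹:ℝ)^j))} := by
    intro j
    refine measurableSet_le ?_ ?_
    · have : ∀ x : E, ∫⁻ u in closedBall x ((2⁻¹:ℝ)^j), G u ∂μ = 
        ∫⁻ u, ({q : E × E | dist q.2 q.1 ≤ (2⁻¹:ℝ)^j}.indicator (fun q => G q.2)) (x,u) ∂μ := by
        intro x
        rw [← lintegral_indicator measurableSet_closedBall]
        rfl
      simp_rw [this]
      refine Measurable.lintegral_prod_right' ?_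
      refine (hG.comp measurable_snd).indicator ?_
      exact (isClosed_le (by fun_prop) (by fun_prop)).measurableSet
    · have : ∀ x : E, μ (closedBall x ((2⁻¹:ℝ)^j)) = μ (closedBall 0 ((2⁻¹:ℝ)^j)) := fun x =>
        Measure.addHaar_closedBall_center μ x _
      simp_rw [this]
      exact measurable_const
  have : goodSet μ G x₀ R K = {x : E | dist x x₀ + (2⁻¹:ℝ)^K < R} ∩ ({x : E | G x < ⊤} ∩ 
    ⋂ j, ⋂ (_ : j ≥ K), {x : E | ∫⁻ u in closedBall x ((2⁻¹:ℝ)^j), G u ∂μ ≤ K * μ (closedBall x ((2⁻¹:ℝ)^j))}) := by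
    ext x
    simp [goodSet]
  rw [this]
  exact h1.inter (h2.inter (MeasurableSet.iInter fun j => MeasurableSet.iInter fun _ => h3 j))

lemma goodSet_full (G : E → ℝ≥0∞) (hG : Measurable G) (hGi : ∫⁻ x, G x ∂μ ≠ ⊤) (x₀ : E) (R : ℝ) :
    μ (ball x₀ R \ ⋃ K, goodSet μ G x₀ R K) = 0 := by
  have h1 := (Besicovitch.vitaliFamily μ).ae_tendsto_lintegral_div hG.aemeasurable hGi
  have h2 := ae_lt_top hG hGi
  have : ∀ᵐ x ∂μ, x ∈ ball x₀ R → x ∈ ⋃ K, goodSet μ G x₀ R K := by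
    filter_upwards [h1, h2] with x hx1 hx2 hx
    have ht : Tendsto (fun j : ℕ => (2⁻¹:ℝ)^j) atTop (𝓝[>] 0) :=
      tendsto_pow_atTop_nhdsWithin_zero_of_lt_one (by norm_num) (by norm_num)
    have hx3 := (hx1.comp (Besicovitch.tendsto_filterAt μ x)).comp ht
    obtain ⟨M, hM⟩ := ENNReal.exists_nat_gt hx2.ne
    have ev1 := hx3.eventually (gt_mem_nhds hM)
    have ev2 : ∀ᶠ j : ℕ in atTop, dist x x₀ + (2⁻¹:ℝ)^j < R := by
      have : Tendsto (fun j : ℕ => dist x x₀ + (2⁻¹:ℝ)^j) atTop (𝓝 (dist x x₀ + 0)) :=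
        (tendsto_nhds_of_tendsto_nhdsWithin ht).const_add _
      refine this.eventually (gt_mem_nhds ?_)
      rw [add_zero]; exact hx
    obtain ⟨K0, hK0⟩ := eventually_atTop.1 (ev1.and ev2)
    refine mem_iUnion.2 ⟨max K0 M, (hK0 _ (le_max_left _ _)).2, hx2, fun j hj => ?_⟩
    have hj1 := (hK0 j (le_trans (le_max_left _ _) hj)).1.le
    simp only [Function.comp] at hj1
    rw [ENNReal.div_le_iff_le_mul (Or.inl (measure_closedBall_pos μ x (by positivity)).ne') 
      (Or.inl measure_closedBall_lt_top.ne)] at hj1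
    refine hj1.trans ?_
    gcongr
    exact le_max_right _ _
  rw [ae_iff] at this
  convert this using 2
  ext x; simp

lemma nice_decomp [Nontrivial E] (f : E → F) (D : E → E →L[ℝ] F) (hD : StronglyMeasurable D) (x₀ : E) (R : ℝ)
    (fk : ℕ → E → F) (hfk : ∀ k, ContDiff ℝ 1 (fk k))
    (hu : TendstoUniformlyOn fk f atTop (ball x₀ R))
    (he : ∀ k, ∫⁻ x in ball x₀ R, ‖fderiv ℝ (fk k) x - D x‖ₑ ∂μ ≤ (4⁻¹ : ℝ≥0∞)^k) :
    ∃ P : ℕ → Set E, (∀ K, MeasurableSet (P K)) ∧ (∀ K, P K ⊆ ball x₀ R) ∧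
      Pairwise (Function.onFun Disjoint P) ∧
      (∀ K, ∀ x ∈ P K, HasFDerivWithinAt f (D x) (P K) x) ∧
      μ (ball x₀ R \ ⋃ K, P K) = 0 := by
  set m := Module.finrank ℝ E
  set e : ℕ → E → ℝ≥0∞ := fun k x => ‖fderiv ℝ (fk k) x - D x‖ₑ with hedef
  have hem : ∀ k, Measurable (e k) := fun k => 
    ((((hfk k).continuous_fderiv one_ne_zero).stronglyMeasurable).sub hD).enorm
  set G0 : E → ℝ≥0∞ := fun x => ∑' k, (2:ℝ≥0∞)^k * (e k x + e (k+1) x) with hG0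
  have hG0m : Measurable G0 := by
    refine Measurable.ennreal_tsum fun k => ?_
    exact ((hem k).add (hem (k+1))).const_mul _
  set G : E → ℝ≥0∞ := (ball x₀ R).indicator G0 with hG
  have hGm : Measurable G := hG0m.indicator measurableSet_ball
  have h24 : ∀ k : ℕ, (2:ℝ≥0∞)^k * (4⁻¹)^k = (2⁻¹)^k := by
    intro k
    rw [← mul_pow]; congr 1
    rw [show (4:ℝ≥0∞) = 2*2 by norm_num, ENNReal.mul_inv (by simp) (by simp), ← mul_assoc,
      ENNReal.mul_inv_cancel (by simp) (by simp), one_mul]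
  have hGi : ∫⁻ x, G x ∂μ ≠ ⊤ := by
    have hadd : ∀ k, Measurable fun x => e k x + e (k+1) x := fun k => (hem k).add (hem (k+1))
    rw [hG, lintegral_indicator measurableSet_ball]
    simp only [hG0]
    rw [lintegral_tsum fun k => ((hadd k).const_mul _).aemeasurable]
    refine ne_top_of_le_ne_top (b := ∑' k : ℕ, (2⁻¹:ℝ≥0∞)^k * 2) ?_ (ENNReal.tsum_le_tsum fun k => ?_)
    · rw [ENNReal.tsum_mul_right, ENNReal.tsum_geometric]; simp; exact ENNReal.mul_ne_top (by simp) (by simp)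
    · rw [lintegral_const_mul _ (hadd k), lintegral_add_left (hem k)]
      calc _ ≤ (2:ℝ≥0∞)^k * ((4⁻¹)^k + (4⁻¹)^(k+1)) := by
            gcongr
            · exact he k
            · exact he (k+1)
        _ ≤ (2:ℝ≥0∞)^k * ((4⁻¹)^k + (4⁻¹)^k) := by
            gcongr 2 ^ k * (_ + ?_)
            exact pow_le_pow_of_le_one (by simp) (by simp) (Nat.le_succ k)
        _ = _ := by rw [← two_mul, mul_left_comm, h24, mul_comm]
  have hek : ∀ k, ∀ x ∈ ball x₀ R, e k x + e (k+1) x ≤ (2⁻¹)^k * G x := by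
    intro k x hx
    have h1 : (2:ℝ≥0∞)^k * (e k x + e (k+1) x) ≤ G x := by
      rw [hG, indicator_of_mem hx]
      exact ENNReal.le_tsum (f := fun k => (2:ℝ≥0∞)^k * (e k x + e (k+1) x)) k
    calc _ = (2⁻¹)^k * ((2:ℝ≥0∞)^k * (e k x + e (k+1) x)) := by
          rw [← mul_assoc, two_inv_pow_mul, one_mul]
      _ ≤ _ := by gcongr
  have hder : ∀ K, ∀ x ∈ goodSet μ G x₀ R K, HasFDerivWithinAt f (D x) (goodSet μ G x₀ R K) x := by
    intro K x hx
    have hin : ∀ y ∈ goodSet μ G x₀ R K, y ∈ ball x₀ R := by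
      intro y hy
      have := hy.1
      rw [mem_ball]
      have : (0:ℝ) < 2⁻¹^K := by positivity
      linarith
    -- Lipschitz estimate
    have hLip : ∀ k, ∀ y ∈ goodSet μ G x₀ R K, dist x y ≤ (2⁻¹:ℝ)^(K+1) → 
        edist (fk k x - fk k y) (f x - f y) ≤ (32 * 8^m * K) / 2^k * edist x y := by
      intro k y hy hxy
      have hint : ∀ k, ∀ z ∈ goodSet μ G x₀ R K, ∀ j ≥ K, 
          ∫⁻ u in closedBall z ((2⁻¹:ℝ)^j), ‖fderiv ℝ (fun u => fk k u - fk (k+1) u) u‖ₑ ∂μ ≤ 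
            ((2⁻¹)^k * K) * μ (closedBall z ((2⁻¹:ℝ)^j)) := by
        intro k z hz j hj
        have hsub : closedBall z ((2⁻¹:ℝ)^j) ⊆ ball x₀ R := by
          refine closedBall_subset_ball' ?_
          have h1 := hz.1
          have : (2⁻¹:ℝ)^j ≤ 2⁻¹^K := pow_le_pow_of_le_one (by norm_num) (by norm_num) hj
          linarith
        calc _ ≤ ∫⁻ u in closedBall z ((2⁻¹:ℝ)^j), (2⁻¹)^k * G u ∂μ := by
              refine setLIntegral_mono (hGm.const_mul _) fun u hu => ?_
              refine le_trans ?_ (hek k u (hsub hu))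
              rw [fderiv_fun_sub ((hfk k).differentiable one_ne_zero u) ((hfk (k+1)).differentiable one_ne_zero u)]
              have : fderiv ℝ (fk k) u - fderiv ℝ (fk (k+1)) u = (fderiv ℝ (fk k) u - D u) - (fderiv ℝ (fk (k+1)) u - D u) := by abel
              rw [this]
              exact enorm_sub_le
          _ = (2⁻¹)^k * ∫⁻ u in closedBall z ((2⁻¹:ℝ)^j), G u ∂μ := lintegral_const_mul _ hGm
          _ ≤ (2⁻¹)^k * (K * μ (closedBall z ((2⁻¹:ℝ)^j))) := by
              gcongr; exact hz.2.2 j hj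
          _ = _ := by ring
      have hstep : ∀ k, edist (fk k x - fk k y) (fk (k+1) x - fk (k+1) y) ≤ (16 * 8^m * K * edist x y) / 2^k := by
        intro k
        have h1 := two_pt μ (fun u => fk k u - fk (k+1) u) ((hfk k).sub (hfk (k+1))) x y _ K hxy
          (hint k x hx) (hint k y hy)
        have h2 : edist (fk k x - fk k y) (fk (k+1) x - fk (k+1) y) = 
            edist (fk k x - fk (k+1) x) (fk k y - fk (k+1) y) := by
          rw [edist_eq_enorm_sub, edist_eq_enorm_sub]; congr 1; abel
        rw [h2]
        refine h1.trans (le_of_eq ?_)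
        rw [div_eq_mul_inv, ENNReal.inv_pow]
        ring
      have hlim : Tendsto (fun k => fk k x - fk k y) atTop (𝓝 (f x - f y)) :=
        (hu.tendsto_at (hin x hx)).sub (hu.tendsto_at (hin y hy))
      have h3 := edist_le_of_edist_le_geometric_two_of_tendsto _ hstep hlim k
      refine h3.trans (le_of_eq ?_)
      rw [div_eq_mul_inv, div_eq_mul_inv]
      ring
    rw [hasFDerivWithinAt_iff_isLittleO, Asymptotics.isLittleO_iff]
    intro η hη
    have hGx : G x ≠ ⊤ := hx.2.1.ne
    have hten : Tendsto (fun k : ℕ => (2⁻¹:ℝ≥0∞)^k * (32 * 8^m * K + G x)) atTop (𝓝 (0 * (32 * 8^m * K + G x))) := by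
      refine ENNReal.Tendsto.mul_const ?_ (Or.inr ?_)
      · exact ENNReal.tendsto_pow_atTop_nhds_zero_of_lt_one (by simp)
      · refine ENNReal.add_ne_top.2 ⟨ENNReal.mul_ne_top (ENNReal.mul_ne_top (by simp) (by simp)) (by simp), hGx⟩
    rw [zero_mul] at hten
    have hη3 : (0:ℝ≥0∞) < ENNReal.ofReal (η/3) := ENNReal.ofReal_pos.2 (by positivity)
    obtain ⟨k, hk⟩ := (hten.eventually (gt_mem_nhds hη3)).exists
    have hk1 : (32 * 8^m * K : ℝ≥0∞) / 2^k ≤ ENNReal.ofReal (η/3) := by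
      refine le_trans ?_ hk.le
      rw [div_eq_mul_inv, ENNReal.inv_pow, mul_comm]
      gcongr
      exact le_self_add
    have hk2 : ‖fderiv ℝ (fk k) x - D x‖ ≤ η/3 := by
      have : ‖fderiv ℝ (fk k) x - D x‖ₑ ≤ ENNReal.ofReal (η/3) := by
        refine le_trans ?_ hk.le
        calc e k x ≤ _ := le_self_add
          _ ≤ _ := hek k x (hin x hx)
          _ ≤ _ := by gcongr; exact le_add_self
      rw [← ofReal_norm] at this
      exact (ENNReal.ofReal_le_ofReal_iff (by positivity)).1 this
    have hdk := ((hfk k).differentiable one_ne_zero x).hasFDerivAt.hasFDerivWithinAt (s := goodSet μ G x₀ R K)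
    rw [hasFDerivWithinAt_iff_isLittleO, Asymptotics.isLittleO_iff] at hdk
    have ev1 := hdk (show 0 < η/3 by positivity)
    have ev2 : ∀ᶠ y in 𝓝[goodSet μ G x₀ R K] x, dist x y ≤ (2⁻¹:ℝ)^(K+1) := by
      refine nhdsWithin_le_nhds ?_
      filter_upwards [closedBall_mem_nhds x (show (0:ℝ) < 2⁻¹^(K+1) by positivity)] with y hy
      rw [dist_comm]; exact hy
    filter_upwards [ev1, ev2, self_mem_nhdsWithin] with y hy1 hy2 hy3
    have h4 := (hLip k y hy3 hy2).trans (mul_le_mul_left hk1 _)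
    have h5 : ‖(fk k x - fk k y) - (f x - f y)‖ ≤ η/3 * ‖y - x‖ := by
      rw [edist_eq_enorm_sub, edist_eq_enorm_sub, ← ofReal_norm, ← ofReal_norm, ← ENNReal.ofReal_mul (by positivity),
        ENNReal.ofReal_le_ofReal_iff (by positivity)] at h4
      rwa [norm_sub_rev y x]
    have h6 : ‖(fderiv ℝ (fk k) x - D x) (y - x)‖ ≤ η/3 * ‖y - x‖ :=
      ((fderiv ℝ (fk k) x - D x).le_opNorm _).trans (by gcongr)
    have h7 : f y - f x - D x (y - x) = ((fk k x - fk k y) - (f x - f y)) + (fk k y - fk k x - fderiv ℝ (fk k) x (y - x))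
        + (fderiv ℝ (fk k) x - D x) (y - x) := by
      rw [ContinuousLinearMap.sub_apply]; abel
    rw [h7]
    refine (norm_add₃_le).trans ?_
    linarith
  refine ⟨disjointed (goodSet μ G x₀ R), fun K => MeasurableSet.disjointed (goodSet_meas μ G hGm x₀ R) K, fun K => ?_, 
    disjoint_disjointed _, fun K x hx => ?_, ?_⟩
  · refine (disjointed_subset _ K).trans fun y hy => ?_
    have := hy.1
    rw [mem_ball]
    have : (0:ℝ) < 2⁻¹^K := by positivity
    linarith
  · exact (hder K x (disjointed_subset _ K hx)).mono (disjointed_subset _ K)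
  · rw [iUnion_disjointed]
    exact goodSet_full μ G hGm hGi x₀ R

end nice2

section area

variable {E : Type*} [NormedAddCommGroup E] [NormedSpace ℝ E] [FiniteDimensional ℝ E]
  [MeasurableSpace E] [BorelSpace E] (μ : Measure E) [μ.IsAddHaarMeasure]

lemma area_piece (f : E → E) (D : E → E →L[ℝ] E) (hD : Measurable fun x => ‖D x‖ₑ) (s : Set E)
    (hs : MeasurableSet s) (hd : ∀ x ∈ s, HasFDerivWithinAt f (D x) s x) (δ : ℝ≥0) (hδ : δ ≠ 0) :
    ∃ N : Set E, MeasurableSet N ∧ μ N = 0 ∧ ∀ d : ℕ, ∀ A : Set E, MeasurableSet A → A ⊆ s →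
      μH[(d:ℝ)] (f '' (A \ N)) ≤ ∫⁻ x in A, (‖D x‖ₑ + 2 * δ) ^ d ∂μH[(d:ℝ)] := by
  obtain ⟨t, B, ht1, ht2, ht3, ht4, -⟩ := exists_partition_approximatesLinearOn_of_hasFDerivWithinAt f s D hd
    (fun _ => δ) (fun _ => hδ)
  have hN : ∀ n, ∃ N : Set E, MeasurableSet N ∧ μ N = 0 ∧ ∀ x ∈ s ∩ t n, x ∉ N → ‖D x - B n‖₊ ≤ δ := by
    intro n
    have h1 := (ht4 n).norm_fderiv_sub_le μ (hs.inter (ht2 n)) D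
      (fun x hx => (hd x hx.1).mono inter_subset_left)
    rw [ae_restrict_iff' (hs.inter (ht2 n)), ae_iff] at h1
    refine ⟨toMeasurable μ _, measurableSet_toMeasurable _ _, by rw [measure_toMeasurable]; exact h1, ?_⟩
    intro x hx hxN
    by_contra hcon
    refine hxN (subset_toMeasurable _ _ ?_)
    simp only [mem_setOf_eq, Classical.not_imp]
    exact ⟨hx, hcon⟩
  choose N hN1 hN2 hN3 using hN
  refine ⟨⋃ n, N n, MeasurableSet.iUnion hN1, measure_iUnion_null hN2, fun d A hA hAs => ?_⟩
  have hcov : f '' (A \ ⋃ n, N n) ⊆ ⋃ n, f '' ((A ∩ t n) \ N n) := by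
    rintro _ ⟨x, ⟨hxA, hxN⟩, rfl⟩
    obtain ⟨n, hn⟩ := mem_iUnion.1 (ht3 (hAs hxA))
    refine mem_iUnion.2 ⟨n, x, ⟨⟨hxA, hn⟩, fun h => hxN (mem_iUnion.2 ⟨n, h⟩)⟩, rfl⟩
  have hmeas : ∀ n, MeasurableSet ((A ∩ t n) \ N n) := fun n => (hA.inter (ht2 n)).diff (hN1 n)
  calc μH[(d:ℝ)] (f '' (A \ ⋃ n, N n)) ≤ ∑' n, μH[(d:ℝ)] (f '' ((A ∩ t n) \ N n)) :=
        (measure_mono hcov).trans (measure_iUnion_le _)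
    _ ≤ ∑' n, ∫⁻ x in (A ∩ t n) \ N n, (‖D x‖ₑ + 2 * δ) ^ d ∂μH[(d:ℝ)] := by
        refine ENNReal.tsum_le_tsum fun n => ?_
        have hsub : (A ∩ t n) \ N n ⊆ s ∩ t n := fun x hx => ⟨hAs hx.1.1, hx.1.2⟩
        have hl : LipschitzOnWith (‖B n‖₊ + δ) f ((A ∩ t n) \ N n) :=
          (lipschitzOnWith_iff_restrict.2 (ht4 n).lipschitz).mono hsub
        refine (hl.hausdorffMeasure_image_le (Nat.cast_nonneg d)).trans ?_
        rw [← setLIntegral_const, ENNReal.rpow_natCast]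
        refine setLIntegral_mono ((hD.add_const _).pow_const _) fun x hx => ?_
        gcongr
        have h1 := hN3 n x (hsub hx) hx.2
        have h2 : ‖B n‖₊ ≤ ‖D x‖₊ + δ := by
          calc ‖B n‖₊ = ‖D x - (D x - B n)‖₊ := by congr 1; abel
            _ ≤ ‖D x‖₊ + ‖D x - B n‖₊ := nnnorm_sub_le _ _
            _ ≤ _ := by gcongr
        have : ‖B n‖₊ + δ ≤ ‖D x‖₊ + 2 * δ := by
          calc _ ≤ ‖D x‖₊ + δ + δ := by gcongr
            _ = _ := by ring
        calc ((‖B n‖₊ + δ : ℝ≥0) : ℝ≥0∞) ≤ ((‖D x‖₊ + 2 * δ : ℝ≥0) : ℝ≥0∞) := by exact_mod_cast this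
          _ = _ := by push_cast; rfl
    _ = ∫⁻ x in ⋃ n, ((A ∩ t n) \ N n), (‖D x‖ₑ + 2 * δ) ^ d ∂μH[(d:ℝ)] := by
        rw [lintegral_iUnion hmeas]
        intro i j hij
        exact (ht1 hij).mono (fun x hx => hx.1.2) (fun x hx => hx.1.2)
    _ ≤ _ := by
        refine lintegral_mono_set ?_
        exact iUnion_subset fun n x hx => hx.1.1

lemma area_ineq (f : E → E) (D : E → E →L[ℝ] E) (hD : Measurable fun x => ‖D x‖ₑ) (P : ℕ → Set E)
    (hs : ∀ K, MeasurableSet (P K)) (hdis : Pairwise (Function.onFun Disjoint P))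
    (hd : ∀ K, ∀ x ∈ P K, HasFDerivWithinAt f (D x) (P K) x) :
    ∃ N : Set E, MeasurableSet N ∧ μ N = 0 ∧ ∀ d : ℕ, ∀ A : Set E, MeasurableSet A → A ⊆ ⋃ K, P K →
      μH[(d:ℝ)] A ≠ ⊤ → 
      μH[(d:ℝ)] (f '' (A \ N)) ≤ ∫⁻ x in A, ‖D x‖ₑ ^ d ∂μH[(d:ℝ)] := by
  have h0 : ∀ i : ℕ, ((2⁻¹:ℝ≥0)^i) ≠ 0 := fun i => by positivity
  choose N hN1 hN2 hN3 using fun (K i : ℕ) => area_piece μ f D hD (P K) (hs K) (hd K) ((2⁻¹)^i) (h0 i)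
  refine ⟨⋃ K, ⋃ i, N K i, MeasurableSet.iUnion fun K => MeasurableSet.iUnion (hN1 K), 
    measure_iUnion_null fun K => measure_iUnion_null (hN2 K), fun d A hA hAP hAfin => ?_⟩
  by_cases htop : ∫⁻ x in A, ‖D x‖ₑ ^ d ∂μH[(d:ℝ)] = ⊤
  · rw [htop]; exact le_top
  have hi : ∀ i : ℕ, μH[(d:ℝ)] (f '' (A \ ⋃ K, ⋃ i, N K i)) ≤ 
      ∫⁻ x in A, (‖D x‖ₑ + 2 * ((2⁻¹:ℝ≥0)^i : ℝ≥0)) ^ d ∂μH[(d:ℝ)] := by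
    intro i
    have hcov : f '' (A \ ⋃ K, ⋃ i, N K i) ⊆ ⋃ K, f '' ((A ∩ P K) \ N K i) := by
      rintro _ ⟨x, ⟨hxA, hxN⟩, rfl⟩
      obtain ⟨n, hn⟩ := mem_iUnion.1 (hAP hxA)
      refine mem_iUnion.2 ⟨n, x, ⟨⟨hxA, hn⟩, fun h => hxN (mem_iUnion.2 ⟨n, mem_iUnion.2 ⟨i, h⟩⟩)⟩, rfl⟩
    calc _ ≤ ∑' K, μH[(d:ℝ)] (f '' ((A ∩ P K) \ N K i)) :=
          (measure_mono hcov).trans (measure_iUnion_le _)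
      _ ≤ ∑' K, ∫⁻ x in A ∩ P K, (‖D x‖ₑ + 2 * ((2⁻¹:ℝ≥0)^i : ℝ≥0)) ^ d ∂μH[(d:ℝ)] :=
          ENNReal.tsum_le_tsum fun K => hN3 K i d (A ∩ P K) (hA.inter (hs K)) inter_subset_right
      _ = ∫⁻ x in ⋃ K, A ∩ P K, (‖D x‖ₑ + 2 * ((2⁻¹:ℝ≥0)^i : ℝ≥0)) ^ d ∂μH[(d:ℝ)] := by
          rw [lintegral_iUnion fun K => hA.inter (hs K)]
          intro i j hij
          exact (hdis hij).mono inter_subset_right inter_subset_right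
      _ ≤ _ := lintegral_mono_set (iUnion_subset fun n => inter_subset_left)
  have hlim : Tendsto (fun i : ℕ => ∫⁻ x in A, (‖D x‖ₑ + 2 * ((2⁻¹:ℝ≥0)^i : ℝ≥0)) ^ d ∂μH[(d:ℝ)]) atTop
      (𝓝 (∫⁻ x in A, ‖D x‖ₑ ^ d ∂μH[(d:ℝ)])) := by
    refine tendsto_lintegral_of_dominated_convergence (fun x => 2^d * (‖D x‖ₑ^d + 2^d)) 
      (fun i => (hD.add_const _).pow_const _) (fun i => Eventually.of_forall fun x => ?_) ?_ 
      (Eventually.of_forall fun x => ?_)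
    · have h1 : (((2⁻¹:ℝ≥0)^i : ℝ≥0) : ℝ≥0∞) ≤ 1 := by
        rw [← ENNReal.coe_one, ENNReal.coe_le_coe]
        exact pow_le_one₀ (by simp) (by rw [← NNReal.coe_le_coe]; norm_num)
      calc (‖D x‖ₑ + 2 * ((2⁻¹:ℝ≥0)^i : ℝ≥0)) ^ d ≤ (‖D x‖ₑ + 2) ^ d := by
            gcongr
            calc (2:ℝ≥0∞) * ((2⁻¹:ℝ≥0)^i : ℝ≥0) ≤ 2 * 1 := by gcongr
              _ = 2 := mul_one _
        _ ≤ _ := by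
            rcases le_total ‖D x‖ₑ 2 with h | h
            · calc (‖D x‖ₑ + 2) ^ d ≤ (2 * 2)^d := pow_le_pow_left' (by rw [two_mul]; exact add_le_add h le_rfl) d
                _ = 2^d * 2^d := mul_pow _ _ _
                _ ≤ _ := mul_le_mul_right le_add_self _
            · calc (‖D x‖ₑ + 2) ^ d ≤ (2 * ‖D x‖ₑ)^d := pow_le_pow_left' (by rw [two_mul]; exact add_le_add le_rfl h) d
                _ = 2^d * ‖D x‖ₑ^d := mul_pow _ _ _
                _ ≤ _ := mul_le_mul_right le_self_add _
    · rw [lintegral_const_mul _ ((hD.pow_const _).add_const _), lintegral_add_right _ measurable_const, setLIntegral_const]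
      exact ENNReal.mul_ne_top (by simp) (ENNReal.add_ne_top.2 ⟨htop, ENNReal.mul_ne_top (by simp) hAfin⟩)
    · refine ((ENNReal.continuous_pow d).tendsto _).comp ?_
      have : Tendsto (fun i : ℕ => ((2⁻¹:ℝ≥0)^i : ℝ≥0)) atTop (𝓝 0) :=
        NNReal.tendsto_pow_atTop_nhds_zero_of_lt_one (by rw [← NNReal.coe_lt_coe]; norm_num)
      have h2 := ENNReal.Tendsto.const_mul (a := 2) (ENNReal.tendsto_coe.2 this) (Or.inr (by simp))
      simpa using h2.const_add ‖D x‖ₑ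
  exact ge_of_tendsto' hlim hi

/-- area inequality for integrals -/
lemma area_int (f : E → E) (D : E → E →L[ℝ] E) (hD : Measurable fun x => ‖D x‖ₑ) (U N V : Set E)
    (hU : IsOpen U) (hf : ContinuousOn f U) (hV : MeasurableSet V) (d : ℕ)
    (h : ∀ A : Set E, MeasurableSet A → A ⊆ V → μH[(d:ℝ)] A ≠ ⊤ → 
      μH[(d:ℝ)] (f '' (A \ N)) ≤ ∫⁻ x in A, ‖D x‖ₑ ^ d ∂μH[(d:ℝ)])
    (A : Set E) (hA : MeasurableSet A) (hAU : A ⊆ U) (hAfin : μH[(d:ℝ)] A ≠ ⊤)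
    (hN : μH[(d:ℝ)] (f '' (A ∩ (N ∪ (U \ V)))) = 0) (g : E → ℝ≥0∞) (hg : Measurable g) :
    ∫⁻ y in f '' A, g y ∂μH[(d:ℝ)] ≤ ∫⁻ x in A, g (f x) * ‖D x‖ₑ ^ d ∂μH[(d:ℝ)] := by
  set ft : E → E := U.piecewise f (fun _ => 0) with hft
  have hftm : Measurable ft := by
    refine measurable_of_restrict_of_restrict_compl hU.measurableSet ?_ ?_
    · rw [hft, restrict_piecewise]; exact hf.restrict.measurable
    · rw [hft, restrict_piecewise_compl]; exact measurable_const
  have hfe : ∀ x ∈ U, ft x = f x := fun x hx => piecewise_eq_of_mem _ _ _ hx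
  set ν : Measure E := (μH[(d:ℝ)].restrict A).withDensity (fun x => ‖D x‖ₑ ^ d) with hν
  have hle : (μH[(d:ℝ)] : Measure E).restrict (f '' A) ≤ ν.map ft := by
    refine Measure.le_iff.2 fun B hB => ?_
    rw [Measure.restrict_apply hB, Measure.map_apply hftm hB, hν, withDensity_apply _ (hftm hB), 
      Measure.restrict_restrict (hftm hB)]
    have hA' : MeasurableSet (ft ⁻¹' B ∩ A) := (hftm hB).inter hA
    have hsub : B ∩ f '' A ⊆ f '' (((ft ⁻¹' B ∩ A) ∩ V) \ N) ∪ f '' (A ∩ (N ∪ (U \ V))) := by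
      rintro _ ⟨hy, x, hx, rfl⟩
      by_cases hxN : x ∈ N ∪ (U \ V)
      · exact Or.inr ⟨x, ⟨hx, hxN⟩, rfl⟩
      · refine Or.inl ⟨x, ⟨⟨⟨?_, hx⟩, ?_⟩, fun h => hxN (Or.inl h)⟩, rfl⟩
        · change ft x ∈ B
          rw [hfe x (hAU hx)]; exact hy
        · by_contra hc
          exact hxN (Or.inr ⟨hAU hx, hc⟩)
    calc _ ≤ _ := measure_mono hsub
      _ ≤ _ := measure_union_le _ _
      _ = μH[(d:ℝ)] (f '' (((ft ⁻¹' B ∩ A) ∩ V) \ N)) := by rw [hN, add_zero]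
      _ ≤ _ := h _ (hA'.inter hV) inter_subset_right 
          (ne_top_of_le_ne_top hAfin (measure_mono fun x hx => hx.1.2))
      _ ≤ _ := lintegral_mono_set inter_subset_left
  calc _ ≤ ∫⁻ y, g y ∂(ν.map ft) := lintegral_mono' hle le_rfl
    _ = ∫⁻ x, g (ft x) ∂ν := lintegral_map hg hftm
    _ = ∫⁻ x in A, ‖D x‖ₑ ^ d * g (ft x) ∂μH[(d:ℝ)] := by
        exact lintegral_withDensity_eq_lintegral_mul _ (hD.pow_const _) (hg.comp hftm)
    _ = _ := by
        refine setLIntegral_congr_fun hA fun x hx => ?_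
        change ‖D x‖ₑ ^ d * g (ft x) = g (f x) * ‖D x‖ₑ ^ d
        rw [hfe x (hAU hx), mul_comm]

lemma vol_ineq (f : E → E) (D : E → E →L[ℝ] E) (U : Set E) (hf : InjOn f U)
    (P : ℕ → Set E)
    (hs : ∀ K, MeasurableSet (P K)) (hPU : ∀ K, P K ⊆ U) (hdis : Pairwise (Function.onFun Disjoint P))
    (hd : ∀ K, ∀ x ∈ P K, HasFDerivWithinAt f (D x) (P K) x) (h0 : μ (U \ ⋃ K, P K) = 0)
    (g : E → ℝ≥0∞) :
    ∫⁻ x in U, ENNReal.ofReal |(D x).det| * g (f x) ∂μ ≤ ∫⁻ y, g y ∂μ := by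
  have hU : U ⊆ (⋃ K, P K) ∪ (U \ ⋃ K, P K) := fun x hx => by
    by_cases h : x ∈ ⋃ K, P K
    · exact Or.inl h
    · exact Or.inr ⟨hx, h⟩
  calc _ ≤ ∫⁻ x in (⋃ K, P K) ∪ (U \ ⋃ K, P K), ENNReal.ofReal |(D x).det| * g (f x) ∂μ := lintegral_mono_set hU
    _ ≤ _ := lintegral_union_le _ _ _
    _ = ∫⁻ x in (⋃ K, P K), ENNReal.ofReal |(D x).det| * g (f x) ∂μ := by
        rw [setLIntegral_measure_zero _ _ h0, add_zero]
    _ = ∑' K, ∫⁻ x in P K, ENNReal.ofReal |(D x).det| * g (f x) ∂μ := lintegral_iUnion hs hdis _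
    _ = ∑' K, ∫⁻ y in f '' P K, g y ∂μ := by
        congr 1; ext K
        exact (lintegral_image_eq_lintegral_abs_det_fderiv_mul μ (hs K) (hd K) (hf.mono (hPU K)) g).symm
    _ = ∫⁻ y in ⋃ K, f '' P K, g y ∂μ := by
        refine (lintegral_iUnion (fun K => measurable_image_of_fderivWithin (hs K) (hd K) (hf.mono (hPU K))) ?_ _).symm
        intro i j hij
        exact (disjoint_image_image (fun a ha b hb hab => (hdis hij).le_bot ⟨ha, by
          rw [hf (hPU i ha) (hPU j hb) hab]; exact hb⟩))
    _ ≤ _ := setLIntegral_le_lintegral _ _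

end area

section haarlip
variable {X Y : Type*} [NormedAddCommGroup X] [NormedSpace ℝ X] [FiniteDimensional ℝ X]
  [MeasurableSpace X] [BorelSpace X] [NormedAddCommGroup Y] [NormedSpace ℝ Y] [FiniteDimensional ℝ Y]
  [MeasurableSpace Y] [BorelSpace Y] 

lemma haar_le_hausdorff (μ : Measure X) [μ.IsAddHaarMeasure] (d : ℕ) (hd : Module.finrank ℝ X = d) :
    ∃ c : ℝ≥0, μ = c • (μH[(d:ℝ)] : Measure X) := by
  have : (μH[(d:ℝ)] : Measure X).IsAddHaarMeasure := by
    rw [← hd]; exact isAddHaarMeasure_hausdorffMeasure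
  exact ⟨_, Measure.isAddLeftInvariant_eq_smul μ μH[(d:ℝ)]⟩

lemma haar_eq_hausdorff' (μ : Measure X) [μ.IsAddHaarMeasure] (d : ℕ) (hd : Module.finrank ℝ X = d) :
    ∃ c : ℝ≥0, (μH[(d:ℝ)] : Measure X) = c • μ := by
  have : (μH[(d:ℝ)] : Measure X).IsAddHaarMeasure := by
    rw [← hd]; exact isAddHaarMeasure_hausdorffMeasure
  exact ⟨_, Measure.isAddLeftInvariant_eq_smul μH[(d:ℝ)] μ⟩

lemma haar_lip (μ : Measure X) [μ.IsAddHaarMeasure] (ν : Measure Y) [ν.IsAddHaarMeasure]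
    (h : Module.finrank ℝ X = Module.finrank ℝ Y) (L : ℝ≥0) :
    ∃ c : ℝ≥0, ∀ (f : X → Y) (s : Set X), LipschitzOnWith L f s → ν (f '' s) ≤ c * μ s := by
  obtain ⟨c1, h1⟩ := haar_eq_hausdorff' μ _ rfl
  obtain ⟨c2, h2⟩ := haar_le_hausdorff ν _ h.symm
  refine ⟨c2 * (L ^ (Module.finrank ℝ X) * c1), fun f s hf => ?_⟩
  have h3 := hf.hausdorffMeasure_image_le (d := (Module.finrank ℝ X : ℝ)) (Nat.cast_nonneg _)
  rw [h2]
  simp only [Measure.smul_apply, ENNReal.smul_def, smul_eq_mul]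
  push_cast
  rw [mul_assoc]
  gcongr
  refine h3.trans ?_
  rw [h1, ENNReal.rpow_natCast]
  simp only [Measure.smul_apply, ENNReal.smul_def, smul_eq_mul]
  rw [mul_assoc]
end haarlip

section chart

variable {E W : Type*} [NormedAddCommGroup E] [InnerProductSpace ℝ E] 
  [NormedAddCommGroup W] [InnerProductSpace ℝ W] 

/-- data for a chart -/
structure ChartData (e : E) (J : W →L[ℝ] E) (P : E →L[ℝ] W) : Prop where
  he : ‖e‖ = 1
  hJ : ∀ w, ‖J w‖ = ‖w‖
  hPJ : ∀ w, P (J w) = w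
  hPe : P e = 0
  heJ : ∀ w, ⟪e, J w⟫ = 0
  hdec : ∀ x, x = ⟪e, x⟫ • e + J (P x)
  hPn : ∀ x, ‖P x‖ ≤ ‖x‖

/-- chart -/
noncomputable def chPsi (x₀ e : E) (J : W →L[ℝ] E) (q : ℝ × W) : E :=
  x₀ + (q.1 * ‖e + J q.2‖⁻¹) • (e + J q.2)

/-- inverse chart -/
noncomputable def chTheta (x₀ e : E) (P : E →L[ℝ] W) (x : E) : ℝ × W :=
  (‖x - x₀‖, (⟪e, x - x₀⟫)⁻¹ • P (x - x₀))

variable {e x₀ : E} {J : W →L[ℝ] E} {P : E →L[ℝ] W} 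

lemma ChartData.one_le (h : ChartData e J P) (w : W) : 1 ≤ ‖e + J w‖ := by
  have h1 : ⟪e, e + J w⟫ = 1 := by
    rw [inner_add_right, h.heJ, real_inner_self_eq_norm_sq, h.he]; norm_num
  have h2 := real_inner_le_norm e (e + J w)
  rw [h1, h.he, one_mul] at h2
  exact h2

lemma ChartData.pos (h : ChartData e J P) (w : W) : 0 < ‖e + J w‖ := lt_of_lt_of_le one_pos (h.one_le w)

lemma ChartData.le_add (h : ChartData e J P) (w : W) : ‖e + J w‖ ≤ 1 + ‖w‖ := by
  refine (norm_add_le _ _).trans ?_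
  rw [h.he, h.hJ]

lemma ChartData.contDiff (h : ChartData e J P) (x₀ : E) : ContDiff ℝ 1 (chPsi x₀ e J) := by
  have h1 : ContDiff ℝ 1 (fun q : ℝ × W => e + J q.2) := contDiff_const.add (J.contDiff.comp contDiff_snd)
  have h2 : ContDiff ℝ 1 (fun q : ℝ × W => ‖e + J q.2‖) :=
    h1.norm ℝ fun q => norm_pos_iff.1 (h.pos q.2)
  exact contDiff_const.add ((contDiff_fst.mul (h2.inv fun q => (h.pos q.2).ne')).smul h1)

lemma ChartData.norm_psi (h : ChartData e J P) {r : ℝ} (hr : 0 ≤ r) (w : W) :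
    ‖chPsi x₀ e J (r, w) - x₀‖ = r := by
  have := h.pos w
  simp only [chPsi, add_sub_cancel_left, norm_smul, norm_mul, norm_inv, norm_norm]
  rw [Real.norm_of_nonneg hr]
  field_simp

lemma ChartData.inner_psi (h : ChartData e J P) (r : ℝ) (w : W) :
    ⟪e, chPsi x₀ e J (r, w) - x₀⟫ = r * ‖e + J w‖⁻¹ := by
  simp only [chPsi, add_sub_cancel_left, inner_smul_right, inner_add_right, h.heJ, add_zero]
  rw [real_inner_self_eq_norm_sq, h.he]; ring

lemma ChartData.theta_psi (h : ChartData e J P) {r : ℝ} (hr : 0 < r) (w : W) :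
    chTheta x₀ e P (chPsi x₀ e J (r, w)) = (r, w) := by
  have := h.pos w
  simp only [chTheta]
  rw [h.norm_psi hr.le, h.inner_psi]
  have h2 : P (chPsi x₀ e J (r, w) - x₀) = (r * ‖e + J w‖⁻¹) • w := by
    simp only [chPsi, add_sub_cancel_left, map_smul, map_add, h.hPe, h.hPJ, zero_add]
  rw [h2, smul_smul, inv_mul_cancel₀ (by positivity), one_smul]

lemma ChartData.surj (h : ChartData e J P) {x : E} {r : ℝ} (hr : 0 < r) (hx : ‖x - x₀‖ = r)
    (hx2 : r / 2 < ⟪e, x - x₀⟫) : ∃ w ∈ ball (0:W) 2, chPsi x₀ e J (r, w) = x := by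
  set a := ⟪e, x - x₀⟫ with ha
  have ha0 : 0 < a := by linarith
  refine ⟨a⁻¹ • P (x - x₀), ?_, ?_⟩
  · rw [mem_ball_zero_iff, norm_smul, norm_inv, Real.norm_of_nonneg ha0.le]
    have := h.hPn (x - x₀)
    rw [hx] at this
    rw [inv_mul_lt_iff₀ ha0]
    linarith
  · have h1 : e + J (a⁻¹ • P (x - x₀)) = a⁻¹ • (x - x₀) := by
      conv_rhs => rw [h.hdec (x - x₀)]
      rw [smul_add, smul_smul, ← ha, inv_mul_cancel₀ ha0.ne', one_smul, map_smul]
    simp only [chPsi]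
    rw [h1, norm_smul, norm_inv, Real.norm_of_nonneg ha0.le, hx, smul_smul]
    have : r * (a⁻¹ * r)⁻¹ * a⁻¹ = 1 := by field_simp
    rw [this, one_smul]; abel

lemma ChartData.theta_lip [FiniteDimensional ℝ E] (x₀ e : E) (P : E →L[ℝ] W) (a b : ℝ) (ha : 0 < a) :
    ∃ L, LipschitzOnWith L (chTheta x₀ e P) {x | a ≤ ⟪e, x - x₀⟫ ∧ x ∈ closedBall x₀ b} := by
  have hc : Convex ℝ {x | a ≤ ⟪e, x - x₀⟫ ∧ x ∈ closedBall x₀ b} := by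
    refine Convex.inter ?_ (convex_closedBall _ _)
    have : {x : E | a ≤ ⟪e, x - x₀⟫} = {x : E | a + ⟪e, x₀⟫ ≤ innerSL ℝ e x} := by
      ext x
      simp only [mem_setOf_eq, inner_sub_right, innerSL_apply_apply]
      constructor <;> intro h <;> linarith
    change Convex ℝ {x : E | a ≤ ⟪e, x - x₀⟫}
    rw [this]
    exact convex_halfSpace_ge (innerSL ℝ e).isLinear _
  have hK : IsCompact {x | a ≤ ⟪e, x - x₀⟫ ∧ x ∈ closedBall x₀ b} := by
    refine (isCompact_closedBall x₀ b).inter_left ?_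
    exact isClosed_le (f := fun _ => a) (g := fun x : E => ⟪e, x - x₀⟫) continuous_const (by fun_prop)
  have hne : ∀ x ∈ {x | a ≤ ⟪e, x - x₀⟫ ∧ x ∈ closedBall x₀ b}, ⟪e, x - x₀⟫ ≠ 0 := by
    intro x hx
    have := hx.1
    exact (lt_of_lt_of_le ha this).ne'
  have hs : ContDiff ℝ 1 fun x : E => x - x₀ := contDiff_id.sub contDiff_const
  have hd : ContDiffOn ℝ 1 (chTheta x₀ e P) {x | a ≤ ⟪e, x - x₀⟫ ∧ x ∈ closedBall x₀ b} := by
    refine ContDiffOn.prodMk ?_ (ContDiffOn.smul (ContDiffOn.inv ?_ hne) ?_)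
    · refine hs.contDiffOn.norm ℝ fun x hx h0 => hne x hx ?_
      rw [h0, inner_zero_right]
    · exact (contDiff_const.inner ℝ hs).contDiffOn
    · exact (P.contDiff.comp hs).contDiffOn
  exact hd.exists_lipschitzOnWith one_ne_zero hc hK

end chart

section chart2

variable {E W F : Type*} [NormedAddCommGroup E] [InnerProductSpace ℝ E] [FiniteDimensional ℝ E]
  [MeasurableSpace E] [BorelSpace E] (μ : Measure E) [μ.IsAddHaarMeasure]
  [NormedAddCommGroup W] [InnerProductSpace ℝ W] [FiniteDimensional ℝ W]
  [MeasurableSpace W] [BorelSpace W] (ν : Measure W) [ν.IsAddHaarMeasure]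
  {e x₀ : E} {J : W →L[ℝ] E} {P : E →L[ℝ] W} 
  [NormedAddCommGroup F] [NormedSpace ℝ F] [CompleteSpace F] [MeasurableSpace F] [BorelSpace F]

lemma ChartData.psi_mem (h : ChartData e J P) {ε ε₀ r : ℝ} (hε : 0 < ε) (hr : r ∈ Ioo ε ε₀) {w : W}
    (hw : w ∈ ball (0:W) 2) : ε / 3 ≤ ⟪e, chPsi x₀ e J (r, w) - x₀⟫ ∧ chPsi x₀ e J (r, w) ∈ ball x₀ ε₀ := by
  have hr0 : 0 < r := hε.trans hr.1
  constructor
  · rw [h.inner_psi]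
    have h1 := h.le_add w
    have h2 := h.pos w
    rw [mem_ball_zero_iff] at hw
    rw [← div_eq_mul_inv, div_le_div_iff₀ (by norm_num) h2]
    have := hr.1
    calc ε * ‖e + J w‖ ≤ ε * 3 := by gcongr; linarith
      _ ≤ r * 3 := by linarith
  · rw [mem_ball_iff_norm, h.norm_psi hr0.le]; exact hr.2

lemma chart_int (h : ChartData e J P) (hdim : Module.finrank ℝ E = Module.finrank ℝ W + 1) 
    {ε ε₀ : ℝ} (hε : 0 < ε) :
    ∃ C : ℝ≥0, ∀ g : E → ℝ≥0∞, Measurable g → 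
      ∫⁻ r in Ioo ε ε₀, ∫⁻ w in ball (0:W) 2, g (chPsi x₀ e J (r, w)) ∂ν ≤ C * ∫⁻ x in ball x₀ ε₀, g x ∂μ := by
  obtain ⟨L, hL⟩ := ChartData.theta_lip x₀ e P (ε/3) ε₀ (by positivity)
  obtain ⟨C, hC⟩ := haar_lip μ ((volume : Measure ℝ).prod ν) (by rw [hdim, Module.finrank_prod, Module.finrank_self, add_comm]) L
  refine ⟨C, fun g hg => ?_⟩
  have hΨ : Measurable (chPsi x₀ e J) := (h.contDiff x₀).continuous.measurable
  set lam := ((volume : Measure ℝ).restrict (Ioo ε ε₀)).prod (ν.restrict (ball (0:W) 2)) with hlam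
  have hlam' : lam = ((volume : Measure ℝ).prod ν).restrict (Ioo ε ε₀ ×ˢ ball (0:W) 2) := Measure.prod_restrict _ _
  have hle : lam.map (chPsi x₀ e J) ≤ (C:ℝ≥0∞) • μ.restrict (ball x₀ ε₀) := by
    refine Measure.le_iff.2 fun B hB => ?_
    rw [Measure.map_apply hΨ hB, hlam', Measure.restrict_apply (hΨ hB), Measure.smul_apply, Measure.restrict_apply hB, smul_eq_mul]
    have hsub : chPsi x₀ e J ⁻¹' B ∩ Ioo ε ε₀ ×ˢ ball (0:W) 2 ⊆ 
        chTheta x₀ e P '' ((B ∩ ball x₀ ε₀) ∩ {x | ε/3 ≤ ⟪e, x - x₀⟫ ∧ x ∈ closedBall x₀ ε₀}) := by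
      rintro ⟨r, w⟩ ⟨hq1, hq2, hq3⟩
      have hm := h.psi_mem (x₀ := x₀) hε hq2 hq3
      exact ⟨chPsi x₀ e J (r, w), ⟨⟨hq1, hm.2⟩, hm.1, ball_subset_closedBall hm.2⟩, h.theta_psi (hε.trans hq2.1) w⟩
    refine (measure_mono hsub).trans ((hC _ _ (hL.mono inter_subset_right)).trans ?_)
    exact mul_le_mul_right (measure_mono inter_subset_left) _
  calc _ = ∫⁻ q, g (chPsi x₀ e J q) ∂lam := by
        rw [hlam]
        exact (lintegral_prod (fun q => g (chPsi x₀ e J q)) (hg.comp hΨ).aemeasurable).symm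
    _ = ∫⁻ x, g x ∂(lam.map (chPsi x₀ e J)) := (lintegral_map hg hΨ).symm
    _ ≤ ∫⁻ x, g x ∂((C:ℝ≥0∞) • μ.restrict (ball x₀ ε₀)) := lintegral_mono' hle le_rfl
    _ = _ := by rw [lintegral_smul_measure]; rfl

lemma chart_ae (h : ChartData e J P) (hdim : Module.finrank ℝ E = Module.finrank ℝ W + 1) 
    {ε ε₀ : ℝ} (hε : 0 < ε) (g : E → ℝ≥0∞) (hg : Measurable g) (hgi : ∫⁻ x in ball x₀ ε₀, g x ∂μ ≠ ⊤) :
    ∀ᵐ r ∂(volume : Measure ℝ).restrict (Ioo ε ε₀), 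
      ∫⁻ w in ball (0:W) 2, g (chPsi x₀ e J (r, w)) ∂ν ≠ ⊤ := by
  obtain ⟨C, hC⟩ := chart_int μ ν (x₀ := x₀) h hdim (ε₀ := ε₀) hε
  have hΨ : Measurable (chPsi x₀ e J) := (h.contDiff x₀).continuous.measurable
  have h1 := ne_top_of_le_ne_top (ENNReal.mul_ne_top (by simp) hgi) (hC g hg)
  have h2 : Measurable fun r : ℝ => ∫⁻ w in ball (0:W) 2, g (chPsi x₀ e J (r, w)) ∂ν :=
    (hg.comp hΨ).lintegral_prod_right'
  filter_upwards [ae_lt_top h2 h1] with r hr using hr.ne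

lemma chart_null (h : ChartData e J P) (hdim : Module.finrank ℝ E = Module.finrank ℝ W + 1) 
    {ε ε₀ : ℝ} (hε : 0 < ε) (N : Set E) (hN : MeasurableSet N) (hN0 : μ N = 0) :
    ∀ᵐ r ∂(volume : Measure ℝ).restrict (Ioo ε ε₀), 
      ν {w | w ∈ ball (0:W) 2 ∧ chPsi x₀ e J (r, w) ∈ N} = 0 := by
  obtain ⟨C, hC⟩ := chart_int μ ν (x₀ := x₀) h hdim (ε₀ := ε₀) hε
  have hΨ : Measurable (chPsi x₀ e J) := (h.contDiff x₀).continuous.measurable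
  have hg : Measurable (N.indicator (fun _ => (1:ℝ≥0∞))) := measurable_const.indicator hN
  have h1 : ∫⁻ r in Ioo ε ε₀, ∫⁻ w in ball (0:W) 2, N.indicator (fun _ => (1:ℝ≥0∞)) (chPsi x₀ e J (r, w)) ∂ν = 0 := by
    refine le_antisymm ((hC _ hg).trans ?_) bot_le
    rw [lintegral_indicator hN]
    simp only [lintegral_const, Measure.restrict_apply MeasurableSet.univ, univ_inter, one_mul]
    rw [Measure.restrict_apply hN, measure_mono_null inter_subset_left hN0, mul_zero]
  have h2 : Measurable fun r : ℝ => ∫⁻ w in ball (0:W) 2, N.indicator (fun _ => (1:ℝ≥0∞)) (chPsi x₀ e J (r, w)) ∂ν :=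
    (hg.comp hΨ).lintegral_prod_right'
  rw [lintegral_eq_zero_iff h2] at h1
  filter_upwards [h1] with r hr
  have hm : MeasurableSet {w | chPsi x₀ e J (r, w) ∈ N} := (hΨ.comp measurable_prodMk_left) hN
  have h3 : (fun w => N.indicator (fun _ => (1:ℝ≥0∞)) (chPsi x₀ e J (r, w))) = 
      {w | chPsi x₀ e J (r, w) ∈ N}.indicator fun _ => 1 := rfl
  simp only [Pi.zero_apply] at hr
  rw [h3, lintegral_indicator hm] at hr
  simp only [lintegral_const, Measure.restrict_apply MeasurableSet.univ, univ_inter, one_mul] at hr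
  rw [Measure.restrict_apply hm, inter_comm] at hr
  exact hr

lemma MeanProp.mono {h : W → F} {w : W → ℝ≥0∞} {C : ℝ≥0∞} {S T : Set W} (hM : MeanProp ν h w C T)
    (hST : S ⊆ T) : MeanProp ν h w C S :=
  fun B' B h1 h2 h3 h4 h5 => hM B' B h1 h2 h3 h4 (h5.trans hST)

lemma chart_lusin (ν : Measure W) [ν.IsAddHaarMeasure] (h : ChartData e J P) (m : ℕ) (hm : 2 ≤ m) (hW : Module.finrank ℝ W = m)
    (hdim : Module.finrank ℝ E = m + 1) 
    {ε ε₀ : ℝ} (hε : 0 < ε) (R : ℝ) (hR : ε₀ ≤ R)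
    {φ : ℝ → ℝ} (hφ : NondecPos φ) {t₀ : ℝ} (ht₀ : 0 < t₀)
    (hJ : ∫⁻ t in Ioi t₀, ENNReal.ofReal ((2 * (t / φ t)) ^ (1 / ((m:ℝ) - 1))) ≠ ⊤)
    (f : E → F) (hf : ContinuousOn f (ball x₀ R)) (D : E → E →L[ℝ] F) (hD : StronglyMeasurable D)
    (fk : ℕ → E → F) (hfk : ∀ k, ContDiff ℝ 1 (fk k))
    (hu : TendstoUniformlyOn fk f atTop (ball x₀ R))
    (he : ∀ k, ∫⁻ x in ball x₀ R, ‖fderiv ℝ (fk k) x - D x‖ₑ ∂μ ≤ (4⁻¹ : ℝ≥0∞)^k)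
    (hfin : ∫⁻ x in ball x₀ R, phit φ ‖D x‖ ∂μ ≠ ⊤)
    (N : Set E) (hN : MeasurableSet N) (hN0 : μ N = 0) :
    ∀ᵐ r ∂(volume : Measure ℝ).restrict (Ioo ε ε₀), 
      μH[(m:ℝ)] (f '' (N ∩ {x | ‖x - x₀‖ = r ∧ r / 2 < ⟪e, x - x₀⟫})) = 0 := by
  have hdim' : Module.finrank ℝ E = Module.finrank ℝ W + 1 := by rw [hdim, hW]
  have hem : ∀ k, Measurable fun x => ‖fderiv ℝ (fk k) x - D x‖ₑ := fun k => 
    ((((hfk k).continuous_fderiv one_ne_zero).stronglyMeasurable).sub hD).enorm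
  have hbb : ball x₀ ε₀ ⊆ ball x₀ R := ball_subset_ball hR
  have h1 := chart_null μ ν (x₀ := x₀) h hdim' (ε₀ := ε₀) hε N hN hN0
  have hDm : Measurable fun x => ‖D x‖ := hD.norm.measurable
  have h2 := chart_ae μ ν (x₀ := x₀) h hdim' (ε₀ := ε₀) hε (fun x => phit φ ‖D x‖) 
    ((phit_mono hφ).measurable.comp hDm) (ne_top_of_le_ne_top hfin (lintegral_mono_set hbb))
  have h3 := chart_ae μ ν (x₀ := x₀) h hdim' (ε₀ := ε₀) hε (fun x => ∑' k, ‖fderiv ℝ (fk k) x - D x‖ₑ) 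
    (Measurable.ennreal_tsum hem) (by
      rw [lintegral_tsum fun k => (hem k).aemeasurable]
      refine ne_top_of_le_ne_top (b := ∑' k : ℕ, (4⁻¹ : ℝ≥0∞)^k) ?_ (ENNReal.tsum_le_tsum fun k => 
        (lintegral_mono_set hbb).trans (he k))
      rw [ENNReal.tsum_geometric, Ne, ENNReal.inv_eq_top]
      refine (tsub_pos_of_lt ?_).ne'
      rw [ENNReal.inv_lt_one]; norm_num)
  filter_upwards [h1, h2, h3, ae_restrict_mem measurableSet_Ioo] with r hr1 hr2 hr3 hr
  have hr0 : 0 < r := hε.trans hr.1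
  set ψ : W → E := fun w => chPsi x₀ e J (r, w) with hψ
  have hψd : ContDiff ℝ 1 ψ := (h.contDiff x₀).comp (contDiff_const.prodMk contDiff_id)
  have hψm : Measurable ψ := hψd.continuous.measurable
  have hmaps : MapsTo ψ (ball (0:W) 2) (ball x₀ R) := fun w hw => hbb (h.psi_mem hε hr hw).2
  -- bound on derivative
  obtain ⟨L, hL⟩ : ∃ L : ℝ≥0, ∀ w ∈ ball (0:W) 2, ‖fderiv ℝ ψ w‖ₑ ≤ L := by
    obtain ⟨L, hL⟩ := (isCompact_closedBall (0:W) 2).exists_bound_of_continuousOn 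
      (hψd.continuous_fderiv one_ne_zero).continuousOn
    refine ⟨L.toNNReal, fun w hw => ?_⟩
    rw [← ofReal_norm]
    exact ENNReal.ofReal_le_ofReal (hL w (ball_subset_closedBall hw))
  have hMk : ∀ k, MeanProp ν (fk k ∘ ψ) (fun w => ‖fderiv ℝ (fk k ∘ ψ) w‖ₑ) (2 ^ (Module.finrank ℝ W)) (ball (0:W) 2) :=
    fun k => (MeanProp.of_contDiff ν (fk k ∘ ψ) ((hfk k).comp hψd)).mono ν (subset_univ _)
  have hM : MeanProp ν (f ∘ ψ) (fun w => ENNReal.ofReal ‖D (ψ w)‖) (2 ^ (Module.finrank ℝ W) * L) (ball (0:W) 2) := by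
    refine MeanProp.limit ν (f ∘ ψ) (fun k => fk k ∘ ψ) _ _ (fun k w => L * ‖fderiv ℝ (fk k) (ψ w) - D (ψ w)‖ₑ) 
      _ _ (by simp) (by simp) _ measurableSet_ball (hf.comp hψd.continuous.continuousOn hmaps)
      (fun k => ((hfk k).comp hψd).continuous.continuousOn) ?_ ?_ ?_ ?_ hMk
    · exact (hu.comp ψ).mono hmaps
    · exact fun k => ((hem k).comp hψm).const_mul _
    · intro k w hw
      have hc : fderiv ℝ (fk k ∘ ψ) w = (fderiv ℝ (fk k) (ψ w)).comp (fderiv ℝ ψ w) :=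
        fderiv_comp w ((hfk k).differentiable one_ne_zero _) (hψd.differentiable one_ne_zero w)
      have hle : ‖(fderiv ℝ (fk k) (ψ w)).comp (fderiv ℝ ψ w)‖ₑ ≤ ‖fderiv ℝ (fk k) (ψ w)‖ₑ * ‖fderiv ℝ ψ w‖ₑ := by
        have := ContinuousLinearMap.opNNNorm_comp_le (fderiv ℝ (fk k) (ψ w)) (fderiv ℝ ψ w)
        simp only [enorm_eq_nnnorm]
        exact_mod_cast this
      simp only [hc]
      refine hle.trans ?_
      rw [ofReal_norm, ← mul_add, mul_comm]
      gcongr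
      · exact hL w hw
      · calc ‖fderiv ℝ (fk k) (ψ w)‖ₑ = ‖D (ψ w) + (fderiv ℝ (fk k) (ψ w) - D (ψ w))‖ₑ := by congr 1; abel
          _ ≤ _ := by
            simp only [enorm_eq_nnnorm]
            exact_mod_cast nnnorm_add_le (D (ψ w)) (fderiv ℝ (fk k) (ψ w) - D (ψ w))
    · have h5 : ∑' k, ∫⁻ w in ball (0:W) 2, ‖fderiv ℝ (fk k) (ψ w) - D (ψ w)‖ₑ ∂ν ≠ ⊤ := by
        have h5' := lintegral_tsum (μ := ν.restrict (ball (0:W) 2)) 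
          (f := fun k w => ‖fderiv ℝ (fk k) (ψ w) - D (ψ w)‖ₑ) fun k => ((hem k).comp hψm).aemeasurable
        rw [← h5']
        exact hr3
      have h6 := ENNReal.tendsto_atTop_zero_of_tsum_ne_top h5
      have h7 := ENNReal.Tendsto.const_mul (a := (L:ℝ≥0∞)) h6 (Or.inr (by simp))
      rw [mul_zero] at h7
      refine h7.congr fun k => ?_
      exact (lintegral_const_mul _ ((hem k).comp hψm)).symm
  have hres := lusinN ν hφ ht₀ m hm hW (f ∘ ψ) (fun w => ‖D (ψ w)‖) (hDm.comp hψm) _ 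
    (ENNReal.mul_ne_top (by simp) (by simp)) (ball (0:W) 2) isOpen_ball measure_ball_lt_top.ne hM 
    (hf.comp hψd.continuous.continuousOn hmaps) hr2 hJ _ (fun w hw => hw.1) hr1
  refine measure_mono_null ?_ hres
  rintro _ ⟨x, ⟨hxN, hx1, hx2⟩, rfl⟩
  obtain ⟨w, hw, hwx⟩ := h.surj hr0 hx1 hx2
  refine ⟨w, ⟨hw, ?_⟩, ?_⟩
  · rw [hwx]; exact hxN
  · simp only [Function.comp, hψ, hwx]

end chart2

section chart3

variable {E F : Type*} [NormedAddCommGroup E] [InnerProductSpace ℝ E] [FiniteDimensional ℝ E]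
  [MeasurableSpace E] [BorelSpace E] 
  [NormedAddCommGroup F] [NormedSpace ℝ F] [CompleteSpace F] [MeasurableSpace F] [BorelSpace F]

lemma exists_dirs : ∃ t : Set E, t.Finite ∧ (∀ e ∈ t, ‖e‖ = 1) ∧ 
    ∀ (x₀ x : E) (r : ℝ), 0 < r → ‖x - x₀‖ = r → ∃ e ∈ t, r / 2 < ⟪e, x - x₀⟫ := by
  obtain ⟨t, ht, htf, htc⟩ := finite_cover_balls_of_compact (isCompact_sphere (0:E) 1) (e := 1) one_pos
  refine ⟨t, htf, fun e he => by simpa using ht he, fun x₀ x r hr hx => ?_⟩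
  have hu : ‖r⁻¹ • (x - x₀)‖ = 1 := by
    rw [norm_smul, hx, norm_inv, Real.norm_of_nonneg hr.le, inv_mul_cancel₀ hr.ne']
  obtain ⟨e, he, heu⟩ := mem_iUnion₂.1 (htc (mem_sphere_zero_iff_norm.2 hu))
  refine ⟨e, he, ?_⟩
  have he1 : ‖e‖ = 1 := by simpa using ht he
  rw [mem_ball_iff_norm] at heu
  have h1 := norm_sub_sq_real (r⁻¹ • (x - x₀)) e
  rw [hu, he1, real_inner_comm, inner_smul_right] at h1
  have h2 : ‖r⁻¹ • (x - x₀) - e‖ ^ 2 < 1 := by nlinarith [norm_nonneg (r⁻¹ • (x - x₀) - e)]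
  have h3 : 1 / 2 < r⁻¹ * ⟪e, x - x₀⟫ := by linarith
  rw [inv_mul_eq_div, lt_div_iff₀ hr] at h3
  linarith

lemma chartData_of_unit (e : E) (he : ‖e‖ = 1) : 
    ChartData e ((ℝ ∙ e)ᗮ).subtypeL ((ℝ ∙ e)ᗮ).orthogonalProjectionOnto where
  he := he
  hJ w := rfl
  hPJ w := by simp
  hPe := by
    apply Submodule.orthogonalProjectionOnto_orthogonal_apply_eq_zero
    exact Submodule.mem_span_singleton_self e
  heJ w := Submodule.mem_orthogonal_singleton_iff_inner_right.1 w.2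
  hdec x := by
    have h1 := Submodule.starProjection_add_starProjection_orthogonal (K := ℝ ∙ e) x
    rw [Submodule.starProjection_unit_singleton ℝ he] at h1
    exact h1.symm
  hPn x := Submodule.norm_orthogonalProjectionOnto_apply_le _ x

lemma finrank_perp (m : ℕ) (hdim : Module.finrank ℝ E = m + 1) (e : E) (he : ‖e‖ = 1) : 
    Module.finrank ℝ (ℝ ∙ e)ᗮ = m := by
  haveI : Fact (Module.finrank ℝ E = m + 1) := ⟨hdim⟩
  exact Submodule.finrank_orthogonal_span_singleton (norm_ne_zero_iff.1 (by rw [he]; exact one_ne_zero))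

lemma sphere_lusin (μ : Measure E) [μ.IsAddHaarMeasure] (m : ℕ) (hm : 2 ≤ m) 
    (hdim : Module.finrank ℝ E = m + 1) (x₀ : E)
    {ε ε₀ : ℝ} (hε : 0 < ε) (R : ℝ) (hR : ε₀ ≤ R)
    {φ : ℝ → ℝ} (hφ : NondecPos φ) {t₀ : ℝ} (ht₀ : 0 < t₀)
    (hJ : ∫⁻ t in Ioi t₀, ENNReal.ofReal ((2 * (t / φ t)) ^ (1 / ((m:ℝ) - 1))) ≠ ⊤)
    (f : E → F) (hf : ContinuousOn f (ball x₀ R)) (D : E → E →L[ℝ] F) (hD : StronglyMeasurable D)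
    (fk : ℕ → E → F) (hfk : ∀ k, ContDiff ℝ 1 (fk k))
    (hu : TendstoUniformlyOn fk f atTop (ball x₀ R))
    (he : ∀ k, ∫⁻ x in ball x₀ R, ‖fderiv ℝ (fk k) x - D x‖ₑ ∂μ ≤ (4⁻¹ : ℝ≥0∞)^k)
    (hfin : ∫⁻ x in ball x₀ R, phit φ ‖D x‖ ∂μ ≠ ⊤)
    (N : Set E) (hN : MeasurableSet N) (hN0 : μ N = 0) :
    ∀ᵐ r ∂(volume : Measure ℝ).restrict (Ioo ε ε₀), 
      μH[(m:ℝ)] (f '' (sphere x₀ r ∩ N)) = 0 := by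
  obtain ⟨t, htf, ht1, htc⟩ := exists_dirs (E := E)
  have h1 : ∀ᵐ r ∂(volume : Measure ℝ).restrict (Ioo ε ε₀), ∀ e ∈ t, 
      μH[(m:ℝ)] (f '' (N ∩ {x | ‖x - x₀‖ = r ∧ r / 2 < ⟪e, x - x₀⟫})) = 0 := by
    rw [ae_ball_iff htf.countable]
    intro e he1
    exact chart_lusin μ (volume : Measure (ℝ ∙ e)ᗮ) (chartData_of_unit e (ht1 e he1)) m hm 
      (finrank_perp m hdim e (ht1 e he1)) hdim hε R hR hφ ht₀ hJ f hf D hD fk hfk hu he hfin N hN hN0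
  filter_upwards [h1, ae_restrict_mem measurableSet_Ioo] with r hr hr'
  have hr0 : 0 < r := hε.trans hr'.1
  refine measure_mono_null ?_ ((measure_biUnion_null_iff htf.countable).2 hr)
  rintro _ ⟨x, ⟨hx, hxN⟩, rfl⟩
  have hx' : ‖x - x₀‖ = r := by rwa [mem_sphere_iff_norm] at hx
  obtain ⟨e, he, hxe⟩ := htc x₀ x r hr0 hx'
  exact mem_iUnion₂.2 ⟨e, he, x, ⟨hxN, hx', hxe⟩, rfl⟩

lemma sphere_fin (m : ℕ) (hdim : Module.finrank ℝ E = m + 1) (x₀ : E) (r : ℝ) (hr : 0 < r) :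
    μH[(m:ℝ)] (sphere x₀ r) ≠ ⊤ := by
  obtain ⟨t, htf, ht1, htc⟩ := exists_dirs (E := E)
  have h1 : ∀ e ∈ t, μH[(m:ℝ)] {x | ‖x - x₀‖ = r ∧ r / 2 < ⟪e, x - x₀⟫} < ⊤ := by
    intro e he
    have hc := chartData_of_unit e (ht1 e he)
    have hd : ContDiff ℝ 1 fun w => chPsi x₀ e ((ℝ ∙ e)ᗮ).subtypeL (r, w) := 
      (hc.contDiff x₀).comp (contDiff_const.prodMk contDiff_id)
    obtain ⟨L, hL⟩ := hd.contDiffOn.exists_lipschitzOnWith (s := closedBall 0 2) one_ne_zero 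
      (convex_closedBall _ _) (isCompact_closedBall _ _)
    have h2 := (hL.mono ball_subset_closedBall).hausdorffMeasure_image_le (d := (m:ℝ)) (Nat.cast_nonneg _)
    refine lt_of_le_of_lt ((measure_mono ?_).trans h2) ?_
    · rintro x ⟨hx1, hx2⟩
      obtain ⟨w, hw, hwx⟩ := hc.surj hr hx1 hx2
      exact ⟨w, hw, hwx⟩
    · haveI : (μH[(m:ℝ)] : Measure (ℝ ∙ e)ᗮ).IsAddHaarMeasure := by
        rw [← finrank_perp m hdim e (ht1 e he)]; exact isAddHaarMeasure_hausdorffMeasure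
      refine ENNReal.mul_lt_top ?_ measure_ball_lt_top
      rw [ENNReal.rpow_natCast]
      exact ENNReal.pow_lt_top ENNReal.coe_lt_top
  refine ne_top_of_le_ne_top (measure_biUnion_lt_top htf h1).ne (measure_mono ?_)
  intro x hx
  have hx' : ‖x - x₀‖ = r := by rwa [mem_sphere_iff_norm] at hx
  obtain ⟨e, he, hxe⟩ := htc x₀ x r hr hx'
  exact mem_iUnion₂.2 ⟨e, he, hx', hxe⟩

lemma sphere_pos [Nontrivial E] (m : ℕ) (hdim : Module.finrank ℝ E = m + 1) (x₀ : E) (r : ℝ) (hr : 0 < r) :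
    μH[(m:ℝ)] (sphere x₀ r) ≠ 0 := by
  intro h0
  obtain ⟨e, he⟩ := exists_norm_eq E zero_le_one
  have hc := chartData_of_unit e he
  obtain ⟨L, hL⟩ := ChartData.theta_lip x₀ e ((ℝ ∙ e)ᗮ).orthogonalProjectionOnto (r/6) (2*r) (by positivity)
  have hL2 : LipschitzOnWith L (fun x => (chTheta x₀ e ((ℝ ∙ e)ᗮ).orthogonalProjectionOnto x).2) 
      {x | r / 6 ≤ ⟪e, x - x₀⟫ ∧ x ∈ closedBall x₀ (2 * r)} := by
    have := LipschitzWith.prod_snd.comp_lipschitzOnWith hL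
    rw [one_mul] at this
    exact this
  have h2 := (hL2.mono (inter_subset_right (s := sphere x₀ r))).hausdorffMeasure_image_le (d := (m:ℝ)) (Nat.cast_nonneg _)
  rw [measure_mono_null inter_subset_left h0, mul_zero] at h2
  haveI : (μH[(m:ℝ)] : Measure (ℝ ∙ e)ᗮ).IsAddHaarMeasure := by
    rw [← finrank_perp m hdim e he]; exact isAddHaarMeasure_hausdorffMeasure
  have h3 : 0 < (μH[(m:ℝ)] : Measure (ℝ ∙ e)ᗮ) (ball 0 2) := measure_ball_pos _ _ (by norm_num)
  refine absurd (h3.trans_le ((measure_mono ?_).trans h2)) (lt_irrefl _)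
  intro w hw
  have hm := hc.psi_mem (x₀ := x₀) (ε := r/2) (ε₀ := 2*r) (r := r) (by positivity) ⟨by linarith, by linarith⟩ hw
  refine ⟨chPsi x₀ e ((ℝ ∙ e)ᗮ).subtypeL (r, w), ⟨?_, ?_, ball_subset_closedBall hm.2⟩, ?_⟩
  · rw [mem_sphere_iff_norm]; exact hc.norm_psi hr.le w
  · have := hm.1; linarith
  · simp only [hc.theta_psi hr w]

lemma annuli_null (μ : Measure E) [μ.IsAddHaarMeasure] (m : ℕ) (hdim : Module.finrank ℝ E = m + 1) (x₀ : E) 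
    (ε ε₀ : ℝ) (hε : 0 < ε) (A : Set ℝ) (hA : A ⊆ Ioo ε ε₀) (h0 : volume A = 0) : 
    μ {x | dist x x₀ ∈ A} = 0 := by
  obtain ⟨t, htf, ht1, htc⟩ := exists_dirs (E := E)
  have h1 : ∀ e ∈ t, μ {x | ‖x - x₀‖ ∈ A ∧ ‖x - x₀‖ / 2 < ⟪e, x - x₀⟫} = 0 := by
    intro e he
    have hc := chartData_of_unit e (ht1 e he)
    obtain ⟨L, hL⟩ := (hc.contDiff x₀).contDiffOn.exists_lipschitzOnWith (s := Icc ε ε₀ ×ˢ closedBall 0 2) one_ne_zero 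
      ((convex_Icc _ _).prod (convex_closedBall _ _)) (isCompact_Icc.prod (isCompact_closedBall _ _))
    obtain ⟨c, hcc⟩ := haar_lip ((volume : Measure ℝ).prod (volume : Measure (ℝ ∙ e)ᗮ)) μ
      (by rw [hdim, Module.finrank_prod, Module.finrank_self, finrank_perp m hdim e (ht1 e he), add_comm]) L
    have h2 := hcc _ _ (hL.mono (prod_mono (hA.trans Ioo_subset_Icc_self) (ball_subset_closedBall (x := 0) (ε := 2))))
    rw [Measure.prod_prod, h0, zero_mul, mul_zero] at h2
    refine measure_mono_null ?_ (le_antisymm h2 bot_le)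
    rintro x ⟨hx1, hx2⟩
    obtain ⟨w, hw, hwx⟩ := hc.surj (hε.trans (hA hx1).1) rfl hx2
    exact ⟨(‖x - x₀‖, w), ⟨hx1, hw⟩, hwx⟩
  refine measure_mono_null ?_ ((measure_biUnion_null_iff htf.countable).2 h1)
  intro x hx
  have hx' : ‖x - x₀‖ ∈ A := by rw [← dist_eq_norm]; exact hx
  obtain ⟨e, he, hxe⟩ := htc x₀ x _ (hε.trans (hA hx').1) rfl
  exact mem_iUnion₂.2 ⟨e, he, hx', hxe⟩

end chart3

section core

variable {E : Type*} [NormedAddCommGroup E] [InnerProductSpace ℝ E] [FiniteDimensional ℝ E]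
  [MeasurableSpace E] [BorelSpace E] 

lemma core_lemma [Nontrivial E] (μ : Measure E) [μ.IsAddHaarMeasure] (m : ℕ) (hm : 2 ≤ m) 
    (hdim : Module.finrank ℝ E = m + 1) (x₀ : E)
    (R R' : ℝ) (hR : R < R') {φ : ℝ → ℝ} (hφ : NondecPos φ) {t₀ : ℝ} (ht₀ : 0 < t₀)
    (hJ : ∫⁻ t in Ioi t₀, ENNReal.ofReal ((2 * (t / φ t)) ^ (1 / ((m:ℝ) - 1))) ≠ ⊤)
    (U : Set E) (hU : closedBall x₀ R' ⊆ U) (f : E → E) (hf : ContinuousOn f U) (hinj : InjOn f U)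
    (Df : E → E →L[ℝ] E) (hw : WeakD μ U f Df) 
    (hfin : ∫⁻ x in ball x₀ R, phit φ ‖Df x‖ ∂μ ≠ ⊤) :
    ∃ D : E → E →L[ℝ] E, (Measurable fun x => ‖D x‖ₑ) ∧ (∀ᵐ x ∂μ.restrict (ball x₀ R), Df x = D x) ∧
      (∀ ε ε₀ : ℝ, 0 < ε → ε₀ ≤ R → ∀ᵐ r ∂(volume : Measure ℝ).restrict (Ioo ε ε₀), 
        ∀ g : E → ℝ≥0∞, Measurable g → ∫⁻ y in f '' sphere x₀ r, g y ∂μH[(m:ℝ)] ≤ 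
          ∫⁻ x in sphere x₀ r, g (f x) * ‖D x‖ₑ ^ m ∂μH[(m:ℝ)]) ∧
      ∀ g : E → ℝ≥0∞, ∫⁻ x in ball x₀ R, ENNReal.ofReal |(D x).det| * g (f x) ∂μ ≤ ∫⁻ y, g y ∂μ := by
  have hbU : ball x₀ R ⊆ U := (ball_subset_closedBall.trans (closedBall_subset_closedBall hR.le)).trans hU
  have hcU : closedBall x₀ R ⊆ U := (closedBall_subset_closedBall hR.le).trans hU
  have hint : IntegrableOn Df (ball x₀ R) μ := 
    (hw.2.1.integrableOn_compact_subset hcU (isCompact_closedBall _ _)).mono_set ball_subset_closedBall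
  have hsm : AEStronglyMeasurable Df (μ.restrict (ball x₀ R)) := hint.aestronglyMeasurable
  obtain ⟨D, hD, hDe⟩ : ∃ D : E → E →L[ℝ] E, StronglyMeasurable D ∧ Df =ᵐ[μ.restrict (ball x₀ R)] D := hsm
  obtain ⟨fk, hfk, hu, he⟩ := exists_moll μ hw hf x₀ R R' hR hU
  have he' : ∀ k, ∫⁻ x in ball x₀ R, ‖fderiv ℝ (fk k) x - D x‖ₑ ∂μ ≤ (4⁻¹ : ℝ≥0∞)^k := by
    intro k
    refine le_trans (le_of_eq (lintegral_congr_ae ?_)) (he k)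
    filter_upwards [hDe] with x hx
    rw [hx]
  have hfin' : ∫⁻ x in ball x₀ R, phit φ ‖D x‖ ∂μ ≠ ⊤ := by
    have : ∫⁻ x in ball x₀ R, phit φ ‖D x‖ ∂μ = ∫⁻ x in ball x₀ R, phit φ ‖Df x‖ ∂μ := by
      refine lintegral_congr_ae ?_
      filter_upwards [hDe] with x hx
      rw [hx]
    rw [this]; exact hfin
  obtain ⟨P, hP1, hP2, hP3, hP4, hP5⟩ := nice_decomp μ f D hD x₀ R fk hfk hu he'
  have hDm : Measurable fun x => ‖D x‖ₑ := hD.enorm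
  obtain ⟨N, hN1, hN2, hN3⟩ := area_ineq μ f D hDm P hP1 hP3 hP4
  have hV : MeasurableSet (⋃ K, P K) := MeasurableSet.iUnion hP1
  refine ⟨D, hDm, hDe, ?_, ?_⟩
  · intro ε ε₀ hε hε₀
    have hl := sphere_lusin μ m hm hdim x₀ hε R hε₀ hφ ht₀ hJ f (hf.mono hbU) D hD fk hfk hu he' hfin' 
      (N ∪ (ball x₀ R \ ⋃ K, P K)) (hN1.union (measurableSet_ball.diff hV)) (measure_union_null hN2 hP5)
    filter_upwards [hl, ae_restrict_mem measurableSet_Ioo] with r hr hr' g hg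
    exact area_int f D hDm (ball x₀ R) N (⋃ K, P K) isOpen_ball (hf.mono hbU) hV m (hN3 m) (sphere x₀ r)
      isClosed_sphere.measurableSet (sphere_subset_ball (hr'.2.trans_le hε₀)) 
      (sphere_fin m hdim x₀ r (hε.trans hr'.1)) hr g hg
  · exact fun g => vol_ineq μ f D (ball x₀ R) (hinj.mono hbU) P hP1 hP2 hP3 hP4 hP5 g

/-- geometric fact -/
lemma closedBall_sub_of_frontier {U : Set E} (hU : IsOpen U) {x₀ : E} (hx : x₀ ∈ U) {r : ℝ} (hr : 0 < r)
    (h : ENNReal.ofReal r < Metric.infEDist x₀ (frontier U)) :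
    ∃ R R', r < R ∧ R < R' ∧ closedBall x₀ R' ⊆ U := by
  obtain ⟨a, ha1, ha2⟩ := ENNReal.lt_iff_exists_nnreal_btwn.1 h
  have hra : r < a := by
    rw [← ENNReal.ofReal_coe_nnreal] at ha1
    exact (ENNReal.ofReal_lt_ofReal_iff_of_nonneg hr.le).1 ha1
  refine ⟨(r + a) / 2, a, by linarith, by linarith, ?_⟩
  refine ((convex_closedBall x₀ (a:ℝ)).isPreconnected).subset_left_of_subset_union hU 
    (isClosed_closure (s := U)).isOpen_compl ?_ ?_ ⟨x₀, mem_closedBall_self a.2, hx⟩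
  · exact disjoint_compl_right_iff_subset.2 subset_closure
  · intro y hy
    by_contra hc
    rw [mem_union, not_or, mem_compl_iff, not_not] at hc
    have hf : y ∈ frontier U := by rw [hU.frontier_eq]; exact ⟨hc.2, hc.1⟩
    have h1 := Metric.infEDist_le_edist_of_mem (x := x₀) hf
    refine absurd (ha2.trans_le h1) (not_lt.2 ?_)
    rw [edist_comm, edist_dist, ← ENNReal.ofReal_coe_nnreal]
    exact ENNReal.ofReal_le_ofReal hy

lemma calderon_fin (n : ℕ) (hn : 3 ≤ n) (φ : ℝ → ℝ) (hφ : NondecPos φ) (t₀ : ℝ) (ht₀ : 0 < t₀)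
    (h : IntegrableOn (fun t => (t / φ t) ^ (1 / ((n : ℝ) - 2))) (Ioi t₀) volume) (m : ℕ) (hm : n = m + 1) :
    ∫⁻ t in Ioi t₀, ENNReal.ofReal ((2 * (t / φ t)) ^ (1 / ((m:ℝ) - 1))) ≠ ⊤ := by
  have h1 := (h.const_mul ((2:ℝ) ^ (1 / ((m:ℝ) - 1)))).lintegral_lt_top
  refine ne_top_of_le_ne_top h1.ne (le_of_eq ?_)
  refine setLIntegral_congr_fun measurableSet_Ioi fun t ht => ?_
  have ht0 : 0 < t := ht₀.trans ht
  have e1 : (n:ℝ) - 2 = (m:ℝ) - 1 := by rw [hm]; push_cast; ring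
  simp only [e1]
  rw [Real.mul_rpow (by norm_num) (div_nonneg ht0.le (hφ.2 t ht0).le)]

lemma opNorm_le_frob {n : ℕ} (A : Eucl n →L[ℝ] Eucl n) : ‖A‖ ≤ frobNorm A := by
  refine A.opNorm_le_bound (Real.sqrt_nonneg _) fun x => ?_
  rw [EuclideanSpace.norm_eq, EuclideanSpace.norm_eq, frobNorm, ← Real.sqrt_mul (by positivity)]
  refine Real.sqrt_le_sqrt ?_
  rw [Finset.sum_mul]
  refine Finset.sum_le_sum fun i _ => ?_
  have hx : x = ∑ j, x j • (EuclideanSpace.single j (1:ℝ)) := by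
    ext k
    simp [Finset.sum_apply, Pi.single_apply]
  have h1 : A x i = ∑ j, A (EuclideanSpace.single j 1) i * x j := by
    conv_lhs => rw [hx, map_sum]
    simp [mul_comm]
  rw [h1, Real.norm_eq_abs, sq_abs]
  simp only [Real.norm_eq_abs, sq_abs]
  exact Finset.sum_mul_sq_le_sq_mul_sq _ _ _

lemma phit_le {n : ℕ} {φ : ℝ → ℝ} (hφ : NondecPos φ) (A : Eucl n →L[ℝ] Eucl n) : 
    phit φ ‖A‖ ≤ ENNReal.ofReal (φ (frobNorm A)) := by
  unfold phit
  split_ifs with h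
  · exact ENNReal.ofReal_le_ofReal (hφ.1 _ _ h (opNorm_le_frob A))
  · exact bot_le

end core

section surf

variable {n k : ℕ}

lemma sint_of_inj (S : Surface n k) (hS : InjOn S.toFun S.dom) (ρ : Eucl n → ℝ≥0∞) (T : Set (Eucl n))
    (hT : S.toFun '' S.dom = T) (hTm : MeasurableSet T) : 
    S.sint ρ = ∫⁻ y in T, ρ y ∂μH[(k:ℝ)] := by
  rw [Surface.sint, ← lintegral_indicator hTm]
  congr 1
  ext y
  by_cases hy : y ∈ T
  · rw [indicator_of_mem hy]
    have : S.mult y = 1 := by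
      rw [← hT] at hy
      obtain ⟨x, hx, hxy⟩ := hy
      have : S.dom ∩ S.toFun ⁻¹' {y} = {x} := by
        ext z
        constructor
        · rintro ⟨hz1, hz2⟩
          exact hS hz1 hx (hz2.trans hxy.symm)
        · rintro rfl
          exact ⟨hx, hxy⟩
      rw [Surface.mult, this]; simp
    rw [this, mul_one]
  · rw [indicator_of_notMem hy]
    have : S.mult y = 0 := by
      have : S.dom ∩ S.toFun ⁻¹' {y} = ∅ := by
        ext z
        simp only [mem_empty_iff_false, iff_false]
        rintro ⟨hz1, hz2⟩
        exact hy (hT ▸ ⟨z, hz1, hz2⟩)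
      rw [Surface.mult, this]; simp
    rw [this, mul_zero]

lemma dist_pt (hn : 3 ≤ n) (p : ℝ) (hp : 0 < p) (Df : Eucl n → Eucl n →L[ℝ] Eucl n) (x : Eucl n) (K : ℝ) 
    (hK : 1 ≤ K) (h : ‖Df x‖ ^ n ≤ K * (Df x).det) (a : ℝ≥0∞) :
    (a * ‖Df x‖ₑ) ^ p / distortionKp p Df x ≤ ENNReal.ofReal |(Df x).det| * a ^ p := by
  have hdet : 0 ≤ (Df x).det := by
    by_contra hc
    push Not at hc
    have := pow_nonneg (norm_nonneg (Df x)) n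
    nlinarith
  by_cases h0 : (Df x).det = 0
  · have hz : Df x = 0 := by
      rw [h0, mul_zero] at h
      have h2 : ‖Df x‖ ^ n = 0 := le_antisymm h (pow_nonneg (norm_nonneg _) n)
      exact norm_eq_zero.1 (pow_eq_zero_iff (by omega) |>.1 h2)
    have hz' : ‖Df x‖ₑ = 0 := by rw [← ofReal_norm, norm_eq_zero.2 hz, ENNReal.ofReal_zero]
    rw [hz', mul_zero, ENNReal.zero_rpow_of_pos hp, ENNReal.zero_div]
    exact bot_le
  · have hpos : 0 < (Df x).det := lt_of_le_of_ne hdet (Ne.symm h0)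
    have hnz : 0 < ‖Df x‖ := by
      rw [norm_pos_iff]
      intro hz
      apply h0
      rw [hz]
      have : Module.finrank ℝ (Eucl n) ≠ 0 := by rw [finrank_euclideanSpace_fin]; omega
      have h3 : LinearMap.det (0 : Eucl n →ₗ[ℝ] Eucl n) = 0 := by
        rw [LinearMap.det_zero, zero_pow this]
      exact h3
    rw [distortionKp, if_pos h0, ENNReal.mul_rpow_of_nonneg _ _ hp.le, abs_of_pos hpos, ← ofReal_norm, 
      ENNReal.ofReal_rpow_of_pos hnz, ENNReal.ofReal_div_of_pos hpos]
    have hb : 0 < ‖Df x‖ ^ p := Real.rpow_pos_of_pos hnz p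
    have hb1 : ENNReal.ofReal (‖Df x‖ ^ p) ≠ 0 := by simpa using hb
    have hc1 : ENNReal.ofReal (Df x).det ≠ 0 := by simpa using hpos
    rw [div_eq_mul_inv, ENNReal.inv_div (Or.inl ENNReal.ofReal_ne_top) (Or.inl hc1), mul_assoc, 
      ENNReal.mul_div_cancel hb1 ENNReal.ofReal_ne_top, mul_comm]

lemma exc_family (hn : 3 ≤ n) (p : ℝ) (hp : 0 < p) (D : Set (Eucl n)) (x₀ : Eucl n) (ε ε₀ : ℝ) (hε : 0 < ε) 
    (hD : ball x₀ ε₀ ⊆ D) 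
    (ρ : Eucl n → ℝ≥0∞) 
    (h : ∀ᵐ r ∂(volume : Measure ℝ).restrict (Ioo ε ε₀), ∀ S : Surface n (n-1), InjOn S.toFun S.dom → 
      S.toFun '' S.dom = sphere x₀ r → 1 ≤ S.sint fun y => ρ y ^ (n-1)) :
    surfModulus p (n-1) {S ∈ sphereFam D x₀ (Ioo ε ε₀) | ¬ 1 ≤ S.sint fun y => ρ y ^ (n-1)} = 0 := by
  have hdim : Module.finrank ℝ (Eucl n) = (n - 1) + 1 := by rw [finrank_euclideanSpace_fin]; omega
  haveI : Nontrivial (Eucl n) := Module.nontrivial_of_finrank_pos (R := ℝ) (by omega)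
  rw [ae_restrict_iff' measurableSet_Ioo, ae_iff] at h
  obtain ⟨B, hB1, hB2, hB3⟩ := exists_measurable_superset_of_null h
  have hBm : MeasurableSet (B ∩ Ioo ε ε₀) := hB2.inter measurableSet_Ioo
  have hX : MeasurableSet {x : Eucl n | dist x x₀ ∈ B ∩ Ioo ε ε₀} := 
    (continuous_id.dist continuous_const).measurable hBm
  have hnull := annuli_null (volume : Measure (Eucl n)) (n-1) hdim x₀ ε ε₀ hε (B ∩ Ioo ε ε₀) inter_subset_right 
    (measure_mono_null inter_subset_left hB3)
  refine le_antisymm ?_ bot_le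
  refine iInf₂_le_of_le ({x : Eucl n | dist x x₀ ∈ B ∩ Ioo ε ε₀}.indicator fun _ => ⊤) ⟨measurable_const.indicator hX, ?_⟩ ?_
  · rintro S ⟨⟨r, hr, -, hinj, him⟩, hS⟩
    have hsD : sphere x₀ r ⊆ D := (sphere_subset_ball hr.2).trans hD
    rw [inter_eq_self_of_subset_left hsD] at him
    have hrB : r ∈ B := hB1 (by
      intro hc
      exact hS (hc hr S hinj him))
    rw [sint_of_inj S hinj _ _ him isClosed_sphere.measurableSet]
    have : ∫⁻ y in sphere x₀ r, ({x : Eucl n | dist x x₀ ∈ B ∩ Ioo ε ε₀}.indicator (fun _ => (⊤:ℝ≥0∞)) y) ^ (n-1) ∂μH[((n-1:ℕ):ℝ)]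
        = ∫⁻ y in sphere x₀ r, ⊤ ∂μH[((n-1:ℕ):ℝ)] := by
      refine setLIntegral_congr_fun isClosed_sphere.measurableSet fun y hy => ?_
      have : y ∈ {x : Eucl n | dist x x₀ ∈ B ∩ Ioo ε ε₀} := by
        rw [mem_setOf_eq, mem_sphere.1 hy]; exact ⟨hrB, hr⟩
      simp only [indicator_of_mem this]
      exact ENNReal.top_pow (by omega)
    rw [this, setLIntegral_const, ENNReal.top_mul (sphere_pos (n-1) hdim x₀ r (hε.trans hr.1))]
    exact le_top
  · refine le_of_eq ?_
    rw [lintegral_eq_zero_iff' (by fun_prop (disch := exact hX))]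
    have : ∀ᵐ x ∂(volume : Measure (Eucl n)), x ∉ {x : Eucl n | dist x x₀ ∈ B ∩ Ioo ε ε₀} := 
      measure_eq_zero_iff_ae_notMem.1 hnull
    filter_upwards [this] with x hx
    have hx' : x ∉ {x : Eucl n | dist x x₀ ∈ B ∩ Ioo ε ε₀} := hx
    rw [indicator_of_notMem hx', Pi.zero_apply, ENNReal.zero_rpow_of_pos hp]

end surf

/-- under the Calderón-type condition on `φ`, any homeomorphism `f : D → D'` of
finite distortion of class `W^{1,φ}_loc` is a lower `K_p(·,f)`-homeomorphism w.r.t. the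
`p`-modulus at every point, for every `p > n-1`. -/
theorem stmt_6 (n : ℕ) (hn : 3 ≤ n) (D D' : Set (Eucl n))
    (hDopen : IsOpen D) (hDconn : IsConnected D)
    (hD'open : IsOpen D') (hD'conn : IsConnected D')
    (φ : ℝ → ℝ) (hφ : NondecPos φ) (hcal : CalderonCond n φ)
    (f : Eucl n → Eucl n) (Df : Eucl n → Eucl n →L[ℝ] Eucl n)
    (hf : IsHomeoOn f D D')
    (hsob : MemOrliczSobolevOn φ D f Df)
    (hfd : HasFiniteDistortionOn D Df)
    (p : ℝ) (hp : (n : ℝ) - 1 < p) (x₀ : Eucl n) (hx₀ : x₀ ∈ D) :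
    IsLowerQHomeoAt D f (distortionKp p Df) p x₀ (EMetric.infEdist x₀ (frontier D)) := by
  intro ε ε₀ hε hεε₀ hd
  have hdim : Module.finrank ℝ (Eucl n) = (n - 1) + 1 := by rw [finrank_euclideanSpace_fin]; omega
  haveI : Nontrivial (Eucl n) := Module.nontrivial_of_finrank_pos (R := ℝ) (by omega)
  have hn3 : (3:ℝ) ≤ n := by exact_mod_cast hn
  have hp0 : 0 < p := by linarith
  have hε₀ : 0 < ε₀ := hε.trans hεε₀
  obtain ⟨R, R', hR1, hR2, hR3⟩ := closedBall_sub_of_frontier hDopen hx₀ hε₀ hd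
  obtain ⟨t₀, ht₀, hcal'⟩ := hcal
  have hJ := calderon_fin n hn φ hφ t₀ ht₀ hcal' (n-1) (by omega)
  have hcR : closedBall x₀ R ⊆ D := (closedBall_subset_closedBall hR2.le).trans hR3
  have hbR : ball x₀ R ⊆ D := ball_subset_closedBall.trans hcR
  have hbε : ball x₀ ε₀ ⊆ D := (ball_subset_ball hR1.le).trans hbR
  have hfin : ∫⁻ x in ball x₀ R, phit φ ‖Df x‖ ≠ ⊤ := by
    refine ne_top_of_le_ne_top (hsob.2 _ hcR (isCompact_closedBall _ _)).ne ?_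
    exact (lintegral_mono fun x => phit_le hφ (Df x)).trans (lintegral_mono_set ball_subset_closedBall)
  obtain ⟨G, hG1, hG2, hG3, hG4⟩ := core_lemma (volume : Measure (Eucl n)) (n-1) (by omega) hdim x₀ R R' hR2 hφ ht₀ hJ
    D hR3 f hf.continuousOn hf.injOn Df hsob.1 hfin
  refine le_iInf₂ fun ρs hρs => ?_
  obtain ⟨hρm, hρa⟩ := hρs
  set ft : Eucl n → Eucl n := (ball x₀ R).piecewise f (fun _ => 0) with hft
  have hftm : Measurable ft := by
    refine measurable_of_restrict_of_restrict_compl (measurableSet_ball (x := x₀) (ε := R)) ?_ ?_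
    · rw [hft, restrict_piecewise]; exact (hf.continuousOn.mono hbR).restrict.measurable
    · rw [hft, restrict_piecewise_compl]; exact measurable_const
  have hfe : ∀ x ∈ ball x₀ R, ft x = f x := fun x hx => piecewise_eq_of_mem _ _ _ hx
  set ρ : Eucl n → ℝ≥0∞ := fun x => ρs (ft x) * ‖G x‖ₑ with hρ
  have hρm' : Measurable ρ := (hρm.comp hftm).mul hG1
  refine iInf₂_le_of_le ρ ⟨hρm', ?_⟩ ?_
  · refine exc_family hn p hp0 D x₀ ε ε₀ hε hbε ρ ?_
    filter_upwards [hG3 ε ε₀ hε hR1.le, ae_restrict_mem measurableSet_Ioo] with r hr hrI S hSi hSs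
    have hr0 : 0 < r := hε.trans hrI.1
    have hsR : sphere x₀ r ⊆ ball x₀ R := sphere_subset_ball (hrI.2.trans hR1)
    have hsD : sphere x₀ r ⊆ D := hsR.trans hbR
    have hmaps : MapsTo S.toFun S.dom D := fun z hz => hsD (hSs ▸ mem_image_of_mem _ hz)
    let S' : Surface n (n-1) := ⟨S.dom, S.isOpen_dom, f ∘ S.toFun, hf.continuousOn.comp S.continuousOn hmaps⟩
    have hne : S.dom.Nonempty := by
      rw [← image_nonempty (f := S.toFun), hSs]
      exact NormedSpace.sphere_nonempty.2 hr0.le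
    have h1 : 1 ≤ S'.sint fun y => ρs y ^ (n-1) := hρa S' 
      ⟨S, ⟨r, hrI, hne, hSi, by rw [hSs, inter_eq_self_of_subset_left hsD]⟩, rfl, fun z _ => rfl⟩
    have hS'i : InjOn S'.toFun S'.dom := hf.injOn.comp hSi hmaps
    have hS's : S'.toFun '' S'.dom = f '' sphere x₀ r := by
      rw [← hSs]; exact image_comp f S.toFun S.dom
    have hcomp : IsCompact (f '' sphere x₀ r) := (isCompact_sphere x₀ r).image_of_continuousOn (hf.continuousOn.mono hsD)
    rw [sint_of_inj S' hS'i _ _ hS's hcomp.isClosed.measurableSet] at h1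
    rw [sint_of_inj S hSi _ _ hSs isClosed_sphere.measurableSet]
    refine (h1.trans (hr _ (hρm.pow_const _))).trans (le_of_eq ?_)
    refine setLIntegral_congr_fun isClosed_sphere.measurableSet fun x hx => ?_
    simp only [hρ, hfe x (hsR hx), mul_pow]
  · have hring : ringA x₀ ε ε₀ ⊆ ball x₀ R := fun x hx => mem_ball.2 (hx.2.trans hR1)
    obtain ⟨K, -, hK⟩ := hfd
    refine (lintegral_mono_set hring).trans (le_trans (lintegral_mono_ae ?_) (hG4 fun y => ρs y ^ p))
    filter_upwards [hG2, ae_restrict_of_ae_restrict_of_subset hbR hK, ae_restrict_mem measurableSet_ball] with x hx1 hx2 hx3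
    have h3 := dist_pt hn p hp0 Df x (K x) hx2.1 hx2.2 (ρs (f x))
    simp only [hρ, hfe x hx3]
    rw [← hx1]
    exact h3
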